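/- arXiv:1511.06967 — 3 statements merged into one kernel-verified Lean document; each statement's English description precedes it below -/
import Mathlib

section
/- Let (A, m) be a Henselian local ring, f₁,...,f_r ∈ A[Y₁,...,Y_n] with r ≤ n, and ŷ ∈ Â^n with f(ŷ) = 0 such that some r×r minor M of the Jacobian matrix (∂f_i/∂Y_j) evaluated at ŷ is a unit in Â. If ŷ can be approximated modulo mÂ by an element of A^n at which M is a unit, then there exists y ∈ A^n with f(y) = 0 and y ≡ ŷ mod m Â. -/
open IsLocalRing

/-- The `m`-adic completion of a local ring. -/
noncomputable abbrev AdicCompl (A : Type*) [CommRing A] [IsLocalRing A] :=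
  AdicCompletion (maximalIdeal A) A

/-!
Let `S = A[Y] ⧸ (f)`. The approximation `y₀` gives a point of `S` with values in the residue field,
because the completion only has to satisfy `mÂ ≠ ⊤`: this makes `mÂ` contract to `m`, and so
`f(ŷ) = 0` forces `f(y₀) ∈ m`. As the Jacobian minor does not vanish at this point, `S` is smooth
there, hence locally standard étale over an affine space. Once the affine coordinates of the point
are lifted to `A` arbitrarily, lifting the point itself is a matter of lifting a simple root of one
monic polynomial, which is Hensel's lemma.
-/

section JacobianCriterion

open Algebra MvPolynomial

theorem isSmoothAt_of_jacobian_notMem {R S ι σ : Type*} [CommRing R] [CommRing S] [Algebra R S]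
    [Finite ι] [Finite σ] (P : PreSubmersivePresentation R S ι σ) (p : Ideal S) [p.IsPrime]
    (hp : P.jacobian ∉ p) : IsSmoothAt R p := by
  let Q := (PreSubmersivePresentation.localizationAway
    (Localization.Away P.jacobian) P.jacobian).comp P
  have hQ : IsUnit Q.jacobian := by
    rw [PreSubmersivePresentation.comp_jacobian_eq_jacobian_smul_jacobian,
      PreSubmersivePresentation.localizationAway_jacobian, Algebra.smul_def]
    exact .mul (IsLocalization.Away.algebraMap_isUnit _) (IsLocalization.Away.algebraMap_isUnit _)
  have := SubmersivePresentation.isStandardSmooth ⟨Q, hQ⟩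
  have := P.finitePresentation_of_isFinite
  have hsub := basicOpen_subset_smoothLocus_iff (R := R) (f := P.jacobian) |>.mpr inferInstance
  exact hsub (a := ⟨p, ‹_›⟩) hp

theorem jacobian_naive {R ι σ : Type*} [CommRing R] [Fintype ι] [DecidableEq ι]
    {f : ι → MvPolynomial σ R} {ρ : ι → σ} (hρ : Function.Injective ρ) :
    (PreSubmersivePresentation.naive (v := f) ρ hρ).jacobian =
      Ideal.Quotient.mk _ (Matrix.det (Matrix.of fun i j => pderiv (ρ j) (f i))) := by
  let P := PreSubmersivePresentation.naive (v := f) ρ hρ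
  have haeval : aeval (R := R) P.val = Ideal.Quotient.mkₐ R (Ideal.span (Set.range f)) := by
    ext i
    simp [P]
  have hmatrix : P.jacobiMatrix.transpose = Matrix.of fun i j => pderiv (ρ j) (f i) := by
    ext1 i j
    exact PreSubmersivePresentation.jacobiMatrix_naive ..
  change P.jacobian = _
  rw [P.jacobian_eq_jacobiMatrix_det, Generators.algebraMap_apply, ← Matrix.det_transpose,
    hmatrix, haeval, Ideal.Quotient.mkₐ_eq_mk]

end JacobianCriterion

section HenselLifting

open Algebra MvPolynomial

attribute [local instance] RingHom.ker_isPrime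

variable {R A T : Type*} [CommRing R] [CommRing A] [HenselianLocalRing A] [Algebra R A]
  [CommRing T] [Algebra R T]

theorem exists_algHom_comp_eq_of_isStandardEtale [IsStandardEtale R T]
    (φ : T →ₐ[R] ResidueField A) :
    ∃ ψ : T →ₐ[R] A, (IsScalarTower.toAlgHom R A (ResidueField A)).comp ψ = φ := by
  obtain ⟨⟨P⟩⟩ := ‹IsStandardEtale R T›
  have hφP : P.HasMap (φ P.x) := P.hasMap.map φ
  obtain ⟨a, ha, hres⟩ : ∃ a : A, (P.f.map (algebraMap R A)).IsRoot a ∧ residue A a = φ P.x := by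
    have simple_root_lift := (HenselianLocalRing.TFAE A).out 0 1
    refine simple_root_lift.mp ‹_› _ (P.monic_f.map _) _ (by simpa using hφP.1) ?_
    simpa [Polynomial.derivative_map] using hφP.isUnit_derivative_f.ne_zero
  have haP : P.HasMap a := by
    refine ⟨by simpa [Polynomial.IsRoot, Polynomial.eval_map_algebraMap] using ha, ?_⟩
    apply isUnit_of_map_unit (residue A)
    have hres' : IsScalarTower.toAlgHom R A (ResidueField A) a = φ P.x := hres
    have hg := hφP.2
    rwa [← hres', Polynomial.aeval_algHom_apply] at hg
  refine ⟨(P.lift a haP).comp P.equivRing.toAlgHom, P.hom_ext ?_⟩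
  simpa using hres

theorem exists_algHom_comp_eq_of_isSmoothAt_ker [FinitePresentation R T]
    (φ : T →ₐ[R] ResidueField A) [IsSmoothAt R (RingHom.ker φ)] :
    ∃ ψ : T →ₐ[R] A, (IsScalarTower.toAlgHom R A (ResidueField A)).comp ψ = φ := by
  obtain ⟨t, ht, n, _, _, _⟩ :=
    IsSmoothAt.exists_isStandardEtale_mvPolynomial (R := R) (p := RingHom.ker φ)
  let φₜ : Localization.Away t →ₐ[R] ResidueField A :=
    IsLocalization.Away.liftAlgHom t (f := φ) (isUnit_iff_ne_zero.mpr ht)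
  choose a ha using fun i =>
    residue_surjective (φₜ (algebraMap (MvPolynomial (Fin n) R) _ (X i)))
  algebraize [(aeval (R := R) a).toRingHom]
  have : IsScalarTower R (MvPolynomial (Fin n) R) A := .of_algHom (aeval a)
  have hφₜ : φₜ.comp (IsScalarTower.toAlgHom R (MvPolynomial (Fin n) R) _) =
      IsScalarTower.toAlgHom R (MvPolynomial (Fin n) R) (ResidueField A) := by
    ext i
    rw [AlgHom.comp_apply, IsScalarTower.coe_toAlgHom', IsScalarTower.coe_toAlgHom', ← ha,
      IsScalarTower.algebraMap_apply _ A]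
    exact congrArg (residue A) (aeval_X a i).symm
  obtain ⟨ψ, hψ⟩ := exists_algHom_comp_eq_of_isStandardEtale (R := MvPolynomial (Fin n) R)
    { φₜ with commutes' := DFunLike.congr_fun hφₜ }
  refine ⟨(ψ.restrictScalars R).comp (IsScalarTower.toAlgHom R T _), AlgHom.ext fun x => ?_⟩
  exact (DFunLike.congr_fun hψ (algebraMap T _ x)).trans (IsLocalization.lift_eq _ x)

theorem exists_aeval_eq_zero_and_sub_mem {ι σ : Type*} [Fintype ι] [DecidableEq ι] [Finite σ]
    (f : ι → MvPolynomial σ R) {ρ : ι → σ} (hρ : Function.Injective ρ) (y₀ : σ → A)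
    (hf : ∀ i, aeval y₀ (f i) ∈ maximalIdeal A)
    (hM : IsUnit (aeval y₀ (Matrix.det (Matrix.of fun i j => pderiv (ρ j) (f i))))) :
    ∃ y : σ → A, (∀ i, aeval y (f i) = 0) ∧ ∀ j, y j - y₀ j ∈ maximalIdeal A := by
  let I := Ideal.span (Set.range f)
  have hI : I ≤ RingHom.ker ((IsScalarTower.toAlgHom R A (ResidueField A)).comp (aeval y₀)) := by
    rw [Ideal.span_le]
    rintro _ ⟨i, rfl⟩
    exact (residue_eq_zero_iff _).mpr (hf i)
  let φ : (MvPolynomial σ R ⧸ I) →ₐ[R] ResidueField A := Ideal.Quotient.liftₐ I _ hI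
  have : IsSmoothAt R (RingHom.ker φ) := by
    refine isSmoothAt_of_jacobian_notMem (.naive ρ hρ) _ ?_
    rw [jacobian_naive]
    exact (hM.map (residue A)).ne_zero
  have : FinitePresentation R (MvPolynomial σ R ⧸ I) :=
    .quotient (Submodule.fg_span (Set.finite_range f))
  obtain ⟨ψ, hψ⟩ := exists_algHom_comp_eq_of_isSmoothAt_ker φ
  let π : MvPolynomial σ R →ₐ[R] A := ψ.comp (Ideal.Quotient.mkₐ R I)
  have hπ (p) : residue A (π p) = residue A (aeval y₀ p) :=
    DFunLike.congr_fun hψ (Ideal.Quotient.mk I p)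
  refine ⟨π ∘ X, fun i => ?_, fun j => ?_⟩
  · have hfi : Ideal.Quotient.mk I (f i) = 0 :=
      Ideal.Quotient.eq_zero_iff_mem.mpr (Ideal.subset_span ⟨i, rfl⟩)
    rw [← aeval_unique π, AlgHom.comp_apply, Ideal.Quotient.mkₐ_eq_mk, hfi, map_zero]
  · rw [← residue_eq_zero_iff, map_sub, Function.comp_apply, hπ, aeval_X, sub_self]

end HenselLifting

section FormalSolutions

open MvPolynomial

theorem map_algebraMap_adicCompletion_ne_top {R : Type*} [CommRing R] {I : Ideal R} (hI : I ≠ ⊤) :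
    I.map (algebraMap R (AdicCompletion I R)) ≠ ⊤ := by
  have := Ideal.Quotient.nontrivial_iff.mpr hI
  have hle : I.map (algebraMap R (AdicCompletion I R)) ≤
      RingHom.ker (AdicCompletion.evalOneₐ I) := by
    rw [Ideal.map_le_iff_le_comap]
    intro x hx
    simpa [Ideal.Quotient.eq_zero_iff_mem]
  exact ne_top_of_le_ne_top (RingHom.ker_ne_top _) hle

theorem aeval_sub_aeval_mem {R S σ : Type*} [CommRing R] [CommRing S] [Algebra R S] {I : Ideal S}
    {x y : σ → S} (h : ∀ j, x j - y j ∈ I) (p : MvPolynomial σ R) :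
    aeval x p - aeval y p ∈ I := by
  have hxy : (fun j => Ideal.Quotient.mkₐ R I (x j)) = fun j => Ideal.Quotient.mkₐ R I (y j) :=
    funext fun j => Ideal.Quotient.eq.mpr (h j)
  rw [← Ideal.Quotient.eq, ← Ideal.Quotient.mkₐ_eq_mk R]
  simp only [comp_aeval_apply, hxy]

theorem henselian_implicit_function_general {A B ι σ : Type*} [CommRing A] [HenselianLocalRing A]
    [CommRing B] [Algebra A B] [Fintype ι] [DecidableEq ι] [Finite σ]
    (hB : (maximalIdeal A).map (algebraMap A B) ≠ ⊤)
    (f : ι → MvPolynomial σ A) {ρ : ι → σ} (hρ : Function.Injective ρ)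
    {z : σ → B} (hz : ∀ i, aeval z (f i) = 0) {y₀ : σ → A}
    (hy₀ : ∀ j, algebraMap A B (y₀ j) - z j ∈ (maximalIdeal A).map (algebraMap A B))
    (hM : IsUnit (aeval y₀ (Matrix.det (Matrix.of fun i j => pderiv (ρ j) (f i))))) :
    ∃ y : σ → A, (∀ i, aeval y (f i) = 0) ∧
      ∀ j, algebraMap A B (y j) - z j ∈ (maximalIdeal A).map (algebraMap A B) := by
  have hf (i) : aeval y₀ (f i) ∈ maximalIdeal A := by
    have hmap := aeval_sub_aeval_mem hy₀ (f i)
    rw [hz, sub_zero] at hmap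
    apply le_maximalIdeal (Ideal.comap_ne_top (algebraMap A B) hB)
    rw [Ideal.mem_comap, ← aeval_algebraMap_apply]
    exact hmap
  obtain ⟨y, hy, hyy₀⟩ := exists_aeval_eq_zero_and_sub_mem f hρ y₀ hf hM
  refine ⟨y, hy, fun j => ?_⟩
  have hdiff := Ideal.mem_map_of_mem (algebraMap A B) (hyy₀ j)
  simpa using add_mem hdiff (hy₀ j)

end FormalSolutions

/-- Implicit Function Theorem step over a Henselian local ring: if `f₁,…,f_r` (`r ≤ n`) have
a formal solution `ŷ ∈ Â^n` at which some `r×r` minor `M` of the Jacobian is a unit, and `ŷ`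
can be approximated modulo `mÂ` by an element of `A^n` at which `M` is a unit, then there
exists `y ∈ A^n` with `f(y) = 0` and `y ≡ ŷ mod m Â`. -/
theorem henselian_implicit_function (A : Type*) [CommRing A] [IsLocalRing A]
    [IsNoetherianRing A] [HenselianLocalRing A]
    (n r : ℕ) (hr : r ≤ n) (f : Fin r → MvPolynomial (Fin n) A)
    (ρ : Fin r → Fin n) (hρ : Function.Injective ρ)
    (yh : Fin n → AdicCompl A) (hsol : ∀ i, MvPolynomial.aeval yh (f i) = 0)
    (hM : IsUnit (MvPolynomial.aeval yh
      (Matrix.det (Matrix.of fun i j : Fin r => MvPolynomial.pderiv (ρ j) (f i)))))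
    (happrox : ∃ y₀ : Fin n → A,
      (∀ j, algebraMap A (AdicCompl A) (y₀ j) - yh j ∈
        Ideal.map (algebraMap A (AdicCompl A)) (maximalIdeal A)) ∧
      IsUnit (MvPolynomial.aeval y₀
        (Matrix.det (Matrix.of fun i j : Fin r => MvPolynomial.pderiv (ρ j) (f i))))) :
    ∃ y : Fin n → A, (∀ i, MvPolynomial.aeval y (f i) = 0) ∧
      ∀ j, algebraMap A (AdicCompl A) (y j) - yh j ∈
        Ideal.map (algebraMap A (AdicCompl A)) (maximalIdeal A) := by
  obtain ⟨y₀, hy₀, hM₀⟩ := happrox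
  exact henselian_implicit_function_general
    (map_algebraMap_adicCompletion_ne_top (maximalIdeal.isMaximal A).ne_top) f hρ hsol hy₀ hM₀
end

section
/- Let R be a regular local ring containing a field, and assume R is a filtered inductive limit of regular local rings R_i each essentially of finite type over the prime field. Then every finitely generated projective module over the polynomial ring R[T₁,...,T_n] is free. -/
open IsLocalRing

universe u v

/-- A regular local ring: a Noetherian local ring whose maximal ideal can be generated by
`d` elements, where `d` is the Krull dimension. -/
def IsRegularLocal (R : Type*) [CommRing R] [IsLocalRing R] : Prop :=
  IsNoetherianRing R ∧ ∃ s : Finset R,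
    Ideal.span (s : Set R) = maximalIdeal R ∧ (s.card : WithBot ℕ∞) = ringKrullDim R

/-!
Finitely generated projective modules are images of idempotent matrices, and an idempotent matrix
over a filtered colimit comes from one of the rings `G i [T₁, …, T_n]`. This leaves Lindel's
theorem: a regular local ring `A` essentially of finite type over a perfect field `k` is smooth
over `k`, and then finitely generated projective modules over `A[T₁, …, T_n]` are free.

Lindel realises `A` as a local étale algebra with trivial residue extension over the localization
`B` of a polynomial ring over `k` at a prime ideal, in such a way that `B ⧸ h B ≃ A ⧸ h A` for some
nonzero `h` in the maximal ideal. By induction on the dimension, a finitely generated projective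
module over `A[T₁, …, T_n]` is free at every nonmaximal prime of `A`, hence free after inverting `h`
by Quillen's patching theorem. The transition matrix can be taken to be a product of elementary
matrices; approximating those along `h` shows that the module comes from `B[T₁, …, T_n]`, where
Horrocks' theorem, Quillen's patching theorem and the Quillen–Suslin theorem apply.
-/

namespace BassQuillen

section IdempotentMatrices

variable {R S : Type*} [CommRing R] [CommRing S]
variable {m n l : Type*} [Fintype m] [Fintype n] [Fintype l]

/-- Murray–von Neumann equivalence of square matrices: `E = U * V` and `F = V * U`. The factors
are normalised by `U * V * U = U` and `V * U * V = V`, so that `E` and `F` are idempotent with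
isomorphic images, and the relation is transitive. -/
def MvNEquiv (E : Matrix m m R) (F : Matrix n n R) : Prop :=
  ∃ (U : Matrix m n R) (V : Matrix n m R),
    U * V = E ∧ V * U = F ∧ U * V * U = U ∧ V * U * V = V

namespace MvNEquiv

variable {E : Matrix m m R} {F : Matrix n n R} {G : Matrix l l R}

theorem refl (hE : IsIdempotentElem E) : MvNEquiv E E :=
  ⟨E, E, hE, hE, by rw [hE, hE], by rw [hE, hE]⟩

theorem trans (h : MvNEquiv E F) (h' : MvNEquiv F G) : MvNEquiv E G := by
  obtain ⟨U, V, rfl, hVU, hU, _⟩ := h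
  obtain ⟨W, Z, hWZ, rfl, _, hZ⟩ := h'
  have hUW : U * W * (Z * V) = U * V := by
    calc U * W * (Z * V) = U * (W * Z) * V := by simp only [Matrix.mul_assoc]
      _ = U * V * U * V := by rw [hWZ, ← hVU]; simp only [Matrix.mul_assoc]
      _ = U * V := by rw [hU]
  have hZV : Z * V * (U * W) = Z * W := by
    calc Z * V * (U * W) = Z * (V * U) * W := by simp only [Matrix.mul_assoc]
      _ = Z * W * Z * W := by rw [hVU, ← hWZ]; simp only [Matrix.mul_assoc]
      _ = Z * W := by rw [hZ]
  refine ⟨U * W, Z * V, hUW, hZV, ?_, ?_⟩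
  · rw [hUW, ← Matrix.mul_assoc, hU]
  · rw [hZV, ← Matrix.mul_assoc, hZ]

theorem map (h : MvNEquiv E F) {Φ : Type*} [FunLike Φ R S] [RingHomClass Φ R S] (f : Φ) :
    MvNEquiv (E.map f) (F.map f) := by
  obtain ⟨U, V, rfl, rfl, hU, hV⟩ := h
  refine ⟨U.map f, V.map f, Matrix.map_mul.symm, Matrix.map_mul.symm, ?_, ?_⟩
  · rw [← Matrix.map_mul, ← Matrix.map_mul, hU]
  · rw [← Matrix.map_mul, ← Matrix.map_mul, hV]

theorem isIdempotentElem (h : MvNEquiv E F) : IsIdempotentElem F := by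
  obtain ⟨U, V, -, rfl, -, hV⟩ := h
  rw [IsIdempotentElem, ← Matrix.mul_assoc, hV]

theorem submatrix (e : n ≃ m) (hE : IsIdempotentElem E) : MvNEquiv E (E.submatrix e e) := by
  have hEE : E.submatrix id e * E.submatrix e id = E := by
    rw [Matrix.submatrix_mul_equiv, hE, Matrix.submatrix_id_id]
  have hFF : E.submatrix e id * E.submatrix id e = E.submatrix e e := by
    rw [← Equiv.coe_refl, Matrix.submatrix_mul_equiv, hE]
  refine ⟨E.submatrix id e, E.submatrix e id, hEE, hFF, ?_, ?_⟩
  · rw [hEE]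
    exact (Matrix.submatrix_mul E E id id e Function.bijective_id).symm.trans (by rw [hE])
  · rw [Matrix.mul_assoc, hEE]
    exact (Matrix.submatrix_mul E E e id id Function.bijective_id).symm.trans (by rw [hE])

end MvNEquiv

theorem toLin'_toLin'_apply [DecidableEq m] {E : Matrix m m R} (hE : IsIdempotentElem E)
    (x : m → R) : E.toLin' (E.toLin' x) = E.toLin' x := by
  rw [← LinearMap.comp_apply, ← Matrix.toLin'_mul, hE.eq]

/-- An idempotent matrix whose image is free: it is Murray–von Neumann equivalent to an identity
matrix. -/
def HasFreeImage (E : Matrix m m R) : Prop :=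
  ∃ r : ℕ, MvNEquiv E (1 : Matrix (Fin r) (Fin r) R)

theorem MvNEquiv.hasFreeImage {E : Matrix m m R} {F : Matrix n n R} (h : MvNEquiv E F)
    (hF : HasFreeImage F) : HasFreeImage E :=
  hF.imp fun _ => h.trans

namespace HasFreeImage

variable {E : Matrix m m R}

theorem of_mul_eq [DecidableEq n] {U : Matrix m n R} {V : Matrix n m R} (hUV : U * V = E)
    (hVU : V * U = 1) : HasFreeImage E := by
  have h : MvNEquiv E (1 : Matrix n n R) :=
    ⟨U, V, hUV, hVU, by rw [Matrix.mul_assoc, hVU, Matrix.mul_one], by rw [hVU, Matrix.one_mul]⟩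
  have h1 := MvNEquiv.submatrix (R := R) (Fintype.equivFin n).symm
    (IsIdempotentElem.one (M := Matrix n n R))
  rw [Matrix.submatrix_one_equiv] at h1
  exact ⟨_, h.trans h1⟩

theorem map (h : HasFreeImage E) {Φ : Type*} [FunLike Φ R S] [RingHomClass Φ R S] (f : Φ) :
    HasFreeImage (E.map f) := by
  obtain ⟨r, h⟩ := h
  have h1 := h.map f
  rw [Matrix.map_one f (map_zero f) (map_one f)] at h1
  exact ⟨r, h1⟩

open LinearMap in
theorem of_free_range [DecidableEq m] (hE : IsIdempotentElem E) [Module.Free R (range E.toLin')] :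
    HasFreeImage E := by
  classical
  let f := E.toLin'
  let b := (Module.Free.chooseBasis R (range f)).equivFun
  have hf : ∀ y : range f, f.rangeRestrict y = y := by
    rintro ⟨_, x, rfl⟩
    exact Subtype.ext (toLin'_toLin'_apply hE x)
  refine of_mul_eq (U := toMatrix' ((range f).subtype ∘ₗ b.symm.toLinearMap))
    (V := toMatrix' (b.toLinearMap ∘ₗ f.rangeRestrict)) ?_ ?_
  · have h : ((range f).subtype ∘ₗ b.symm.toLinearMap) ∘ₗ b.toLinearMap ∘ₗ f.rangeRestrict = f :=
      LinearMap.ext fun x => by simp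
    rw [← toMatrix'_comp, h, toMatrix'_toLin']
  · have h : (b.toLinearMap ∘ₗ f.rangeRestrict) ∘ₗ (range f).subtype ∘ₗ b.symm.toLinearMap = .id :=
      LinearMap.ext fun x => by simp [hf]
    rw [← toMatrix'_comp, h, toMatrix'_id]

end HasFreeImage

theorem isIdempotentElem_map {E : Matrix m m R} (hE : IsIdempotentElem E) {Φ : Type*}
    [FunLike Φ R S] [RingHomClass Φ R S] (f : Φ) : IsIdempotentElem (E.map f) := by
  rw [IsIdempotentElem, ← Matrix.map_mul, hE]

/-- A ring over which every idempotent matrix has free image. Equivalently (see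
`IsProjectiveFree.free`) its finitely generated projective modules are free; the matrix form
quantifies over no universe of modules and descends along filtered colimits. -/
def IsProjectiveFree (R : Type*) [CommRing R] : Prop :=
  ∀ (m : ℕ) (E : Matrix (Fin m) (Fin m) R), IsIdempotentElem E → HasFreeImage E

namespace IsProjectiveFree

theorem hasFreeImage (h : IsProjectiveFree R) {E : Matrix m m R} (hE : IsIdempotentElem E) :
    HasFreeImage E := by
  have hEF := MvNEquiv.submatrix (Fintype.equivFin m).symm hE
  refine hEF.hasFreeImage (h _ _ ?_)
  rw [IsIdempotentElem, Matrix.submatrix_mul_equiv, hE]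

theorem of_equiv (h : IsProjectiveFree R) (e : R ≃+* S) : IsProjectiveFree S := by
  intro m E hE
  have h1 := (h m (E.map e.symm) (isIdempotentElem_map hE e.symm)).map e
  rwa [Matrix.map_map, ← RingEquiv.coe_trans, RingEquiv.symm_trans_self, RingEquiv.coe_refl,
    Matrix.map_id] at h1

theorem free (h : IsProjectiveFree R) (P : Type*) [AddCommGroup P] [Module R P]
    [Module.Finite R P] [Module.Projective R P] : Module.Free R P := by
  obtain ⟨k, f, g, -, -, hfg⟩ := Module.Finite.exists_comp_eq_id_of_projective R P
  have hE : IsIdempotentElem (LinearMap.toMatrix' (g ∘ₗ f)) := by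
    rw [IsIdempotentElem, ← LinearMap.toMatrix'_comp, LinearMap.comp_assoc,
      ← LinearMap.comp_assoc f, hfg, LinearMap.id_comp]
  obtain ⟨r, U, V, hUV, hVU, -, -⟩ := h k _ hE
  have hUV' : U.toLin' ∘ₗ V.toLin' = g ∘ₗ f := by
    rw [← Matrix.toLin'_mul, hUV, Matrix.toLin'_toMatrix']
  have hVU' : V.toLin' ∘ₗ U.toLin' = .id := by rw [← Matrix.toLin'_mul, hVU, Matrix.toLin'_one]
  refine .of_equiv (.ofLinearMap (f ∘ₗ U.toLin') (V.toLin' ∘ₗ g) ?_ ?_ : (Fin r → R) ≃ₗ[R] P)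
  · calc (f ∘ₗ U.toLin') ∘ₗ V.toLin' ∘ₗ g = f ∘ₗ (U.toLin' ∘ₗ V.toLin') ∘ₗ g := rfl
      _ = (f ∘ₗ g) ∘ₗ (f ∘ₗ g) := by rw [hUV']; rfl
      _ = .id := by rw [hfg, LinearMap.id_comp]
  · calc (V.toLin' ∘ₗ g) ∘ₗ f ∘ₗ U.toLin' = V.toLin' ∘ₗ (g ∘ₗ f) ∘ₗ U.toLin' := rfl
      _ = (V.toLin' ∘ₗ U.toLin') ∘ₗ (V.toLin' ∘ₗ U.toLin') := by rw [← hUV']; rfl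
      _ = .id := by rw [hVU', LinearMap.id_comp]

theorem of_free (h : ∀ (k : ℕ) (P : Submodule R (Fin k → R)) [Module.Finite R P]
    [Module.Projective R P], Module.Free R P) : IsProjectiveFree R := by
  intro k E hE
  have hproj : Module.Projective R (LinearMap.range E.toLin') := by
    refine .of_split (Submodule.subtype _) E.toLin'.rangeRestrict (LinearMap.ext ?_)
    rintro ⟨_, x, rfl⟩
    exact Subtype.ext (toLin'_toLin'_apply hE x)
  have := h k (LinearMap.range E.toLin')
  exact .of_free_range hE

theorem of_isLocalRing [IsLocalRing R] : IsProjectiveFree R :=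
  of_free fun _ _ _ _ => Module.free_of_flat_of_isLocalRing

theorem of_isPrincipalIdealRing [IsDomain R] [IsPrincipalIdealRing R] : IsProjectiveFree R :=
  of_free fun _ _ _ _ => inferInstance

end IsProjectiveFree

end IdempotentMatrices

section Denominators

open MvPolynomial

variable {R L : Type*} [CommRing R] [CommRing L] [Algebra R L] {σ τ m n : Type*}

theorem exists_map_eq_smul_of_isLocalization (M : Submonoid R) [IsLocalization M L] [Finite m]
    [Finite n] (F : Matrix m n (MvPolynomial σ L)) :
    ∃ d ∈ M, ∃ F' : Matrix m n (MvPolynomial σ R),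
      F'.map (map (algebraMap R L)) = (C (algebraMap R L d) : MvPolynomial σ L) • F := by
  let : Algebra (MvPolynomial σ R) (MvPolynomial σ L) := algebraMvPolynomial
  obtain ⟨⟨_, d, hd, rfl⟩, h⟩ := IsLocalization.exist_integer_multiples_of_finite
    (M.map (C (σ := σ))) (fun x : m × n => F x.1 x.2)
  choose F' hF' using h
  refine ⟨d, hd, .of fun i j => F' (i, j), Matrix.ext fun i j => (hF' (i, j)).trans ?_⟩
  change map (algebraMap R L) (C d) * _ = _
  rw [map_C]
  rfl

theorem dvd_aeval_add_mul_sub_aeval {S : Type*} [CommRing S] [Algebra R S] (s : S) (a b : σ → S)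
    (p : MvPolynomial σ R) : s ∣ aeval (fun i => a i + s * b i) p - aeval a p := by
  have h : (Ideal.Quotient.mkₐ R (Ideal.span {s})).comp (aeval fun i => a i + s * b i) =
      (Ideal.Quotient.mkₐ R (Ideal.span {s})).comp (aeval a) := by
    refine algHom_ext fun i => ?_
    simp only [AlgHom.comp_apply, aeval_X]
    refine Ideal.Quotient.eq.mpr (Ideal.mem_span_singleton.mpr ?_)
    simp
  exact Ideal.mem_span_singleton.mp (Ideal.Quotient.eq.mp (AlgHom.congr_fun h p))

theorem exists_smul_map_eq_bind₁_sub {F : Matrix m n (MvPolynomial σ L)}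
    {F' : Matrix m n (MvPolynomial σ R)} {d : R} (hd : IsUnit (algebraMap R L d))
    (hF : F'.map (map (algebraMap R L)) = (C (algebraMap R L d) : MvPolynomial σ L) • F)
    (t : R) (a b : σ → MvPolynomial τ R) :
    ∃ G : Matrix m n (MvPolynomial τ R),
      (C (algebraMap R L t) : MvPolynomial τ L) • G.map (map (algebraMap R L)) =
        F.map (bind₁ fun i => map (algebraMap R L) (a i + C (d * t) * b i)) -
          F.map (bind₁ fun i => map (algebraMap R L) (a i)) := by
  choose G hG using fun i j => dvd_aeval_add_mul_sub_aeval (C (d * t)) a b (F' i j)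
  refine ⟨.of G, Matrix.ext fun i j => ?_⟩
  have hFij : map (algebraMap R L) (F' i j) = C (algebraMap R L d) * F i j :=
    congrFun₂ hF i j
  have h := congrArg (map (algebraMap R L)) (hG i j)
  rw [aeval_eq_bind₁, aeval_eq_bind₁, map_sub, map_bind₁, map_bind₁, hFij, map_mul (bind₁ _),
    map_mul (bind₁ _), bind₁_C_right, bind₁_C_right, ← mul_sub, map_mul (map _), map_C] at h
  refine ((hd.map C).mul_left_cancel (h.trans ?_)).symm
  rw [map_mul (algebraMap R L), C_mul, mul_assoc]
  rfl

end Denominators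

section QuillenPatching

open MvPolynomial

variable {R L : Type*} [CommRing R] [CommRing L] [Algebra R L] {σ m : Type*}

/-- The substitution `p(x) ↦ p(u + s v)`, where `u` and `v` are the left and right copies of the
variables `x`. -/
noncomputable def shift (s : R) : MvPolynomial σ R →ₐ[R] MvPolynomial (σ ⊕ σ) R :=
  bind₁ fun i => X (Sum.inl i) + C s * X (Sum.inr i)

theorem map_shift {k l : Type*} (A : Matrix k l (MvPolynomial σ R)) (s : R) :
    (A.map (shift s)).map (map (algebraMap R L)) =
      (A.map (map (algebraMap R L))).map (shift (algebraMap R L s)) :=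
  Matrix.ext fun _ _ => by simp [shift, map_bind₁]

theorem exists_smul_map_eq_shift_sub {k l : Type*} {A : Matrix k l (MvPolynomial σ L)}
    {A' : Matrix k l (MvPolynomial σ R)} {d : R} (hd : IsUnit (algebraMap R L d))
    (hA : A'.map (map (algebraMap R L)) = (C (algebraMap R L d) : MvPolynomial σ L) • A) (t : R) :
    ∃ G : Matrix k l (MvPolynomial (σ ⊕ σ) R),
      (C (algebraMap R L t) : MvPolynomial (σ ⊕ σ) L) • G.map (map (algebraMap R L)) =
        A.map (shift (algebraMap R L (d * t))) - A.map (shift 0) := by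
  simpa [shift] using
    exists_smul_map_eq_bind₁_sub hd hA t (fun i => X (Sum.inl i)) (fun i => X (Sum.inr i))

theorem map_shift_zero_of_map_eq_smul {k l : Type*} {A : Matrix k l (MvPolynomial σ L)}
    {A' : Matrix k l (MvPolynomial σ R)} {d : L}
    (hA : A'.map (map (algebraMap R L)) = (C d : MvPolynomial σ L) • A) :
    (A'.map (shift 0)).map (map (algebraMap R L)) =
      (C d : MvPolynomial (σ ⊕ σ) L) • A.map (shift 0) := by
  rw [map_shift, hA, map_zero]
  exact Matrix.ext fun i j => by simp [shift]

/-- For `A * B = E` defined over `R`, the products `A(u + s v) * B(u)` and `A(u) * B(u + s v)` are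
congruent to `E(u)` modulo `s`, so they too are defined over `R` if `s` clears the denominators. -/
theorem exists_map_eq_shift_mul_shift {k : Type*} [Fintype k] {A : Matrix m k (MvPolynomial σ L)}
    {B : Matrix k m (MvPolynomial σ L)} {A' : Matrix m k (MvPolynomial σ R)}
    {B' : Matrix k m (MvPolynomial σ R)} {E : Matrix m m (MvPolynomial σ R)} {d e : R}
    (hd : IsUnit (algebraMap R L d)) (he : IsUnit (algebraMap R L e))
    (hA : A'.map (map (algebraMap R L)) = (C (algebraMap R L d) : MvPolynomial σ L) • A)
    (hB : B'.map (map (algebraMap R L)) = (C (algebraMap R L e) : MvPolynomial σ L) • B)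
    (hAB : A * B = E.map (map (algebraMap R L))) :
    ∃ P Q : Matrix m m (MvPolynomial (σ ⊕ σ) R),
      P.map (map (algebraMap R L)) =
        A.map (shift (algebraMap R L (d * e))) * B.map (shift 0) ∧
      Q.map (map (algebraMap R L)) =
        A.map (shift 0) * B.map (shift (algebraMap R L (d * e))) := by
  obtain ⟨G, hG⟩ := exists_smul_map_eq_shift_sub hd hA e
  obtain ⟨H, hH⟩ := exists_smul_map_eq_shift_sub he hB d
  have hE : (E.map (shift 0)).map (map (algebraMap R L)) = A.map (shift 0) * B.map (shift 0) := by
    rw [map_shift, ← hAB, map_zero, Matrix.map_mul]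
  refine ⟨G * B'.map (shift 0) + E.map (shift 0), A'.map (shift 0) * H + E.map (shift 0), ?_, ?_⟩
  · rw [Matrix.map_add _ (map_add _), Matrix.map_mul, hE, map_shift_zero_of_map_eq_smul hB,
      Matrix.mul_smul, ← Matrix.smul_mul, hG, Matrix.sub_mul, sub_add_cancel]
  · rw [Matrix.map_add _ (map_add _), Matrix.map_mul, hE, map_shift_zero_of_map_eq_smul hA,
      Matrix.smul_mul, ← Matrix.mul_smul, hH, Matrix.mul_sub, sub_add_cancel, mul_comm e]

variable [Fintype m]

/-- `E(u + s v)` and `E(u)` have isomorphic images: the condition defining Quillen's ideal. -/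
def ShiftEquiv (E : Matrix m m (MvPolynomial σ R)) (s : R) : Prop :=
  MvNEquiv (E.map (shift s)) (E.map (shift 0))

namespace ShiftEquiv

variable {E : Matrix m m (MvPolynomial σ R)} {s : R}

theorem map_aeval (h : ShiftEquiv E s) {S : Type*} [CommRing S] [Algebra R S] (a b : σ → S) :
    MvNEquiv (E.map (aeval fun i => a i + algebraMap R S s * b i)) (E.map (aeval a)) := by
  have hcomp (t : R) : (aeval (Sum.elim a b)).comp (shift t) =
      aeval fun i => a i + algebraMap R S t * b i :=
    algHom_ext fun i => by simp [shift]
  have hmap (t : R) : (E.map (shift t)).map (aeval (Sum.elim a b)) =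
      E.map (aeval fun i => a i + algebraMap R S t * b i) := by
    rw [Matrix.map_map, ← AlgHom.coe_comp, hcomp]
  have h1 := h.map (aeval (R := R) (Sum.elim a b))
  rw [hmap, hmap] at h1
  simpa only [map_zero, zero_mul, add_zero] using h1

theorem map_algebraMap (h : ShiftEquiv E s) (hs : IsUnit (algebraMap R L s)) :
    MvNEquiv (E.map (map (algebraMap R L)))
      ((E.map constantCoeff).map (C.comp (algebraMap R L))) := by
  obtain ⟨t, ht⟩ := hs.exists_right_inv
  have h1 := h.map_aeval (S := MvPolynomial σ L) 0 (fun i => C t * X i)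
  convert h1 using 1
  · have hmap : (aeval fun i => (0 : σ → MvPolynomial σ L) i + algebraMap R _ s * (C t * X i)) =
        mapAlgHom (σ := σ) (Algebra.ofId R L) := by
      refine algHom_ext fun i => ?_
      simp [MvPolynomial.algebraMap_apply, ← mul_assoc, ← C_mul, ht]
    rw [hmap]
    rfl
  · ext1 i j
    simp [aeval_zero, MvPolynomial.algebraMap_apply]

theorem exists_mem_of_isLocalization (M : Submonoid R) (hM : M ≤ nonZeroDivisors R)
    [IsLocalization M L] (h : HasFreeImage (E.map (map (algebraMap R L)))) :
    ∃ s ∈ M, ShiftEquiv E s := by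
  obtain ⟨r, A, B, hAB, hBA, -, -⟩ := h
  obtain ⟨d, hd, A', hA⟩ := exists_map_eq_smul_of_isLocalization M A
  obtain ⟨e, he, B', hB⟩ := exists_map_eq_smul_of_isLocalization M B
  obtain ⟨P, Q, hP, hQ⟩ := exists_map_eq_shift_mul_shift (IsLocalization.map_units L ⟨d, hd⟩)
    (IsLocalization.map_units L ⟨e, he⟩) hA hB hAB
  have hE (s : R) : (E.map (shift s)).map (map (algebraMap R L)) =
      A.map (shift (algebraMap R L s)) * B.map (shift (algebraMap R L s)) := by
    rw [map_shift, ← hAB, Matrix.map_mul]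
  have hone (s : L) : B.map (shift s) * A.map (shift s) = 1 := by
    rw [← Matrix.map_mul, hBA, Matrix.map_one _ (map_zero _) (map_one _)]
  have hinj := Matrix.map_injective (m := m) (n := m)
    (map_injective (σ := σ ⊕ σ) _ (IsLocalization.injective L hM))
  refine ⟨d * e, M.mul_mem hd he, P, Q, hinj ?_, hinj ?_, hinj ?_, hinj ?_⟩
  all_goals
    simp only [Matrix.map_mul, hP, hQ, hE, map_zero, Matrix.mul_assoc]
    simp only [← Matrix.mul_assoc (B.map _), hone, Matrix.one_mul]

end ShiftEquiv

/-- Quillen's ideal of an idempotent matrix over a polynomial ring: the elements `s` of the base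
ring for which `E(u + s v)` and `E(u)` have isomorphic images. -/
def quillenIdeal {E : Matrix m m (MvPolynomial σ R)} (hE : IsIdempotentElem E) : Ideal R where
  carrier := {s | ShiftEquiv E s}
  zero_mem' := .refl (isIdempotentElem_map hE _)
  add_mem' {s t} hs ht := by
    have h := ht.map_aeval (S := MvPolynomial (σ ⊕ σ) R)
      (fun i => X (Sum.inl i) + C s * X (Sum.inr i)) (fun i => X (Sum.inr i))
    simp only [MvPolynomial.algebraMap_eq, add_assoc, ← add_mul, ← C_add] at h
    exact h.trans hs
  smul_mem' r s hs := by
    have h := hs.map_aeval (S := MvPolynomial (σ ⊕ σ) R)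
      (fun i => X (Sum.inl i)) (fun i => C r * X (Sum.inr i))
    simp only [MvPolynomial.algebraMap_eq, ← mul_assoc, ← C_mul, mul_comm s r] at h
    simpa [ShiftEquiv, shift, ← aeval_eq_bind₁] using h

theorem hasFreeImage_of_forall_isMaximal [IsDomain R] {E : Matrix m m (MvPolynomial σ R)}
    (hE : IsIdempotentElem E)
    (h : ∀ (p : Ideal R) [p.IsMaximal],
      HasFreeImage (E.map (map (algebraMap R (Localization.AtPrime p)))))
    (h0 : HasFreeImage (E.map (constantCoeff (R := R) (σ := σ)))) : HasFreeImage E := by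
  have htop : quillenIdeal hE = ⊤ := by
    by_contra hne
    obtain ⟨p, _, hle⟩ := Ideal.exists_le_maximal _ hne
    obtain ⟨s, hs, hs'⟩ := ShiftEquiv.exists_mem_of_isLocalization p.primeCompl
      p.primeCompl_le_nonZeroDivisors (h p)
    exact hs (hle hs')
  have hone : ShiftEquiv E 1 := htop.ge trivial
  have h1 := hone.map_algebraMap (L := R) (by simp)
  have hmap : E.map (map (algebraMap R R)) = E := Matrix.ext fun _ _ => map_id _
  exact (hmap ▸ h1).hasFreeImage (h0.map _)

end QuillenPatching

section Scaling

open MvPolynomial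

variable {R L : Type*} [CommRing R] [CommRing L] [Algebra R L] {m n τ : Type*}

theorem MvNEquiv.of_mul_eq_one [Fintype m] [Fintype n] [DecidableEq m] {E : Matrix m m R}
    (hE : IsIdempotentElem E) {Z : Matrix m n R} {Z' : Matrix n m R} (hZ : Z * Z' = 1) :
    MvNEquiv E (Z' * E * Z) := by
  have hU : E * Z * (Z' * E) = E := by
    rw [Matrix.mul_assoc, ← Matrix.mul_assoc Z, hZ, Matrix.one_mul, hE]
  have hV : Z' * E * (E * Z) = Z' * E * Z := by
    rw [Matrix.mul_assoc, ← Matrix.mul_assoc E, hE, Matrix.mul_assoc]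
  refine ⟨E * Z, Z' * E, hU, hV, ?_, ?_⟩
  · rw [hU, ← Matrix.mul_assoc, hE]
  · rw [Matrix.mul_assoc, hU, Matrix.mul_assoc, hE]

theorem MvNEquiv.exists_conj_eq_fromBlocks [Fintype m] [Fintype n] [DecidableEq m]
    {E : Matrix m m R} {F : Matrix n n R} (h : MvNEquiv E F) :
    ∃ (Z : Matrix m (n ⊕ m) R) (Z' : Matrix (n ⊕ m) m R),
      Z * Z' = 1 ∧ Z' * E * Z = .fromBlocks F 0 0 0 := by
  obtain ⟨U, V, rfl, rfl, hU, hV⟩ := h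
  have hUV : U * V * (U * V) = U * V := by rw [← Matrix.mul_assoc, hU]
  have hVU : V * (U * V) = V := by rw [← Matrix.mul_assoc, hV]
  refine ⟨.fromCols U (1 - U * V), .fromRows V (1 - U * V), ?_, ?_⟩
  · rw [Matrix.fromCols_mul_fromRows, (IsIdempotentElem.one_sub hUV).eq, add_sub_cancel]
  · rw [Matrix.fromRows_mul, Matrix.fromRows_mul_fromCols, hVU, Matrix.mul_sub, hVU,
      Matrix.sub_mul, hUV]
    simp

theorem exists_mvNEquiv_map_constantCoeff_eq [Fintype m]
    {E : Matrix m m (MvPolynomial τ R)} (hE : IsIdempotentElem E)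
    (h : HasFreeImage (E.map constantCoeff)) :
    ∃ (r : ℕ) (G : Matrix (Fin r ⊕ m) (Fin r ⊕ m) (MvPolynomial τ R)),
      MvNEquiv E G ∧ G.map constantCoeff = .fromBlocks 1 0 0 0 := by
  classical
  obtain ⟨r, h⟩ := h
  obtain ⟨Z, Z', hZ, hEZ⟩ := h.exists_conj_eq_fromBlocks
  have hC {k l : Type _} (A : Matrix k l R) :
      (A.map (C (σ := τ))).map constantCoeff = A :=
    Matrix.ext fun _ _ => constantCoeff_C _ _
  refine ⟨r, Z'.map C * E * Z.map C, .of_mul_eq_one hE ?_, ?_⟩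
  · rw [← Matrix.map_mul, hZ, Matrix.map_one _ (map_zero _) (map_one _)]
  · rw [Matrix.map_mul, Matrix.map_mul, hC, hC, hEZ]

theorem exists_map_eq_map_scale (M : Submonoid R) [IsLocalization M L] [Finite m] [Finite n]
    {G : Matrix m n (MvPolynomial τ L)} {G₀ : Matrix m n R}
    (hG : G.map constantCoeff = G₀.map (algebraMap R L)) :
    ∃ d ∈ M, ∃ H : Matrix m n (MvPolynomial τ R),
      H.map (map (algebraMap R L)) = G.map (bind₁ fun i => C (algebraMap R L d) * X i) := by
  obtain ⟨d, hd, G', hG'⟩ := exists_map_eq_smul_of_isLocalization M G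
  obtain ⟨H, hH⟩ := exists_smul_map_eq_bind₁_sub (τ := τ) (IsLocalization.map_units L ⟨d, hd⟩) hG'
    1 0 X
  have hG₀ : G.map (bind₁ fun _ => (0 : MvPolynomial τ L)) =
      (G₀.map C).map (map (algebraMap R L)) := by
    rw [Matrix.map_map, ← RingHom.coe_comp, map_comp_C, RingHom.coe_comp, ← Matrix.map_map, ← hG]
    exact Matrix.ext fun _ _ => aeval_zero' _
  refine ⟨d, hd, H + G₀.map C, ?_⟩
  rw [Matrix.map_add _ (map_add _), ← hG₀, ← eq_sub_iff_add_eq]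
  simpa using hH

/-- By scaling the variables, an idempotent matrix over `L[τ]` which is constant modulo `τ` comes
from one over `R[τ]`. -/
theorem IsProjectiveFree.mvPolynomial_of_isLocalization (M : Submonoid R)
    (hM : M ≤ nonZeroDivisors R) [IsLocalization M L] (hL : IsProjectiveFree L)
    (hR : IsProjectiveFree (MvPolynomial τ R)) : IsProjectiveFree (MvPolynomial τ L) := by
  intro m E hE
  obtain ⟨r, G, hEG, hG₀⟩ := exists_mvNEquiv_map_constantCoeff_eq hE
    (hL.hasFreeImage (isIdempotentElem_map hE _))
  have hG : IsIdempotentElem G := hEG.isIdempotentElem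
  obtain ⟨d, hd, H, hH⟩ := exists_map_eq_map_scale (G₀ := .fromBlocks 1 0 0 0) M (hG₀.trans
    (by simp [Matrix.fromBlocks_map]))
  have hHH : IsIdempotentElem H := by
    refine Matrix.map_injective (map_injective _ (IsLocalization.injective L hM)) ?_
    simp only [Matrix.map_mul, hH]
    exact isIdempotentElem_map hG _
  obtain ⟨t, ht⟩ := (IsLocalization.map_units L ⟨d, hd⟩).exists_right_inv
  have h := ((hR.hasFreeImage hHH).map (map (algebraMap R L))).map
    (bind₁ fun i : τ => C t * X i)
  have hinv : (bind₁ fun i : τ => C t * X i).comp (bind₁ fun i => C (algebraMap R L d) * X i) =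
      AlgHom.id L _ := by
    refine algHom_ext fun i => ?_
    simp [← mul_assoc, ← C_mul, ht]
  rw [hH, Matrix.map_map, ← AlgHom.coe_comp, hinv] at h
  exact hEG.hasFreeImage h

end Scaling

section Horrocks

open Polynomial Matrix

variable {S T : Type*} [CommRing S] [CommRing T] {m : Type*} [Fintype m]

/-- After inverting `f`, the image of the idempotent matrix `E` is free of rank `r`. The factors
have their denominators cleared, so no localization appears. -/
def FreeAway (f : S) (r : ℕ) (E : Matrix m m S) : Prop :=
  ∃ (U : Matrix m (Fin r) S) (V : Matrix (Fin r) m S), U * V = f • E ∧ V * U = f • 1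

theorem FreeAway.map {f : S} {r : ℕ} {E : Matrix m m S} (h : FreeAway f r E) (φ : S →+* T) :
    FreeAway (φ f) r (E.map φ) := by
  obtain ⟨U, V, hUV, hVU⟩ := h
  refine ⟨U.map φ, V.map φ, ?_, ?_⟩
  · rw [← Matrix.map_mul, hUV, Matrix.map_smul' φ f E (map_mul φ)]
  · rw [← Matrix.map_mul, hVU, Matrix.map_smul' φ f _ (map_mul φ),
      Matrix.map_one φ (map_zero φ) (map_one φ)]

theorem FreeAway.exists_succ {f : S} {r : ℕ} {E : Matrix m m S} (h : FreeAway f (r + 1) E) :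
    ∃ (u v : m → S) (U : Matrix m (Fin r) S) (V : Matrix (Fin r) m S),
      vecMulVec u v + U * V = f • E ∧ v ⬝ᵥ u = f ∧ V *ᵥ u = 0 ∧ v ᵥ* U = 0 ∧ V * U = f • 1 := by
  obtain ⟨U, V, hUV, hVU⟩ := h
  refine ⟨U.col 0, V.row 0, U.submatrix id Fin.succ, V.submatrix Fin.succ id, ?_, ?_, ?_, ?_, ?_⟩
  · rw [← hUV]
    ext i j
    simp [Matrix.mul_apply, vecMulVec_apply, Fin.sum_univ_succ]
  · simpa [Matrix.mul_apply, dotProduct] using congr_fun₂ hVU 0 0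
  · ext i
    simpa [Matrix.mul_apply, mulVec, dotProduct] using congr_fun₂ hVU i.succ 0
  · ext j
    simpa [Matrix.mul_apply, vecMul, dotProduct, (Fin.succ_ne_zero j).symm]
      using congr_fun₂ hVU 0 j.succ
  · ext i j
    simpa [Matrix.mul_apply, Matrix.one_apply] using congr_fun₂ hVU i.succ j.succ

theorem HasFreeImage.of_sub_vecMulVec {E : Matrix m m S} {p ρ : m → S} (hρp : ρ ⬝ᵥ p = 1)
    (hp : E *ᵥ p = p) (hρ : ρ ᵥ* E = ρ) (h : HasFreeImage (E - vecMulVec p ρ)) :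
    HasFreeImage E := by
  obtain ⟨r, A, B, hAB, hBA, hA, hB⟩ := h
  have hρA : ρ ᵥ* A = 0 := by
    rw [← hA, hAB, ← Matrix.vecMul_vecMul, Matrix.vecMul_sub, hρ, vecMul_vecMulVec, hρp, one_smul,
      sub_self, Matrix.zero_vecMul]
  have hBp : B *ᵥ p = 0 := by
    rw [← hB, Matrix.mul_assoc, hAB, ← Matrix.mulVec_mulVec, Matrix.sub_mulVec, hp,
      vecMulVec_mulVec, hρp, MulOpposite.op_one, one_smul, sub_self, Matrix.mulVec_zero]
  refine .of_mul_eq (n := Unit ⊕ Fin r) (U := fromCols (replicateCol Unit p) A)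
    (V := fromRows (replicateRow Unit ρ) B) ?_ ?_
  · rw [fromCols_mul_fromRows, hAB, ← vecMulVec_eq, add_sub_cancel]
  · rw [fromRows_mul_fromCols, hBA, ← replicateRow_vecMul (ι := Unit) A,
      ← replicateCol_mulVec (M := B), hρA, hBp, replicateRow_zero, replicateCol_zero,
      ← fromBlocks_one]
    congr 1
    ext i j
    simpa [Matrix.mul_apply, dotProduct] using hρp

theorem FreeAway.sub_vecMulVec {f : S} {r : ℕ} {E : Matrix m m S} {u v p ρ : m → S}
    {U : Matrix m (Fin r) S} {V : Matrix (Fin r) m S} (hUV : vecMulVec u v + U * V = f • E)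
    (hvU : v ᵥ* U = 0) (hVU : V * U = f • 1) (hρp : ρ ⬝ᵥ p = 1) (hp : E *ᵥ p = p)
    (hρ : ρ ᵥ* E = ρ) : FreeAway (f * (v ⬝ᵥ p)) r (E - vecMulVec p ρ) := by
  classical
  let g := v ⬝ᵥ p
  have hUVp : U *ᵥ (V *ᵥ p) = f • p - g • u := by
    rw [Matrix.mulVec_mulVec, eq_sub_of_add_eq' hUV, Matrix.sub_mulVec, Matrix.smul_mulVec, hp,
      vecMulVec_mulVec, op_smul_eq_smul]
  have hproj : (1 - vecMulVec p ρ) * E = E - vecMulVec p ρ := by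
    rw [Matrix.sub_mul, Matrix.one_mul, vecMulVec_mul, hρ]
  have hproj_p : (1 - vecMulVec p ρ) *ᵥ p = 0 := by
    rw [Matrix.sub_mulVec, Matrix.one_mulVec, vecMulVec_mulVec, hρp, MulOpposite.op_one, one_smul,
      sub_self]
  have hVU' : (g • V - vecMulVec (V *ᵥ p) v) * U = (f * g) • 1 := by
    rw [Matrix.sub_mul, Matrix.smul_mul, hVU, vecMulVec_mul, hvU, vecMulVec_zero, sub_zero,
      smul_smul, mul_comm]
  have hUV' : U * (g • V - vecMulVec (V *ᵥ p) v) = (f * g) • E - f • vecMulVec p v := by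
    rw [Matrix.mul_sub, Matrix.mul_smul, mul_vecMulVec, hUVp, eq_sub_of_add_eq' hUV,
      Matrix.sub_vecMulVec, smul_vecMulVec, smul_vecMulVec, smul_sub, smul_smul, mul_comm g]
    abel
  refine ⟨(1 - vecMulVec p ρ) * U, g • V - vecMulVec (V *ᵥ p) v, ?_, ?_⟩
  · rw [Matrix.mul_assoc, hUV', Matrix.mul_sub, Matrix.mul_smul, Matrix.mul_smul, mul_vecMulVec,
      hproj, hproj_p, zero_vecMulVec, smul_zero, sub_zero]
  · have hvp : (g • V - vecMulVec (V *ᵥ p) v) *ᵥ p = 0 := by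
      rw [Matrix.sub_mulVec, Matrix.smul_mulVec, vecMulVec_mulVec, op_smul_eq_smul, sub_self]
    rw [← Matrix.mul_assoc, Matrix.mul_sub, Matrix.mul_one, mul_vecMulVec, hvp, zero_vecMulVec,
      sub_zero, hVU']

theorem FreeAway.hasFreeImage_of_rank_one [IsDomain S] [IsGCDMonoid S] {f : S} (hf : f ≠ 0)
    {E : Matrix m m S} (h : FreeAway f 1 E) : HasFreeImage E := by
  classical
  obtain ⟨_⟩ : Nonempty (NormalizedGCDMonoid S) := inferInstance
  obtain ⟨u, v, U, V, huv, hvu, -⟩ := h.exists_succ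
  rw [Subsingleton.elim U 0, Matrix.zero_mul, add_zero] at huv
  have hm : (Finset.univ : Finset m).Nonempty := by
    rw [Finset.univ_nonempty_iff]
    by_contra hm
    rw [not_nonempty_iff] at hm
    exact hf (by rw [← hvu, dotProduct_of_isEmpty])
  obtain ⟨u', hu', hgcd⟩ := Finset.extract_gcd u hm
  set c := Finset.univ.gcd u
  have hu : u = c • u' := funext fun i => hu' i (Finset.mem_univ i)
  let e := v ⬝ᵥ u'
  have hce : c * e = f := by rw [← hvu, hu, dotProduct_smul, smul_eq_mul]
  have hc : c ≠ 0 := left_ne_zero_of_mul (hce ▸ hf)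
  have he : e ≠ 0 := right_ne_zero_of_mul (hce ▸ hf)
  have hE : vecMulVec u' v = e • E := by
    apply smul_right_injective _ hc
    simp only
    rw [← smul_vecMulVec, ← hu, huv, smul_smul, hce]
  have hdvd : ∀ j, e ∣ v j := by
    intro j
    have h1 : e ∣ Finset.univ.gcd fun i => u' i * v j :=
      Finset.dvd_gcd fun i _ => ⟨E i j, congr_fun₂ hE i j⟩
    simpa [hgcd] using h1.trans (Finset.gcd_mul_right' Finset.univ u' (v j)).dvd
  choose w hw using hdvd
  have hv : v = e • w := funext hw
  refine .of_mul_eq (n := Unit) (U := replicateCol Unit u') (V := replicateRow Unit w) ?_ ?_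
  · apply smul_right_injective _ he
    simp only
    rw [← vecMulVec_eq, ← vecMulVec_smul, ← hv, hE]
  · ext i j
    apply mul_left_cancel₀ he
    have : e * (w ⬝ᵥ u') = e := by rw [← smul_eq_mul, ← smul_dotProduct, ← hv]
    simpa [Subsingleton.elim i j] using this

theorem exists_dotProduct_eq_one_and_eq_zero [IsDomain S] [IsBezout S] [Nontrivial m]
    (w : m → S) : ∃ ρ p : m → S, ρ ⬝ᵥ p = 1 ∧ ρ ⬝ᵥ w = 0 := by
  classical
  obtain ⟨i, j, hij⟩ := exists_pair_ne m
  obtain ⟨a, b, x, y, hab, hw⟩ : ∃ a b x y : S, a * x + b * y = 1 ∧ a * w i = b * w j := by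
    obtain ⟨b, hb⟩ := IsBezout.gcd_dvd_left (w i) (w j)
    obtain ⟨a, ha⟩ := IsBezout.gcd_dvd_right (w i) (w j)
    obtain ⟨y, x, hxy⟩ := IsBezout.gcd_eq_sum (w i) (w j)
    by_cases hg : IsBezout.gcd (w i) (w j) = 0
    · exact ⟨1, 0, 1, 0, by simp, by rw [hb, hg, zero_mul, mul_zero, zero_mul]⟩
    · refine ⟨a, b, x, y, mul_left_cancel₀ hg ?_, ?_⟩
      · linear_combination hxy - y * hb - x * ha
      · linear_combination a * hb - b * ha
  refine ⟨Pi.single i a - Pi.single j b, Pi.single i x - Pi.single j y, ?_, ?_⟩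
  · simpa [hij, hij.symm, sub_dotProduct, dotProduct_sub] using hab
  · rw [sub_dotProduct, single_dotProduct, single_dotProduct, hw, sub_self]

theorem FreeAway.le_of_mul_eq [IsDomain S] {f : S} (hf : f ≠ 0) {r s : ℕ}
    {A : Matrix m (Fin s) S} {B : Matrix (Fin s) m S} (h : FreeAway f r (A * B)) : r ≤ s := by
  obtain ⟨U, V, hUV, hVU⟩ := h
  have hinj : Function.Injective (B * U).mulVecLin := by
    refine (injective_iff_map_eq_zero _).mpr fun x hx => ?_
    have h1 : (V * (U * V) * U) *ᵥ x = 0 := by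
      rw [mulVecLin_apply] at hx
      rw [hUV, Matrix.mul_smul, Matrix.smul_mul, Matrix.smul_mulVec, ← Matrix.mul_assoc,
        Matrix.mul_assoc (V * A), ← Matrix.mulVec_mulVec, hx, Matrix.mulVec_zero, smul_zero]
    have h2 : V * (U * V) * U = (f * f) • 1 := by
      rw [← Matrix.mul_assoc, Matrix.mul_assoc, hVU, smul_mul_smul_comm, one_mul]
    rw [h2, Matrix.smul_mulVec, Matrix.one_mulVec] at h1
    exact (smul_eq_zero.mp h1).resolve_left (mul_ne_zero hf hf)
  simpa using card_le_of_injective S _ hinj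

theorem FreeAway.exists_splitting [IsDomain S] [IsPrincipalIdealRing S] {f : S} (hf : f ≠ 0) {r : ℕ}
    (hr : 2 ≤ r) {E : Matrix m m S} (hE : IsIdempotentElem E) (h : FreeAway f r E) (u : m → S) :
    ∃ ρ p : m → S, ρ ⬝ᵥ p = 1 ∧ ρ ⬝ᵥ u = 0 ∧ E *ᵥ p = p := by
  obtain ⟨s, A, B, rfl, hBA, hA, -⟩ := IsProjectiveFree.of_isPrincipalIdealRing.hasFreeImage hE
  have : Nontrivial (Fin s) := Fin.nontrivial_iff_two_le.mpr (hr.trans (h.le_of_mul_eq hf))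
  obtain ⟨ρ, p, hρp, hρ⟩ := exists_dotProduct_eq_one_and_eq_zero (B *ᵥ u)
  refine ⟨ρ ᵥ* B, A *ᵥ p, ?_, ?_, ?_⟩
  · rw [← dotProduct_mulVec, Matrix.mulVec_mulVec, hBA, Matrix.one_mulVec, hρp]
  · rw [← dotProduct_mulVec, hρ]
  · rw [Matrix.mulVec_mulVec, hA]

variable {R : Type*} [CommRing R] [IsLocalRing R]

theorem eq_top_of_monic_mem {I : Ideal R[X]} {g : R[X]} (hg : g.Monic) (hgI : g ∈ I)
    (h : I.map (mapRingHom (residue R)) = ⊤) : I = ⊤ := by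
  by_contra hI
  obtain ⟨P, hP, hIP⟩ := I.exists_le_maximal hI
  -- `R[X] ⧸ P` is integral over `R`, so `P` lies over the maximal ideal of `R`.
  have hint := hg.quotient_isIntegral (hIP hgI)
  have := (Ideal.bot_quotient_isMaximal_iff P).mpr hP
  have hmax := Ideal.isMaximal_comap_of_isIntegral_of_isMaximal' _ hint ⊥
  have hker : RingHom.ker (mapRingHom (residue R)) ≤ P := by
    rw [ker_mapRingHom, ker_residue, ← eq_maximalIdeal hmax, Ideal.map_le_iff_le_comap]
    exact fun x hx => (Ideal.Quotient.eq_zero_iff_mem (I := P)).mp hx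
  have hsurj : Function.Surjective (mapRingHom (residue R)) :=
    map_surjective _ residue_surjective
  have htop : P.map (mapRingHom (residue R)) = ⊤ := top_le_iff.mp (h ▸ Ideal.map_mono hIP)
  refine hP.ne_top ?_
  rw [← sup_eq_left.mpr hker, RingHom.ker_eq_comap_bot, ← Ideal.comap_map_of_surjective _ hsurj,
    htop, Ideal.comap_top]

theorem exists_splitting_of_residue {E : Matrix m m R[X]} (hE : IsIdempotentElem E)
    {u v : m → R[X]} (hu : E *ᵥ u = u) (hvu : (v ⬝ᵥ u).Monic) {ρ p : m → (ResidueField R)[X]}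
    (hρp : ρ ⬝ᵥ p = 1) (hρu : ρ ⬝ᵥ (mapRingHom (residue R) ∘ u) = 0)
    (hp : E.map (mapRingHom (residue R)) *ᵥ p = p) :
    ∃ ρ' p' : m → R[X], ρ' ⬝ᵥ p' = 1 ∧ E *ᵥ p' = p' ∧ ρ' ᵥ* E = ρ' ∧ (v ⬝ᵥ p').Monic := by
  classical
  set π := mapRingHom (residue R)
  obtain ⟨q, rfl⟩ : ∃ q : m → R[X], p = π ∘ q :=
    (map_surjective _ residue_surjective : Function.Surjective π).comp_left p |>.imp
      fun _ => Eq.symm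
  -- Adding a high multiple of `u` to a lift of `p` keeps it unimodular modulo `m` and makes
  -- its pairing with `v` monic.
  let N := (v ⬝ᵥ (E *ᵥ q)).natDegree + 1
  let p' := (X ^ N : R[X]) • u + E *ᵥ q
  have hEp' : E *ᵥ p' = p' := by
    rw [Matrix.mulVec_add, Matrix.mulVec_smul, hu, Matrix.mulVec_mulVec, hE]
  have hmonic : (v ⬝ᵥ p').Monic := by
    rw [dotProduct_add, dotProduct_smul, smul_eq_mul]
    refine Monic.add_of_left ((monic_X_pow N).mul hvu) ?_
    rw [hvu.degree_mul, degree_X_pow]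
    have hlt : (v ⬝ᵥ (E *ᵥ q)).degree < N :=
      degree_le_natDegree.trans_lt (by exact_mod_cast Nat.lt_succ_self _)
    exact hlt.trans_le (le_add_of_nonneg_right (zero_le_degree_iff.mpr hvu.ne_zero))
  have hρp' : ρ ⬝ᵥ (π ∘ p') = 1 := by
    have h : π ∘ p' = π (X ^ N) • (π ∘ u) + π ∘ q := by
      rw [← hp]
      ext1 i
      simp [p', RingHom.map_mulVec]
    rw [h, dotProduct_add, dotProduct_smul, hρu, smul_zero, zero_add, hρp]
  have htop : Ideal.span (Set.range p') = ⊤ := by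
    refine eq_top_of_monic_mem hmonic ?_ ?_
    · exact Ideal.sum_mem _ fun i _ => Ideal.mul_mem_left _ _ (Ideal.subset_span ⟨i, rfl⟩)
    · rw [Ideal.eq_top_iff_one, ← hρp']
      exact Ideal.sum_mem _ fun i _ => Ideal.mul_mem_left _ _
        (Ideal.mem_map_of_mem _ (Ideal.subset_span ⟨i, rfl⟩))
  obtain ⟨ρ', hρ'⟩ := Ideal.mem_span_range_iff_exists_fun.mp ((Ideal.eq_top_iff_one _).mp htop)
  refine ⟨ρ' ᵥ* E, p', ?_, hEp', ?_, hmonic⟩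
  · rwa [← dotProduct_mulVec, hEp']
  · rw [Matrix.vecMul_vecMul, hE]

theorem FreeAway.hasFreeImage_of_isLocalRing [IsDomain R] [IsGCDMonoid R] {r : ℕ}
    {E : Matrix m m R[X]} {f : R[X]} (h : FreeAway f r E) (hE : IsIdempotentElem E)
    (hf : f.Monic) : HasFreeImage E := by
  induction r using Nat.twoStepInduction generalizing E f with
  | zero =>
    obtain ⟨U, V, hUV, -⟩ := h
    rw [Subsingleton.elim U 0, Matrix.zero_mul] at hUV
    obtain rfl : E = 0 := (smul_eq_zero.mp hUV.symm).resolve_left hf.ne_zero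
    exact .of_mul_eq (n := Fin 0) (U := 0) (V := 0) (Matrix.zero_mul _) (Subsingleton.elim _ _)
  | one => exact h.hasFreeImage_of_rank_one hf.ne_zero
  | more r _ ih =>
    obtain ⟨u, v, U, V, hUV, hvu, hVu, hvU, hVU⟩ := h.exists_succ
    have hu : E *ᵥ u = u := by
      apply smul_right_injective _ hf.ne_zero
      simp only
      rw [← Matrix.smul_mulVec, ← hUV, Matrix.add_mulVec, vecMulVec_mulVec, hvu,
        ← Matrix.mulVec_mulVec, hVu, Matrix.mulVec_zero, add_zero, op_smul_eq_smul]
    obtain ⟨ρ₀, p₀, hρp₀, hρu₀, hp₀⟩ := (h.map (mapRingHom (residue R))).exists_splitting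
      (hf.map (residue R)).ne_zero (Nat.le_add_left 2 r) (isIdempotentElem_map hE _)
      (mapRingHom (residue R) ∘ u)
    obtain ⟨ρ, p, hρp, hp, hρ, hvp⟩ :=
      exists_splitting_of_residue hE hu (hvu ▸ hf) hρp₀ hρu₀ hp₀
    refine .of_sub_vecMulVec hρp hp hρ (ih (.sub_vecMulVec hUV hvU hVU hρp hp hρ) ?_ (hf.mul hvp))
    rw [IsIdempotentElem, Matrix.sub_mul, Matrix.mul_sub, Matrix.mul_sub, hE, mul_vecMulVec, hp,
      vecMulVec_mul, hρ, mul_vecMulVec, vecMulVec_mulVec, hρp]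
    simp

end Horrocks

section QuillenSuslin

open MvPolynomial

theorem FreeAway.mul_left {S : Type*} [CommRing S] {m : Type*} [Fintype m] {f : S} {r : ℕ}
    {E : Matrix m m S} (h : FreeAway f r E) (a : S) : FreeAway (a * f) r E := by
  obtain ⟨U, V, hUV, hVU⟩ := h
  exact ⟨a • U, V, by rw [Matrix.smul_mul, hUV, smul_smul],
    by rw [Matrix.mul_smul, hVU, smul_smul]⟩

theorem exists_freeAway_of_isLocalization {R L : Type*} [CommRing R] [CommRing L] [Algebra R L]
    {σ m : Type*} [Fintype m] {M : Submonoid R} (hM : M ≤ nonZeroDivisors R) [IsLocalization M L]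
    {E : Matrix m m (MvPolynomial σ R)} (h : HasFreeImage (E.map (map (algebraMap R L)))) :
    ∃ s ∈ M, ∃ r, FreeAway (C s) r E := by
  obtain ⟨r, A, B, hAB, hBA, -⟩ := h
  obtain ⟨c, hc, A', hA'⟩ := exists_map_eq_smul_of_isLocalization M A
  obtain ⟨d, hd, B', hB'⟩ := exists_map_eq_smul_of_isLocalization M B
  have hinj := map_injective (σ := σ) _ (IsLocalization.injective L hM)
  refine ⟨c * d, mul_mem hc hd, r, A', B', Matrix.map_injective hinj ?_,
    Matrix.map_injective hinj ?_⟩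
  · beta_reduce
    rw [Matrix.map_mul, hA', hB', Matrix.map_smul' _ _ _ (map_mul _), map_C, Matrix.smul_mul,
      Matrix.mul_smul, hAB, smul_smul, ← C_mul, ← map_mul]
  · beta_reduce
    rw [Matrix.map_mul, hA', hB', Matrix.map_smul' _ _ _ (map_mul _), map_C, Matrix.smul_mul,
      Matrix.mul_smul, hBA, smul_smul, ← C_mul, ← map_mul, mul_comm d,
      Matrix.map_one _ (map_zero _) (map_one _)]

theorem FreeAway.hasFreeImage_of_monic {R : Type*} [CommRing R] [IsDomain R]
    [UniqueFactorizationMonoid R] (hR : IsProjectiveFree R) {m : Type*} [Fintype m] {r : ℕ}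
    {E : Matrix m m (Polynomial R)} {f : Polynomial R} (h : FreeAway f r E)
    (hE : IsIdempotentElem E) (hf : f.Monic) : HasFreeImage E := by
  let ε (T : Type _) [CommRing T] : MvPolynomial Unit T ≃ₐ[T] Polynomial T := uniqueAlgEquiv T Unit
  have hε : (E.map (ε R).symm).map (ε R) = E := by
    ext1 i j
    simp
  rw [← hε]
  refine (hasFreeImage_of_forall_isMaximal (isIdempotentElem_map hE _) (fun p _ => ?_)
    (hR.hasFreeImage (isIdempotentElem_map (isIdempotentElem_map hE _) _))).map _
  let φ := Polynomial.mapRingHom (algebraMap R (Localization.AtPrime p))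
  have hloc : HasFreeImage (E.map φ) :=
    (h.map φ).hasFreeImage_of_isLocalRing (isIdempotentElem_map hE φ) (hf.map _)
  have hcomm : (MvPolynomial.map (algebraMap R (Localization.AtPrime p))).comp
      (ε R).symm.toRingEquiv.toRingHom = (ε _).symm.toRingEquiv.toRingHom.comp φ :=
    Polynomial.ringHom_ext (fun a => by simp [ε, φ]) (by simp [ε, φ])
  convert hloc.map (ε _).symm using 1
  ext1 i j
  exact RingHom.congr_fun hcomm _

/-- Exchanging the roles of the variables: `K[σ][X] ≃ K[X][σ]`. -/
noncomputable def polynomialMvPolynomialEquiv (σ K : Type*) [CommRing K] :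
    Polynomial (MvPolynomial σ K) ≃+* MvPolynomial σ (Polynomial K) :=
  ((optionEquivLeft K σ).symm.trans (optionEquivRight K σ)).toRingEquiv

theorem polynomialMvPolynomialEquiv_symm_C (σ K : Type*) [CommRing K] (p : Polynomial K) :
    (polynomialMvPolynomialEquiv σ K).symm (C p) = p.map C := by
  have h : (polynomialMvPolynomialEquiv σ K).symm.toRingHom.comp C = Polynomial.mapRingHom C := by
    refine Polynomial.ringHom_ext (fun a => ?_) ?_
    · have ha : (optionEquivRight K σ).symm (C (Polynomial.C a)) = C a :=
        (AlgEquiv.symm_apply_eq _).mpr (optionEquivRight_C K σ a).symm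
      simp [polynomialMvPolynomialEquiv, ha]
    · simp [polynomialMvPolynomialEquiv]
  exact RingHom.congr_fun h p

theorem IsProjectiveFree.polynomial_mvPolynomial {K : Type u} [Field K] {σ : Type*}
    (h : ∀ (L : Type u) [Field L], IsProjectiveFree (MvPolynomial σ L)) :
    IsProjectiveFree (Polynomial (MvPolynomial σ K)) := by
  intro m E hE
  let φ := polynomialMvPolynomialEquiv σ K
  obtain ⟨s, hs, r, hfree⟩ := exists_freeAway_of_isLocalization (L := FractionRing (Polynomial K))
    le_rfl ((h _).hasFreeImage (isIdempotentElem_map (isIdempotentElem_map hE φ) _))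
  have hs0 : s ≠ 0 := nonZeroDivisors.ne_zero hs
  have hmonic : (Polynomial.C s.leadingCoeff⁻¹ * s).Monic := by
    rw [mul_comm]
    exact Polynomial.monic_mul_leadingCoeff_inv hs0
  refine FreeAway.hasFreeImage_of_monic (h K) ?_ hE (hmonic.map C) (r := r)
  have hE' : (E.map φ).map φ.symm = E := by
    ext1 i j
    simp
  have := (hfree.mul_left (C (Polynomial.C s.leadingCoeff⁻¹))).map φ.symm.toRingHom
  rw [← polynomialMvPolynomialEquiv_symm_C, C_mul, ← hE']
  exact this

theorem isProjectiveFree_mvPolynomial_fin (n : ℕ) (K : Type u) [Field K] :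
    IsProjectiveFree (MvPolynomial (Fin n) K) := by
  induction n generalizing K with
  | zero =>
    have h : IsProjectiveFree K := .of_isLocalRing
    exact h.of_equiv (isEmptyAlgEquiv K (Fin 0)).symm.toRingEquiv
  | succ n ih =>
    have h : IsProjectiveFree (Polynomial (MvPolynomial (Fin n) K)) :=
      .polynomial_mvPolynomial fun L _ => ih L
    exact h.of_equiv (finSuccEquiv K n).symm.toRingEquiv

theorem isProjectiveFree_mvPolynomial (σ K : Type*) [Field K] :
    IsProjectiveFree (MvPolynomial σ K) := by
  classical
  intro m E hE
  let s : Finset σ := Finset.univ.biUnion fun ij : Fin m × Fin m => (E ij.1 ij.2).vars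
  have hs (i j) : ∃ q : MvPolynomial s K, rename (↑) q = E i j :=
    exists_rename_eq_of_vars_subset_range _ _ Subtype.val_injective <| by
      rw [Subtype.range_coe]
      exact_mod_cast Finset.subset_biUnion_of_mem (fun ij : Fin m × Fin m => (E ij.1 ij.2).vars)
        (Finset.mem_univ (i, j))
  choose F hF using hs
  have hFE : Matrix.map (.of F) (rename ((↑) : s → σ)) = E := Matrix.ext hF
  have hFidem : IsIdempotentElem (Matrix.of F) := by
    refine Matrix.map_injective (rename_injective _ Subtype.val_injective) ?_
    beta_reduce
    rw [Matrix.map_mul, hFE, hE]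
  have hfree : IsProjectiveFree (MvPolynomial s K) :=
    (isProjectiveFree_mvPolynomial_fin _ K).of_equiv (renameEquiv K s.equivFin.symm).toRingEquiv
  rw [← hFE]
  exact (hfree m _ hFidem).map (rename ((↑) : s → σ)).toRingHom

end QuillenSuslin

section Approximation

variable {R M : Type*} [CommRing R] [Ring M] [Algebra R M] {𝓐 𝓑 : Subalgebra R M} {h : R}

/-- The elements of `M` congruent to `1` modulo `h ^ k • 𝓐`. Its units form the congruence subgroup
of level `k`: both the unit and its inverse are required to be congruent to `1`. -/
def congruenceSubmonoid (𝓐 : Subalgebra R M) (h : R) (k : ℕ) : Submonoid M where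
  carrier := {x | ∃ a ∈ 𝓐, x = 1 + h ^ k • a}
  one_mem' := ⟨0, 𝓐.zero_mem, by rw [smul_zero, add_zero]⟩
  mul_mem' := by
    rintro _ _ ⟨a, ha, rfl⟩ ⟨b, hb, rfl⟩
    refine ⟨a + b + h ^ k • (a * b), add_mem (add_mem ha hb) (𝓐.smul_mem (mul_mem ha hb) _), ?_⟩
    simp only [mul_add, add_mul, mul_one, one_mul, smul_mul_assoc, mul_smul_comm, smul_add]
    abel

/-- The unit `x` is approximated by units of `𝓑`: at every level `k` it lies in the product of the
congruence subgroup of `𝓐` and the unit group of `𝓑`. -/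
def IsApproximable (𝓐 𝓑 : Subalgebra R M) (h : R) (x : Mˣ) : Prop :=
  ∀ k : ℕ, ∃ u ∈ (congruenceSubmonoid 𝓐 h k).units, ∃ y ∈ 𝓑.toSubmonoid.units, x = u * y

theorem exists_conj_mem_congruenceSubmonoid (hden : ∀ x : M, ∃ k : ℕ, h ^ k • x ∈ 𝓐) (x : Mˣ)
    (k : ℕ) : ∃ l : ℕ, ∀ u ∈ congruenceSubmonoid 𝓐 h l,
      ↑x * u * ↑x⁻¹ ∈ congruenceSubmonoid 𝓐 h k := by
  obtain ⟨i, hi⟩ := hden x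
  obtain ⟨j, hj⟩ := hden ↑x⁻¹
  refine ⟨k + (i + j), ?_⟩
  rintro _ ⟨a, ha, rfl⟩
  refine ⟨h ^ i • ↑x * a * h ^ j • ↑x⁻¹, mul_mem (mul_mem hi ha) hj, ?_⟩
  rw [mul_add, add_mul, mul_one, x.mul_inv]
  simp only [smul_mul_assoc, mul_smul_comm, smul_smul]
  congr 2
  ring

namespace IsApproximable

theorem of_mem_units {x : Mˣ} (hx : x ∈ 𝓑.toSubmonoid.units) : IsApproximable 𝓐 𝓑 h x :=
  fun _ => ⟨1, one_mem _, x, hx, (one_mul x).symm⟩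

theorem mul (hden : ∀ x : M, ∃ k : ℕ, h ^ k • x ∈ 𝓐) {x z : Mˣ} (hx : IsApproximable 𝓐 𝓑 h x)
    (hz : IsApproximable 𝓐 𝓑 h z) : IsApproximable 𝓐 𝓑 h (x * z) := by
  intro k
  obtain ⟨u, hu, y, hy, hxuy⟩ := hx k
  obtain ⟨l, hl⟩ := exists_conj_mem_congruenceSubmonoid hden x k
  obtain ⟨v, hv, w, hw, rfl⟩ := hz l
  rw [Submonoid.mem_units_iff] at hv
  have hconj : x * v * x⁻¹ ∈ (congruenceSubmonoid 𝓐 h k).units := by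
    refine (Submonoid.mem_units_iff _ _).2 ⟨hl _ hv.1, ?_⟩
    rw [mul_inv_rev, mul_inv_rev, inv_inv, ← mul_assoc]
    exact hl _ hv.2
  refine ⟨x * v * x⁻¹ * u, mul_mem hconj hu, y * w, mul_mem hy hw, ?_⟩
  calc x * (v * w) = x * v * x⁻¹ * x * w := by group
    _ = x * v * x⁻¹ * u * (y * w) := by nth_rw 3 [hxuy]; group

theorem exists_conj_mem_inf {x : Mˣ} (hx : IsApproximable 𝓐 𝓑 h x) {e : M} (he : e ∈ 𝓐)
    (he' : ↑x⁻¹ * e * ↑x ∈ 𝓑) : ∃ u ∈ 𝓐.toSubmonoid.units, ↑u⁻¹ * e * ↑u ∈ 𝓐 ⊓ 𝓑 := by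
  obtain ⟨u, hu, y, hy, rfl⟩ := hx 0
  have hle : congruenceSubmonoid 𝓐 h 0 ≤ 𝓐.toSubmonoid := by
    rintro _ ⟨a, ha, rfl⟩
    exact 𝓐.add_mem 𝓐.one_mem (𝓐.smul_mem ha _)
  have hu' : u ∈ 𝓐.toSubmonoid.units := Submonoid.units_mono hle hu
  rw [Submonoid.mem_units_iff] at hu' hy
  refine ⟨u, (Submonoid.mem_units_iff _ _).2 hu', mul_mem (mul_mem hu'.2 he) hu'.1, ?_⟩
  have hconj : ↑u⁻¹ * e * ↑u = ↑y * (↑(u * y)⁻¹ * e * ↑(u * y)) * ↑y⁻¹ := by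
    simp only [mul_inv_rev, Units.val_mul, mul_assoc, Units.mul_inv_cancel_left, Units.mul_inv,
      mul_one]
  rw [hconj]
  exact 𝓑.mul_mem (𝓑.mul_mem hy.1 he') hy.2

end IsApproximable

section SquareZero

variable {N : Type*} [AddCommGroup N] [Module R N] {φ : N →ₗ[R] M}

/-- The unit `1 + φ x`, for a linear map `φ` any two of whose values multiply to zero. -/
def squareZeroUnit (hφ : ∀ x y, φ x * φ y = 0) (x : N) : Mˣ where
  val := 1 + φ x
  inv := 1 - φ x
  val_inv := by simp only [add_mul, mul_sub, hφ, mul_one, one_mul]; abel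
  inv_val := by simp only [sub_mul, mul_add, hφ, mul_one, one_mul]; abel

theorem squareZeroUnit_mem_units (hφ : ∀ x y, φ x * φ y = 0) {x : N} (hx : φ x ∈ 𝓑) :
    squareZeroUnit hφ x ∈ 𝓑.toSubmonoid.units :=
  (Submonoid.mem_units_iff _ _).2 ⟨𝓑.add_mem 𝓑.one_mem hx, 𝓑.sub_mem 𝓑.one_mem hx⟩

theorem squareZeroUnit_mem_congruence (hφ : ∀ x y, φ x * φ y = 0) {a : N} (ha : φ a ∈ 𝓐) (k : ℕ) :
    squareZeroUnit hφ (h ^ k • a) ∈ (congruenceSubmonoid 𝓐 h k).units := by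
  refine (Submonoid.mem_units_iff _ _).2 ⟨⟨φ a, ha, ?_⟩, ⟨-φ a, neg_mem ha, ?_⟩⟩
  · exact congrArg (1 + ·) (map_smul φ _ a)
  · rw [smul_neg, ← sub_eq_add_neg, ← map_smul]
    rfl

theorem IsApproximable.squareZeroUnit (hφ : ∀ x y, φ x * φ y = 0) {x : N}
    (hx : ∀ k : ℕ, ∃ y a : N, φ y ∈ 𝓑 ∧ φ a ∈ 𝓐 ∧ x = y + h ^ k • a) :
    IsApproximable 𝓐 𝓑 h (squareZeroUnit hφ x) := by
  intro k
  obtain ⟨y, a, hy, ha, rfl⟩ := hx k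
  refine ⟨_, squareZeroUnit_mem_congruence hφ ha k, _, squareZeroUnit_mem_units hφ hy, ?_⟩
  ext
  change 1 + φ (y + h ^ k • a) = (1 + φ (h ^ k • a)) * (1 + φ y)
  simp only [map_add, add_mul, mul_add, hφ, one_mul, mul_one, add_zero]
  abel

end SquareZero

end Approximation

section WhiteheadLemma

variable {R S n : Type*} [CommRing R] [CommRing S] [Algebra R S] {𝓐 𝓑 : Subalgebra R S} {h : R}

/-- Inclusion of matrices as the upper right block. -/
def upperBlock (R S n : Type*) [CommRing R] [CommRing S] [Algebra R S] :
    Matrix n n S →ₗ[R] Matrix (n ⊕ n) (n ⊕ n) S where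
  toFun x := Matrix.fromBlocks 0 x 0 0
  map_add' x y := by rw [Matrix.fromBlocks_add, add_zero]
  map_smul' c x := by simp only [RingHom.id_apply, Matrix.fromBlocks_smul, smul_zero]

variable [Fintype n]

theorem upperBlock_mul_upperBlock (x y : Matrix n n S) :
    upperBlock R S n x * upperBlock R S n y = 0 := by
  simp [upperBlock, Matrix.fromBlocks_multiply]

variable [DecidableEq n]

theorem fromBlocks_mem_matrix {a b c d : Matrix n n S} (ha : a ∈ 𝓐.matrix) (hb : b ∈ 𝓐.matrix)
    (hc : c ∈ 𝓐.matrix) (hd : d ∈ 𝓐.matrix) : Matrix.fromBlocks a b c d ∈ 𝓐.matrix := by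
  rintro (i | i) (j | j)
  exacts [ha i j, hb i j, hc i j, hd i j]

theorem exists_pow_smul_mem_matrix (hden : ∀ x : S, ∃ k : ℕ, h ^ k • x ∈ 𝓐) (x : Matrix n n S) :
    ∃ k : ℕ, h ^ k • x ∈ 𝓐.matrix := by
  choose k hk using hden
  refine ⟨Finset.univ.sup fun p : n × n => k (x p.1 p.2), fun i j => ?_⟩
  obtain ⟨d, hd⟩ := Nat.exists_eq_add_of_le'
    (Finset.le_sup (f := fun p : n × n => k (x p.1 p.2)) (Finset.mem_univ (i, j)))
  rw [Matrix.smul_apply, hd, pow_add, mul_smul]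
  exact 𝓐.smul_mem (hk _) _

/-- The rotation `(0, -1; 1, 0)` in block form. -/
def blockRotation (S n : Type*) [CommRing S] [Fintype n] [DecidableEq n] :
    (Matrix (n ⊕ n) (n ⊕ n) S)ˣ where
  val := Matrix.fromBlocks 0 (-1) 1 0
  inv := Matrix.fromBlocks 0 1 (-1) 0
  val_inv := by simp [Matrix.fromBlocks_multiply]
  inv_val := by simp [Matrix.fromBlocks_multiply]

theorem blockRotation_mem_units : blockRotation S n ∈ 𝓑.matrix.toSubmonoid.units := by
  have h0 : (0 : Matrix n n S) ∈ 𝓑.matrix := 𝓑.matrix.zero_mem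
  have h1 : (1 : Matrix n n S) ∈ 𝓑.matrix := 𝓑.matrix.one_mem
  exact (Submonoid.mem_units_iff _ _).2 ⟨fromBlocks_mem_matrix h0 (neg_mem h1) h1 h0,
    fromBlocks_mem_matrix h0 h1 (neg_mem h1) h0⟩

/-- The unit `diag(τ, τ)`, for an involution `τ`. -/
def blockInvolution {τ : Matrix n n S} (hτ : τ * τ = 1) : (Matrix (n ⊕ n) (n ⊕ n) S)ˣ where
  val := Matrix.fromBlocks τ 0 0 τ
  inv := Matrix.fromBlocks τ 0 0 τ
  val_inv := by simp [Matrix.fromBlocks_multiply, hτ]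
  inv_val := by simp [Matrix.fromBlocks_multiply, hτ]

theorem blockInvolution_eq (R : Type*) [CommRing R] [Algebra R S] {τ : Matrix n n S}
    (hτ : τ * τ = 1) (u : (Matrix (n ⊕ n) (n ⊕ n) S)ˣ)
    (hu : u = squareZeroUnit (upperBlock_mul_upperBlock (R := R)) τ) :
    blockInvolution hτ =
      u * (blockRotation S n * u * (blockRotation S n)⁻¹) * u * blockRotation S n := by
  have h1 : (u : Matrix (n ⊕ n) (n ⊕ n) S) = Matrix.fromBlocks 1 τ 0 1 := by
    subst hu
    change 1 + Matrix.fromBlocks 0 τ 0 0 = _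
    rw [← Matrix.fromBlocks_one, Matrix.fromBlocks_add]
    simp only [add_zero, zero_add]
  have h2 : (blockRotation S n : Matrix (n ⊕ n) (n ⊕ n) S) = Matrix.fromBlocks 0 (-1) 1 0 := rfl
  have h3 : (↑(blockRotation S n)⁻¹ : Matrix (n ⊕ n) (n ⊕ n) S) = Matrix.fromBlocks 0 1 (-1) 0 :=
    rfl
  ext1
  rw [Units.val_mul, Units.val_mul, Units.val_mul, Units.val_mul, Units.val_mul, h1, h2, h3]
  simp [Matrix.fromBlocks_multiply, hτ, blockInvolution]

-- Whitehead's lemma: `diag(τ, τ⁻¹)` is a product of elementary matrices, which can be approximated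
-- entry by entry.
theorem isApproximable_blockInvolution (hden : ∀ x : S, ∃ k : ℕ, h ^ k • x ∈ 𝓐)
    (happ : ∀ (x : S) (k : ℕ), ∃ y ∈ 𝓑, ∃ a ∈ 𝓐, x = y + h ^ k • a) {τ : Matrix n n S}
    (hτ : τ * τ = 1) : IsApproximable 𝓐.matrix 𝓑.matrix h (blockInvolution hτ) := by
  have hden' := exists_pow_smul_mem_matrix (n := n ⊕ n) hden
  have hw : IsApproximable 𝓐.matrix 𝓑.matrix h (blockRotation S n) :=
    .of_mem_units blockRotation_mem_units
  have hw' : IsApproximable 𝓐.matrix 𝓑.matrix h (blockRotation S n)⁻¹ :=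
    .of_mem_units (inv_mem blockRotation_mem_units)
  have hu : IsApproximable 𝓐.matrix 𝓑.matrix h
      (squareZeroUnit (upperBlock_mul_upperBlock (R := R)) τ) := by
    refine .squareZeroUnit _ fun k => ?_
    choose y hy a ha hya using fun x => happ x k
    have hblock (𝓒 : Subalgebra R S) {z : Matrix n n S} (hz : ∀ i j, z i j ∈ 𝓒) :
        upperBlock R S n z ∈ 𝓒.matrix :=
      fromBlocks_mem_matrix 𝓒.matrix.zero_mem hz 𝓒.matrix.zero_mem 𝓒.matrix.zero_mem
    exact ⟨τ.map y, τ.map a, hblock 𝓑 fun i j => hy _, hblock 𝓐 fun i j => ha _,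
      Matrix.ext fun i j => hya _⟩
  rw [blockInvolution_eq R hτ _ rfl]
  exact ((hu.mul hden' ((hw.mul hden' hu).mul hden' hw')).mul hden' hu).mul hden' hw

end WhiteheadLemma

section LindelPatching

open MvPolynomial

/-- The subalgebra of `S` of all fractions `b / h ^ k` with `b : R`, for `h` acting invertibly. -/
def awaySubalgebra {R : Type*} (S : Type*) [CommRing R] [CommRing S] [Algebra R S] (h : R) :
    Subalgebra R S where
  carrier := {x | ∃ (k : ℕ) (b : R), h ^ k • x = algebraMap R S b}
  mul_mem' := by
    rintro x y ⟨k, b, hb⟩ ⟨l, c, hc⟩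
    exact ⟨k + l, b * c, by rw [map_mul, ← hb, ← hc, smul_mul_smul_comm, pow_add]⟩
  add_mem' := by
    rintro x y ⟨k, b, hb⟩ ⟨l, c, hc⟩
    refine ⟨k + l, h ^ l * b + h ^ k * c, ?_⟩
    simp only [map_add, map_mul, ← hb, ← hc, Algebra.smul_def, map_pow]
    ring
  algebraMap_mem' b := ⟨0, b, by rw [pow_zero, one_smul]⟩

/-- An analytic isomorphism along `h`, in the sense of Lindel: `B ⧸ h B → A ⧸ h A` is bijective. -/
structure IsAnalyticIso {B : Type*} (A : Type*) [CommRing B] [CommRing A] [Algebra B A] (h : B) :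
    Prop where
  exists_eq_add : ∀ a : A, ∃ (b : B) (a' : A), a = algebraMap B A b + h • a'
  dvd : ∀ (b : B) (a : A), algebraMap B A b = h • a → h ∣ b

namespace IsAnalyticIso

variable {B A : Type*} [CommRing B] [CommRing A] [Algebra B A] {h : B}

theorem exists_eq_add_pow (H : IsAnalyticIso A h) (a : A) (k : ℕ) :
    ∃ (b : B) (a' : A), a = algebraMap B A b + h ^ k • a' := by
  induction k with
  | zero => exact ⟨0, a, by rw [map_zero, zero_add, pow_zero, one_smul]⟩
  | succ k ih =>
    obtain ⟨b, a', rfl⟩ := ih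
    obtain ⟨c, a'', rfl⟩ := H.exists_eq_add a'
    refine ⟨b + h ^ k * c, a'', ?_⟩
    simp only [Algebra.smul_def, map_add, map_mul, map_pow]
    ring

theorem exists_algebraMap_eq (H : IsAnalyticIso A h) (hreg : IsSMulRegular A h) {b : B} {a : A}
    (k : ℕ) (hba : algebraMap B A b = h ^ k • a) : ∃ c, algebraMap B A c = a := by
  induction k generalizing b with
  | zero => exact ⟨b, by rw [hba, pow_zero, one_smul]⟩
  | succ k ih =>
    rw [pow_succ', mul_smul] at hba
    obtain ⟨c, rfl⟩ := H.dvd b _ hba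
    refine ih (b := c) (hreg (Eq.trans ?_ hba))
    exact (Algebra.smul_def _ _).trans (map_mul _ _ _).symm

variable {τ : Type*}

attribute [local instance] algebraMvPolynomial

theorem mvPolynomial (H : IsAnalyticIso A h) :
    IsAnalyticIso (MvPolynomial τ A) (C h : MvPolynomial τ B) where
  exists_eq_add p := by
    choose b a hba using H.exists_eq_add
    refine ⟨∑ s ∈ p.support, monomial s (b (p.coeff s)),
      ∑ s ∈ p.support, monomial s (a (p.coeff s)), ?_⟩
    rw [Algebra.smul_def, algebraMap_def, map_C, map_sum, Finset.mul_sum,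
      ← Finset.sum_add_distrib]
    conv_lhs => rw [p.as_sum]
    refine Finset.sum_congr rfl fun s _ => ?_
    rw [map_monomial, C_mul_monomial, ← map_add, ← Algebra.smul_def, ← hba]
  dvd b a hba := by
    refine (C_dvd_iff_dvd_coeff _ _).2 fun s => H.dvd _ (a.coeff s) ?_
    have hs := congrArg (coeff s) hba
    rwa [Algebra.smul_def, algebraMap_def, coeff_map, map_C, coeff_C_mul,
      ← Algebra.smul_def] at hs

end IsAnalyticIso

section Corner

variable {R m n : Type*} [CommRing R] [Fintype m] [Fintype n]

theorem MvNEquiv.fromBlocks_zero {E : Matrix m m R} (hE : IsIdempotentElem E) :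
    MvNEquiv E (Matrix.fromBlocks E 0 0 (0 : Matrix n n R)) := by
  have hUV : Matrix.fromCols E (0 : Matrix m n R) * Matrix.fromRows E (0 : Matrix n m R) = E := by
    rw [Matrix.fromCols_mul_fromRows, hE, Matrix.mul_zero, add_zero]
  refine ⟨Matrix.fromCols E 0, Matrix.fromRows E 0, hUV, ?_, ?_, ?_⟩
  · rw [Matrix.fromRows_mul_fromCols, hE, Matrix.mul_zero, Matrix.zero_mul, Matrix.mul_zero]
  · rw [hUV, Matrix.mul_fromCols, hE, Matrix.mul_zero]
  · rw [Matrix.mul_assoc, hUV, Matrix.fromRows_mul, hE, Matrix.zero_mul]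

theorem exists_involution_conj_eq [DecidableEq m] {E : Matrix m m R} (hE : HasFreeImage E) :
    ∃ (r : ℕ) (τ : Matrix (m ⊕ Fin r) (m ⊕ Fin r) R), τ * τ = 1 ∧
      τ * Matrix.fromBlocks E 0 0 0 * τ = Matrix.fromBlocks 0 0 0 1 := by
  obtain ⟨r, U, V, hUV, hVU, hU, hV⟩ := hE
  have hE : E * E = E := by rw [← hUV, ← Matrix.mul_assoc, hU]
  rw [hUV] at hU
  have hVE : V * E = V := by rw [← hUV, ← Matrix.mul_assoc, hV]
  refine ⟨r, Matrix.fromBlocks (1 - E) U V 0, ?_, ?_⟩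
  · rw [Matrix.fromBlocks_multiply, ← Matrix.fromBlocks_one]
    simp [Matrix.sub_mul, Matrix.mul_sub, hE, hU, hUV, hVE, hVU]
  · rw [Matrix.fromBlocks_multiply, Matrix.fromBlocks_multiply]
    simp [Matrix.sub_mul, Matrix.mul_sub, hE, hVE, hVU]

end Corner

variable {B A S : Type*} [CommRing B] [CommRing A] [CommRing S] [Algebra B A] [Algebra A S]
variable [Algebra B S] [IsScalarTower B A S] {h : B}

theorem IsAnalyticIso.exists_mem_awaySubalgebra (H : IsAnalyticIso A h)
    [IsLocalization.Away (algebraMap B A h) S] (x : S) (k : ℕ) :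
    ∃ y ∈ awaySubalgebra S h, ∃ a ∈ (IsScalarTower.toAlgHom B A S).range, x = y + h ^ k • a := by
  obtain ⟨⟨a, _, l, rfl⟩, hxa⟩ := IsLocalization.surj (Submonoid.powers (algebraMap B A h)) x
  replace hxa : h ^ l • x = algebraMap A S a := by
    rw [← hxa, Algebra.smul_def, mul_comm, IsScalarTower.algebraMap_apply B A S, map_pow]
  obtain ⟨b, a', rfl⟩ := H.exists_eq_add_pow a (l + k)
  refine ⟨x - h ^ k • algebraMap A S a', ⟨l, b, ?_⟩, algebraMap A S a', ⟨a', rfl⟩, by abel⟩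
  have hsmul : algebraMap A S (h ^ (l + k) • a') = h ^ (l + k) • algebraMap A S a' :=
    map_smul (IsScalarTower.toAlgHom B A S) _ _
  rw [smul_sub, hxa, ← mul_smul, ← pow_add, map_add, hsmul, add_sub_cancel_right,
    ← IsScalarTower.algebraMap_apply]

theorem exists_pow_smul_mem_range [IsLocalization.Away (algebraMap B A h) S] (x : S) :
    ∃ k : ℕ, h ^ k • x ∈ (IsScalarTower.toAlgHom B A S).range := by
  obtain ⟨⟨a, _, l, rfl⟩, hxa⟩ := IsLocalization.surj (Submonoid.powers (algebraMap B A h)) x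
  refine ⟨l, a, Eq.symm ?_⟩
  rw [Algebra.smul_def, mul_comm, IsScalarTower.algebraMap_apply B A S, map_pow]
  exact hxa

theorem exists_map_eq_of_mem_matrix_range {n : Type*} [Fintype n] [DecidableEq n]
    {X : Matrix n n S} (hX : X ∈ (IsScalarTower.toAlgHom B A S).range.matrix) :
    ∃ X₀ : Matrix n n A, X₀.map (algebraMap A S) = X := by
  choose X₀ hX₀ using hX
  exact ⟨Matrix.of X₀, Matrix.ext hX₀⟩

theorem IsAnalyticIso.exists_mvNEquiv_map_of_conj_mem [FaithfulSMul A S] (H : IsAnalyticIso A h)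
    (hreg : IsSMulRegular A h) {n : Type*} [Fintype n] [DecidableEq n] {E : Matrix n n A}
    (hE : IsIdempotentElem E) {u : (Matrix n n S)ˣ}
    (hu : u ∈ (IsScalarTower.toAlgHom B A S).range.matrix.toSubmonoid.units)
    (huE : (u⁻¹).val * E.map (algebraMap A S) * u.val ∈
      (IsScalarTower.toAlgHom B A S).range.matrix ⊓ (awaySubalgebra S h).matrix) :
    ∃ F : Matrix n n B, MvNEquiv E (F.map (algebraMap B A)) := by
  have hinj : Function.Injective (algebraMap A S) := FaithfulSMul.algebraMap_injective A S
  obtain ⟨U, hU⟩ := exists_map_eq_of_mem_matrix_range ((Submonoid.mem_units_iff _ _).1 hu).1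
  obtain ⟨V, hV⟩ := exists_map_eq_of_mem_matrix_range ((Submonoid.mem_units_iff _ _).1 hu).2
  have hUV : U * V = 1 := Matrix.map_injective hinj <|
    show (U * V).map (algebraMap A S) = (1 : Matrix n n A).map (algebraMap A S) by
      rw [Matrix.map_mul, hU, hV, Units.mul_inv, Matrix.map_one _ (map_zero _) (map_one _)]
  have hB (i j : n) : ∃ b, algebraMap B A b = (V * E * U) i j := by
    obtain ⟨k, b, hb⟩ := huE.2 i j
    refine H.exists_algebraMap_eq hreg (b := b) k (hinj ?_)
    rw [← hU, ← hV, ← Matrix.map_mul, ← Matrix.map_mul] at hb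
    rw [← IsScalarTower.algebraMap_apply, ← hb]
    exact (map_smul (IsScalarTower.toAlgHom B A S) (h ^ k) ((V * E * U) i j)).symm
  choose F hF using hB
  have hFE : (Matrix.of F).map (algebraMap B A) = V * E * U := Matrix.ext hF
  exact ⟨Matrix.of F, hFE ▸ .of_mul_eq_one hE hUV⟩

-- `E ⊕ 0` is conjugate over `S` by an involution to a matrix defined over `B`. Approximating that
-- conjugation leaves a conjugation over `A` to a matrix defined over both `A` and `B[1/h]`, hence
-- over `B`.
theorem IsAnalyticIso.exists_mvNEquiv_map [FaithfulSMul A S] (H : IsAnalyticIso A h)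
    (hreg : IsSMulRegular A h) [IsLocalization.Away (algebraMap B A h) S] {m : Type*} [Fintype m]
    {E : Matrix m m A} (hE : IsIdempotentElem E) (hs : HasFreeImage (E.map (algebraMap A S))) :
    ∃ (r : ℕ) (F : Matrix ((m ⊕ Fin r) ⊕ (m ⊕ Fin r)) ((m ⊕ Fin r) ⊕ (m ⊕ Fin r)) B),
      MvNEquiv E (F.map (algebraMap B A)) := by
  classical
  obtain ⟨r, τ, hτ, hτE⟩ := exists_involution_conj_eq hs
  let δ := blockInvolution hτ
  let E' : Matrix (m ⊕ Fin r) (m ⊕ Fin r) A := Matrix.fromBlocks E 0 0 0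
  let E'' : Matrix ((m ⊕ Fin r) ⊕ (m ⊕ Fin r)) ((m ⊕ Fin r) ⊕ (m ⊕ Fin r)) A :=
    Matrix.fromBlocks E' 0 0 0
  have hE' : MvNEquiv E E' := .fromBlocks_zero hE
  have hE'' : MvNEquiv E E'' := hE'.trans (.fromBlocks_zero hE'.isIdempotentElem)
  let P : Matrix ((m ⊕ Fin r) ⊕ (m ⊕ Fin r)) ((m ⊕ Fin r) ⊕ (m ⊕ Fin r)) B :=
    Matrix.fromBlocks (Matrix.fromBlocks 0 0 0 1) 0 0 0
  have hδ : (δ⁻¹).val * E''.map (algebraMap A S) * δ.val = P.map (algebraMap B S) := by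
    change Matrix.fromBlocks τ 0 0 τ * _ * Matrix.fromBlocks τ 0 0 τ = _
    simp [E'', E', P, Matrix.fromBlocks_map, Matrix.fromBlocks_multiply, hτE]
  have hmem : (δ⁻¹).val * E''.map (algebraMap A S) * δ.val ∈ (awaySubalgebra S h).matrix := by
    rw [hδ]
    exact fun i j => ⟨0, P i j, by rw [pow_zero, one_smul]; rfl⟩
  obtain ⟨u, hu, huE⟩ := (isApproximable_blockInvolution exists_pow_smul_mem_range
    H.exists_mem_awaySubalgebra hτ).exists_conj_mem_inf (fun i j => ⟨E'' i j, rfl⟩) hmem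
  obtain ⟨F, hF⟩ := H.exists_mvNEquiv_map_of_conj_mem hreg hE''.isIdempotentElem hu huE
  exact ⟨r, F, hE''.trans hF⟩

theorem IsAnalyticIso.hasFreeImage [FaithfulSMul B A] [FaithfulSMul A S] (H : IsAnalyticIso A h)
    (hreg : IsSMulRegular A h) [IsLocalization.Away (algebraMap B A h) S] (hB : IsProjectiveFree B)
    {m : Type*} [Fintype m] {E : Matrix m m A} (hE : IsIdempotentElem E)
    (hs : HasFreeImage (E.map (algebraMap A S))) : HasFreeImage E := by
  obtain ⟨r, F, hEF⟩ := H.exists_mvNEquiv_map hreg hE hs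
  refine hEF.hasFreeImage ((hB.hasFreeImage ?_).map _)
  refine Matrix.map_injective (FaithfulSMul.algebraMap_injective B A) ?_
  exact Matrix.map_mul.trans hEF.isIdempotentElem

attribute [local instance] algebraMvPolynomial

theorem IsAnalyticIso.hasFreeImage_mvPolynomial [IsDomain A] [FaithfulSMul B A]
    (H : IsAnalyticIso A h) (hh : h ≠ 0) [IsLocalization.Away (algebraMap B A h) S] {τ : Type*}
    (hB : IsProjectiveFree (MvPolynomial τ B)) {m : Type*} [Fintype m]
    {E : Matrix m m (MvPolynomial τ A)} (hE : IsIdempotentElem E)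
    (hs : HasFreeImage (E.map (map (algebraMap A S)))) : HasFreeImage E := by
  have hne : algebraMap B A h ≠ 0 :=
    (map_ne_zero_iff _ (FaithfulSMul.algebraMap_injective B A)).2 hh
  have : FaithfulSMul A S := (faithfulSMul_iff_algebraMap_injective A S).2 <|
    IsLocalization.injective S (powers_le_nonZeroDivisors_of_noZeroDivisors hne)
  have hC : algebraMap (MvPolynomial τ B) (MvPolynomial τ A) (C h) = C (algebraMap B A h) :=
    map_C _ _
  have : IsLocalization.Away (algebraMap (MvPolynomial τ B) (MvPolynomial τ A) (C h))
      (MvPolynomial τ S) := by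
    rw [hC, IsLocalization.Away, ← Submonoid.map_powers]
    infer_instance
  have : IsScalarTower (MvPolynomial τ B) (MvPolynomial τ A) (MvPolynomial τ S) :=
    .of_algebraMap_eq fun p => by
      simp only [algebraMap_def, map_map, IsScalarTower.algebraMap_eq B A S]
  have hreg : IsSMulRegular (MvPolynomial τ A) (C h : MvPolynomial τ B) := fun p q hpq => by
    simp only [Algebra.smul_def, hC] at hpq
    exact mul_left_cancel₀ ((map_ne_zero_iff _ (C_injective τ A)).2 hne) hpq
  exact H.mvPolynomial.hasFreeImage hreg hB hE hs

end LindelPatching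

section LocalEtale

open Polynomial

theorem dvd_aeval_sub_algebraMap_coeff_zero {B A : Type*} [CommRing B] [CommRing A] [Algebra B A]
    (t : A) (p : B[X]) : t ∣ aeval t p - algebraMap B A (p.coeff 0) := by
  simpa only [aeval_X, map_sub, aeval_C] using map_dvd (aeval t) (X_dvd_sub_C (p := p))

theorem isUnit_aeval_iff {B A : Type*} [CommRing B] [CommRing A] [IsLocalRing A] [Algebra B A]
    {t : A} (ht : t ∈ maximalIdeal A) (p : B[X]) :
    IsUnit (aeval t p) ↔ IsUnit (algebraMap B A (p.coeff 0)) := by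
  have hmem := Ideal.mem_of_dvd _ (dvd_aeval_sub_algebraMap_coeff_zero t p) ht
  rw [← residue_ne_zero_iff_isUnit, ← residue_ne_zero_iff_isUnit,
    sub_eq_zero.mp ((map_sub _ _ _).symm.trans ((residue_eq_zero_iff _).mpr hmem))]

theorem dvd_of_algebraMap_eq_smul {B A : Type*} [CommRing B] [CommRing A] [Algebra B A]
    [Module.FaithfullyFlat B A] {b h : B} {a : A} (hba : algebraMap B A b = h • a) : h ∣ b := by
  rw [← Ideal.mem_span_singleton, ← Ideal.comap_map_eq_self_of_faithfullyFlat (B := A)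
    (Ideal.span {h}), Ideal.mem_comap, hba, Algebra.smul_def]
  exact Ideal.mul_mem_right _ _ (Ideal.mem_map_of_mem _ (Ideal.mem_span_singleton_self h))

section LocalPresentation

variable {B : Type u} {A : Type v} [CommRing B] [CommRing A] [IsLocalRing A] [Algebra B A]

theorem isLocalization_atPrime_essFiniteType_subalgebra [Algebra.EssFiniteType B A] :
    IsLocalization.AtPrime A
      ((maximalIdeal A).comap (algebraMap (Algebra.EssFiniteType.subalgebra B A) A)) :=
  IsLocalization.of_le (Algebra.EssFiniteType.submonoid B A) _ (fun _ hx hxm => hxm hx)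
    fun _ hr => notMem_maximalIdeal.mp hr

theorem exists_isStandardEtale_isLocalization [IsNoetherianRing B] [Algebra.EssFiniteType B A]
    [Algebra.FormallyEtale B A] :
    ∃ (S : Type v) (_ : CommRing S) (_ : Algebra B S) (_ : Algebra S A) (_ : IsScalarTower B S A)
      (_ : Algebra.IsStandardEtale B S) (M : Submonoid S), IsLocalization M A := by
  let A₀ := Algebra.EssFiniteType.subalgebra B A
  let P : Ideal A₀ := (maximalIdeal A).comap (algebraMap A₀ A)
  have : IsLocalization.AtPrime A P := isLocalization_atPrime_essFiniteType_subalgebra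
  have : Algebra.FinitePresentation B A₀ :=
    Algebra.FinitePresentation.of_finiteType.mp inferInstance
  have : Algebra.IsEtaleAt B P := Algebra.FormallyEtale.of_equiv
    ((IsLocalization.algEquiv P.primeCompl A (Localization.AtPrime P)).restrictScalars B)
  obtain ⟨f, hf, hstd⟩ := Algebra.IsEtaleAt.exists_isStandardEtale (R := B) P
  let : Algebra (Localization.Away f) A :=
    (IsLocalization.Away.lift f (notMem_maximalIdeal.mp hf)).toAlgebra
  have : IsScalarTower A₀ (Localization.Away f) A :=
    .of_algebraMap_eq fun x => (IsLocalization.Away.lift_eq f _ x).symm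
  have : IsScalarTower B (Localization.Away f) A := .of_algebraMap_eq fun x => by
    rw [IsScalarTower.algebraMap_apply B A₀ A,
      IsScalarTower.algebraMap_apply A₀ (Localization.Away f) A,
      ← IsScalarTower.algebraMap_apply B A₀ (Localization.Away f)]
  exact ⟨Localization.Away f, inferInstance, inferInstance, inferInstance, inferInstance, hstd,
    P.primeCompl.map (algebraMap A₀ _),
    IsLocalization.isLocalization_of_submonoid_le (Localization.Away f) A (Submonoid.powers f)
      P.primeCompl (Submonoid.powers_le.mpr hf)⟩

theorem flat_of_formallyEtale [IsNoetherianRing B] [Algebra.EssFiniteType B A]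
    [Algebra.FormallyEtale B A] : Module.Flat B A := by
  obtain ⟨S, _, _, _, _, _, M, _⟩ := exists_isStandardEtale_isLocalization (B := B) (A := A)
  have : Module.Flat S A := IsLocalization.flat A M
  exact Module.Flat.trans B S A

/-- `t` is a simple root of a polynomial over `B`, and every element of `A` is a fraction of
polynomials in `t`: a presentation of `A` as a localization of a standard étale `B`-algebra. -/
structure IsEtaleGenerator (B : Type*) {A : Type*} [CommRing B] [CommRing A] [Algebra B A]
    (t : A) : Prop where
  exists_simple_root : ∃ F : B[X], aeval t F = 0 ∧ IsUnit (aeval t (derivative F))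
  exists_mul_eq : ∀ a : A, ∃ p s : B[X], IsUnit (aeval t s) ∧ aeval t s * a = aeval t p

theorem exists_isEtaleGenerator [IsNoetherianRing B] [Algebra.EssFiniteType B A]
    [Algebra.FormallyEtale B A] : ∃ t : A, IsEtaleGenerator B t := by
  obtain ⟨S, _, _, _, _, hS, M, _⟩ := exists_isStandardEtale_isLocalization (B := B) (A := A)
  obtain ⟨Q⟩ := hS.nonempty_standardEtalePresentation
  let φ : S →ₐ[B] A := IsScalarTower.toAlgHom B S A
  have hmap : Q.P.HasMap (φ Q.x) := Q.hasMap.map φ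
  have hg (n : ℕ) : IsUnit (aeval (φ Q.x) Q.g ^ n) := hmap.2.pow n
  have hfrac (x : S) : ∃ (p : B[X]) (n : ℕ), φ x * aeval (φ Q.x) Q.g ^ n = aeval (φ Q.x) p := by
    obtain ⟨p, n, hp⟩ := Q.exists_mul_aeval_x_g_pow_eq_aeval_x x
    exact ⟨p, n, by simpa only [map_mul, map_pow, aeval_algHom_apply] using congrArg φ hp⟩
  refine ⟨φ Q.x, ⟨Q.f, hmap.1, hmap.isUnit_derivative_f⟩, fun a => ?_⟩
  obtain ⟨⟨x, y⟩, hxy : a * φ y = φ x⟩ := IsLocalization.surj M a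
  obtain ⟨p, n, hp⟩ := hfrac x
  obtain ⟨s, k, hs⟩ := hfrac y
  have hy : IsUnit (φ y) := IsLocalization.map_units A y
  refine ⟨p * Q.g ^ k, s * Q.g ^ n, ?_, ?_⟩
  · rw [map_mul, map_pow, ← hs]
    exact (hy.mul (hg k)).mul (hg n)
  · rw [map_mul, map_mul, map_pow, map_pow, ← hp, ← hs, ← hxy]
    ring

end LocalPresentation

namespace IsEtaleGenerator

variable {B A : Type*} [CommRing B] [CommRing A] [Algebra B A] {t : A}

theorem sub_algebraMap (ht : IsEtaleGenerator B t) (b : B) :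
    IsEtaleGenerator B (t - algebraMap B A b) := by
  have hcomp (p : B[X]) : aeval (t - algebraMap B A b) (p.comp (X + C b)) = aeval t p := by
    rw [aeval_comp, map_add, aeval_X, aeval_C, sub_add_cancel]
  refine ⟨?_, fun a => ?_⟩
  · obtain ⟨F, hF, hF'⟩ := ht.exists_simple_root
    refine ⟨F.comp (X + C b), (hcomp F).trans hF, ?_⟩
    rwa [derivative_comp, derivative_X_add_C, one_mul, hcomp]
  · obtain ⟨p, s, hs, hsa⟩ := ht.exists_mul_eq a
    exact ⟨p.comp (X + C b), s.comp (X + C b), by rwa [hcomp], by rwa [hcomp, hcomp]⟩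

theorem exists_associated_algebraMap [IsLocalRing A] (ht : IsEtaleGenerator B t)
    (htm : t ∈ maximalIdeal A) : ∃ h : B, Associated (algebraMap B A h) t := by
  obtain ⟨F, hF, hF'⟩ := ht.exists_simple_root
  have hunit : IsUnit (aeval t F.divX) := by
    rw [isUnit_aeval_iff htm] at hF' ⊢
    simpa only [coeff_derivative, coeff_divX, zero_add, Nat.cast_zero, mul_one] using hF'
  have hroot : aeval t F.divX * t + algebraMap B A (F.coeff 0) = 0 := by
    rw [← hF]
    conv_rhs => rw [← divX_mul_X_add F]
    rw [map_add, map_mul, aeval_X, aeval_C]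
  refine ⟨F.coeff 0, Associated.symm ⟨-hunit.unit, ?_⟩⟩
  rw [Units.val_neg, IsUnit.unit_spec]
  linear_combination -hroot

theorem exists_isAnalyticIso [IsLocalRing A] [IsLocalHom (algebraMap B A)]
    [Module.FaithfullyFlat B A] (ht : IsEtaleGenerator B t) (htm : t ∈ maximalIdeal A) :
    ∃ h : B, algebraMap B A h ∈ maximalIdeal A ∧ IsAnalyticIso A h := by
  obtain ⟨h, hht⟩ := ht.exists_associated_algebraMap htm
  refine ⟨h, Ideal.mem_of_dvd _ hht.symm.dvd htm, fun a => ?_, fun b a => dvd_of_algebraMap_eq_smul⟩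
  obtain ⟨p, s, hs, hsa⟩ := ht.exists_mul_eq a
  obtain ⟨v, hv⟩ := (isUnit_of_map_unit _ _ ((isUnit_aeval_iff htm s).mp hs)).exists_right_inv
  obtain ⟨c, hc⟩ := dvd_aeval_sub_algebraMap_coeff_zero t p
  obtain ⟨d, hd⟩ := dvd_aeval_sub_algebraMap_coeff_zero t s
  obtain ⟨a', ha'⟩ : algebraMap B A h ∣ a - algebraMap B A (v * p.coeff 0) := by
    refine hht.dvd.trans ⟨algebraMap B A v * (c - d * a), ?_⟩
    have hv' : algebraMap B A (s.coeff 0) * algebraMap B A v = 1 := by rw [← map_mul, hv, map_one]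
    rw [map_mul]
    linear_combination (-a) * hv' - a * algebraMap B A v * hd + algebraMap B A v * (hc + hsa)
  exact ⟨v * p.coeff 0, a', by rw [Algebra.smul_def, ← ha', add_sub_cancel]⟩

end IsEtaleGenerator

theorem exists_isAnalyticIso_of_formallyEtale {B A : Type*} [CommRing B] [CommRing A]
    [IsNoetherianRing B] [IsLocalRing B] [IsLocalRing A] [Algebra B A]
    [IsLocalHom (algebraMap B A)] [Algebra.EssFiniteType B A] [Algebra.FormallyEtale B A]
    (hres : Function.Surjective (algebraMap B (ResidueField A))) :
    FaithfulSMul B A ∧ ∃ h : B, algebraMap B A h ∈ maximalIdeal A ∧ IsAnalyticIso A h := by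
  have := flat_of_formallyEtale (B := B) (A := A)
  have := Module.FaithfullyFlat.of_flat_of_isLocalHom (A := B) (B := A)
  obtain ⟨t, ht⟩ := exists_isEtaleGenerator (B := B) (A := A)
  obtain ⟨b, hb⟩ := hres (residue A t)
  refine ⟨inferInstance, (ht.sub_algebraMap b).exists_isAnalyticIso ?_⟩
  rw [← residue_eq_zero_iff, map_sub, ← hb, sub_eq_zero]
  rfl

theorem exists_isAnalyticIso_localization {D A : Type*} [CommRing D] [CommRing A] [IsLocalRing A]
    [Algebra D A] [IsNoetherianRing D] [Algebra.EssFiniteType D A]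
    [Algebra.FormallyEtale D A]
    (hres : ∀ x : ResidueField A, ∃ p s : D, x = algebraMap D _ p / algebraMap D _ s) :
    ∃ (q : Ideal D) (_ : q.IsPrime) (_ : Algebra (Localization.AtPrime q) A)
      (h : Localization.AtPrime q), FaithfulSMul (Localization.AtPrime q) A ∧
        algebraMap _ A h ∈ maximalIdeal A ∧ IsAnalyticIso A h := by
  let q : Ideal D := (maximalIdeal A).comap (algebraMap D A)
  let B := Localization.AtPrime q
  have hunit (s : q.primeCompl) : IsUnit (algebraMap D A s) := notMem_maximalIdeal.mp s.2
  let : Algebra B A := (IsLocalization.lift hunit).toAlgebra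
  have : IsScalarTower D B A := .of_algebraMap_eq fun x => (IsLocalization.lift_eq hunit x).symm
  have : Algebra.EssFiniteType B A := .of_comp D B A
  have : Algebra.FormallyEtale B A := .localization_base q.primeCompl
  have : IsNoetherianRing B := IsLocalization.isNoetherianRing q.primeCompl B inferInstance
  have : IsLocalHom (algebraMap B A) := ⟨fun b hb => by
    obtain ⟨x, s, rfl⟩ := IsLocalization.exists_mk'_eq q.primeCompl b
    rw [RingHom.algebraMap_toAlgebra, IsLocalization.lift_mk', Units.isUnit_mul_units] at hb
    exact (IsLocalization.AtPrime.isUnit_mk'_iff B q x s).mpr fun hx => hx hb⟩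
  have hsurj : Function.Surjective (algebraMap B (ResidueField A)) := fun x => by
    obtain ⟨p, s, rfl⟩ := hres x
    have : IsScalarTower D B (ResidueField A) := .to₁₂₄ D B A (ResidueField A)
    by_cases hs : s ∈ q.primeCompl
    · have hs0 : algebraMap D (ResidueField A) s ≠ 0 :=
        (residue_ne_zero_iff_isUnit _).mpr (hunit ⟨s, hs⟩)
      refine ⟨IsLocalization.mk' B p ⟨s, hs⟩, ?_⟩
      rw [eq_div_iff hs0, IsScalarTower.algebraMap_apply D B (ResidueField A),
        IsScalarTower.algebraMap_apply D B (ResidueField A), ← map_mul,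
        IsLocalization.mk'_spec B p ⟨s, hs⟩]
    · have hs0 : algebraMap D (ResidueField A) s = 0 :=
        (residue_eq_zero_iff _).mpr (not_not.mp hs)
      exact ⟨0, by rw [map_zero, hs0, div_zero]⟩
  obtain ⟨hinj, h, hm, hh⟩ := exists_isAnalyticIso_of_formallyEtale hsurj
  exact ⟨q, inferInstance, inferInstance, h, hinj, hm, hh⟩

end LocalEtale

section StructureTheorem

open TensorProduct KaehlerDifferential

theorem formallyEtale_of_bijective_mapBaseChange {R S T : Type*} [CommRing R] [CommRing S]
    [CommRing T] [Algebra R S] [Algebra S T] [Algebra R T] [IsScalarTower R S T]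
    [Algebra.FormallySmooth R T] (h : Function.Bijective (mapBaseChange R S T)) :
    Algebra.FormallyEtale S T := by
  refine ⟨⟨fun x y => ?_⟩, ⟨fun x y => ?_⟩⟩
  · obtain ⟨x, rfl⟩ := KaehlerDifferential.map_surjective R S T x
    obtain ⟨y, rfl⟩ := KaehlerDifferential.map_surjective R S T y
    rw [(exact_mapBaseChange_map R S T x).mpr (h.2 x),
      (exact_mapBaseChange_map R S T y).mpr (h.2 y)]
  · have hzero (z : Algebra.H1Cotangent S T) : z = 0 := by
      have hδ : Algebra.H1Cotangent.δ R S T z = 0 := h.1 <| by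
        rw [map_zero]
        exact (Algebra.H1Cotangent.exact_δ_mapBaseChange R S T _).mpr ⟨z, rfl⟩
      obtain ⟨w, rfl⟩ := (Algebra.H1Cotangent.exact_map_δ R S T z).mp hδ
      rw [Subsingleton.elim w 0, map_zero]
    rw [hzero x, hzero y]

section MvPolynomial

variable {k A σ : Type*} [CommRing k] [CommRing A] [Algebra k A] [Algebra (MvPolynomial σ k) A]
  [IsScalarTower k (MvPolynomial σ k) A]

theorem formallyEtale_mvPolynomial_of_basis [Algebra.FormallySmooth k A]
    (b : Module.Basis σ A Ω[A⁄k])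
    (hb : ∀ i, b i = D k A (algebraMap (MvPolynomial σ k) A (.X i))) :
    Algebra.FormallyEtale (MvPolynomial σ k) A := by
  let b₀ := (mvPolynomialBasis k σ).baseChange A
  have heq : mapBaseChange k (MvPolynomial σ k) A = (b₀.equiv b (Equiv.refl σ)).toLinearMap :=
    b₀.ext fun i => by
      rw [LinearEquiv.coe_coe, Module.Basis.equiv_apply, Equiv.refl_apply, hb,
        Module.Basis.baseChange_apply, mvPolynomialBasis_apply, mapBaseChange_tmul, one_smul, map_D]
  refine formallyEtale_of_bijective_mapBaseChange (R := k) ?_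
  rw [heq]
  exact (b₀.equiv b (Equiv.refl σ)).bijective

theorem linearIndependent_D_of_formallyEtale [Algebra.FormallyEtale (MvPolynomial σ k) A] :
    LinearIndependent A fun i => D k A (algebraMap (MvPolynomial σ k) A (.X i)) := by
  convert (((mvPolynomialBasis k σ).baseChange A).map
    (tensorKaehlerEquivOfFormallyEtale k (MvPolynomial σ k) A)).linearIndependent using 2 with i
  simp only [Module.Basis.map_apply, Module.Basis.baseChange_apply, mvPolynomialBasis_apply,
    tensorKaehlerEquivOfFormallyEtale_apply, mapBaseChange_tmul, one_smul, map_D]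

end MvPolynomial

section SeparableGenerators

variable {k K : Type*} [Field k] [Field K] [Algebra k K]

open scoped IntermediateField.algebraAdjoinAdjoin in
theorem linearIndependent_D_of_isSeparable {ι : Type*} {v : ι → K} (hv : AlgebraicIndependent k v)
    [Algebra.IsSeparable (IntermediateField.adjoin k (Set.range v)) K] :
    LinearIndependent K fun i => D k K (v i) := by
  let S := Algebra.adjoin k (Set.range v)
  let E := IntermediateField.adjoin k (Set.range v)
  have : Algebra.FormallyEtale E K := .of_isSeparable _ _
  have : Algebra.FormallyEtale S E := .of_isLocalization (nonZeroDivisors _)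
  have : Algebra.FormallyEtale S K := .comp _ E _
  let : Algebra (MvPolynomial ι k) K := (MvPolynomial.aeval v).toAlgebra
  let : Algebra (MvPolynomial ι k) S := hv.aevalEquiv.toRingEquiv.toRingHom.toAlgebra
  have : IsScalarTower k (MvPolynomial ι k) K :=
    .of_algebraMap_eq fun x => ((MvPolynomial.aeval v).commutes x).symm
  have : IsScalarTower (MvPolynomial ι k) S K :=
    .of_algebraMap_eq fun x => (hv.algebraMap_aevalEquiv x).symm
  have : Algebra.FormallyEtale (MvPolynomial ι k) S :=
    .of_equiv (AlgEquiv.ofRingEquiv (f := hv.aevalEquiv.toRingEquiv) fun _ => rfl)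
  have : Algebra.FormallyEtale (MvPolynomial ι k) K := .comp _ S _
  have hX (i : ι) : algebraMap (MvPolynomial ι k) K (.X i) = v i := MvPolynomial.aeval_X v i
  have hli := linearIndependent_D_of_formallyEtale (k := k) (A := K) (σ := ι)
  simp only [hX] at hli
  exact hli

theorem exists_linearIndependent_D_adjoin_insert_eq_top (k K : Type*) [Field k] [Field K]
    [Algebra k K] [PerfectField k] [Algebra.EssFiniteType k K] :
    ∃ (s : Set K) (α : K), (LinearIndependent K fun i : s => D k K (i : K)) ∧
      IntermediateField.adjoin k (insert α s) = ⊤ := by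
  obtain ⟨s, hs, hsep⟩ := exists_isTranscendenceBasis_and_isSeparable_of_perfectField k K
  let E := IntermediateField.adjoin k (s : Set K)
  have : Algebra.IsSeparable (IntermediateField.adjoin k (Set.range ((↑) : s → K))) K := by
    rwa [show Set.range ((↑) : s → K) = s from Subtype.range_coe]
  have : Algebra.EssFiniteType E K := .of_comp k E K
  have : Algebra.FormallyUnramified E K := (Algebra.FormallyUnramified.iff_isSeparable E K).mpr hsep
  have : Module.Finite E K := Algebra.FormallyUnramified.finite_of_free E K
  obtain ⟨α, hα⟩ := Field.exists_primitive_element E K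
  refine ⟨s, α, linearIndependent_D_of_isSeparable hs.1, ?_⟩
  rw [← Set.union_singleton, ← IntermediateField.adjoin_adjoin_left, hα,
    IntermediateField.restrictScalars_top]

end SeparableGenerators

theorem exists_mem_maximalIdeal_notMem_sq {R : Type*} [CommRing R] [IsLocalRing R]
    [IsNoetherianRing R] (hR : ¬ IsField R) : ∃ x ∈ maximalIdeal R, x ∉ maximalIdeal R ^ 2 := by
  refine SetLike.not_le_iff_exists.mp fun hle => hR (subsingleton_cotangentSpace_iff.mp ?_)
  exact (Ideal.cotangent_subsingleton_iff _).mpr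
    ((sq _).symm.trans (le_antisymm (Ideal.pow_le_self two_ne_zero) hle))

theorem span_range_one_tmul {R M ι : Type*} [CommRing R] [AddCommGroup M] [Module R M]
    (K : Type*) [CommRing K] [Algebra R K] {v : ι → M}
    (hv : Submodule.span R (Set.range v) = ⊤) :
    Submodule.span K (Set.range fun i => (1 ⊗ₜ v i : K ⊗[R] M)) = ⊤ := by
  rw [← Submodule.baseChange_top, ← hv, Submodule.baseChange_span, ← Set.range_comp]
  rfl

section ResidueDifferential

variable (k : Type*) {A : Type*} [CommRing k] [CommRing A] [IsLocalRing A] [Algebra k A]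

/-- The universal derivation of a local ring, composed with reduction modulo the maximal ideal. -/
noncomputable def residueD : Derivation k A (ResidueField A ⊗[A] Ω[A⁄k]) :=
  (TensorProduct.mk A (ResidueField A) Ω[A⁄k] 1).compDer (D k A)

theorem mapBaseChange_residueD (a : A) :
    mapBaseChange k A (ResidueField A) (residueD k a) = D k (ResidueField A) (residue A a) :=
  (mapBaseChange_tmul k A _ _ _).trans ((one_smul _ _).trans (map_D k k A _ a))

theorem span_range_residueD :
    Submodule.span (ResidueField A) (Set.range (residueD k : A → _)) = ⊤ :=
  span_range_one_tmul _ (KaehlerDifferential.span_range_derivation k A)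

theorem mem_maximalIdeal_sq_of_residueD_eq_zero [Algebra.FormallySmooth k A]
    [Algebra.FormallySmooth k (ResidueField A)] {x : A} (hx : x ∈ maximalIdeal A)
    (hx0 : residueD k x = 0) : x ∈ maximalIdeal A ^ 2 := by
  have hker : RingHom.ker (algebraMap A (ResidueField A)) = maximalIdeal A := ker_residue
  have hinj := (Algebra.FormallySmooth.kerCotangentToTensor_injective_iff
    (R := k) (P := A) (A := ResidueField A) residue_surjective).mpr inferInstance
  rw [← hker] at hx ⊢
  refine (Ideal.toCotangent_eq_zero _ ⟨x, hx⟩).mp (hinj ?_)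
  rw [map_zero, kerCotangentToTensor_toCotangent]
  exact hx0

variable {k}

theorem residueD_mul_of_mem (a : A) {x : A} (hx : x ∈ maximalIdeal A) :
    residueD k (a * x) = residue A a • residueD k x := by
  have hx0 : x • residueD k a = 0 := by
    rw [← algebraMap_smul (ResidueField A), ResidueField.algebraMap_eq,
      (residue_eq_zero_iff x).mpr hx, zero_smul]
  rw [Derivation.leibniz, hx0, add_zero, ← algebraMap_smul (ResidueField A),
    ResidueField.algebraMap_eq]

theorem exists_residue_eq_residueD_notMem
    {W : Submodule (ResidueField A) (ResidueField A ⊗[A] Ω[A⁄k])} {x : A}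
    (hx : x ∈ maximalIdeal A) (hxW : residueD k x ∉ W) (α : ResidueField A) :
    ∃ a, residue A a = α ∧ residueD k a ∉ W := by
  obtain ⟨b, rfl⟩ := residue_surjective α
  by_cases hb : residueD k b ∈ W
  · refine ⟨b + x, by rw [map_add, (residue_eq_zero_iff x).mpr hx, add_zero], fun h => hxW ?_⟩
    rwa [map_add, Submodule.add_mem_iff_right W hb] at h
  · exact ⟨b, rfl, hb⟩

end ResidueDifferential

section Neighborhood

variable {k : Type v} {A : Type u} [Field k] [CommRing A] [IsLocalRing A] [Algebra k A]

theorem formallyEtale_mvPolynomial_of_residueD [Algebra.EssFiniteType k A]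
    [Algebra.FormallySmooth k A] {σ : Type u} [Algebra (MvPolynomial σ k) A]
    [IsScalarTower k (MvPolynomial σ k) A]
    (hli : LinearIndependent (ResidueField A)
      fun i => residueD k (algebraMap (MvPolynomial σ k) A (.X i)))
    (hspan : Submodule.span (ResidueField A)
      (Set.range fun i => residueD k (algebraMap (MvPolynomial σ k) A (.X i))) = ⊤) :
    Algebra.FormallyEtale (MvPolynomial σ k) A := by
  have hbij : Function.Bijective (Finsupp.linearCombination A
      fun i => D k A (algebraMap (MvPolynomial σ k) A (.X i))) := by
    refine Module.IsLocalRing.linearCombination_bijective_of_flat _ ⟨hli, ?_⟩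
    rw [← LinearMap.range_eq_top, Finsupp.range_linearCombination]
    exact hspan
  exact formallyEtale_mvPolynomial_of_basis (.ofRepr (LinearEquiv.ofBijective _ hbij).symm)
    fun i => by simp

/- `t` lifts a separating transcendence basis and a primitive element `α` of the residue field.
A lift of `α` whose differential depends on the others is moved by some `x` of the maximal ideal
with nonzero differential; such `x` exists because `A` is not a field. -/
theorem exists_residueD_basis_adjoin_eq_top [PerfectField k] [Algebra.EssFiniteType k A]
    [Algebra.FormallySmooth k A] (hA : ¬ IsField A) :
    ∃ t : Set A, (LinearIndependent (ResidueField A) fun a : t => residueD k (a : A)) ∧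
      Submodule.span (ResidueField A) (Set.range fun a : t => residueD k (a : A)) = ⊤ ∧
      IntermediateField.adjoin k (Set.range fun a : t => residue A a) = ⊤ := by
  have : IsNoetherianRing A := Algebra.EssFiniteType.isNoetherianRing k A
  have : Algebra.EssFiniteType k (ResidueField A) :=
    have : Algebra.EssFiniteType A (ResidueField A) :=
      inferInstanceAs (Algebra.EssFiniteType A (A ⧸ maximalIdeal A))
    .comp k A _
  obtain ⟨s, α, hs, hα⟩ := exists_linearIndependent_D_adjoin_insert_eq_top k (ResidueField A)
  let l := Function.surjInv (residue_surjective (R := A))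
  have hl (x : ResidueField A) : residue A (l x) = x := Function.surjInv_eq _ x
  have hcomp : LinearIndependent (ResidueField A)
      (mapBaseChange k A (ResidueField A) ∘ fun i : s => residueD k (l i)) := by
    convert hs with i
    exact (mapBaseChange_residueD k _).trans (by rw [hl])
  obtain ⟨x, hxm, hx2⟩ := exists_mem_maximalIdeal_notMem_sq hA
  have hx : residueD k x ≠ 0 := fun hx0 => hx2 (mem_maximalIdeal_sq_of_residueD_eq_zero k hxm hx0)
  have hx' : residueD k x ∉ Submodule.span _ (Set.range fun i : s => residueD k (l i)) :=
    fun hmem => hx <| (Submodule.range_ker_disjoint hcomp).le_bot ⟨hmem, by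
      rw [SetLike.mem_coe, LinearMap.mem_ker, mapBaseChange_residueD,
        (residue_eq_zero_iff x).mpr hxm, map_zero]⟩
  obtain ⟨a, rfl, ha⟩ := exists_residue_eq_residueD_notMem hxm hx' α
  have hrange : (Set.range fun i : s => residueD k (l i)) = residueD k '' (l '' s) := by
    rw [Set.image_image, Set.image_eq_range]
  rw [hrange] at ha
  obtain ⟨t, -, hst, hspan, hli⟩ := exists_linearIndepOn_extension
    (((LinearIndepOn.image_of_comp l (residueD k) hcomp.of_comp).insert ha)) (Set.subset_univ _)
  refine ⟨t, hli, ?_, ?_⟩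
  · rw [eq_top_iff, ← span_range_residueD k, Submodule.span_le, ← Set.image_univ,
      ← Set.image_eq_range]
    exact hspan
  · rw [eq_top_iff, ← hα, ← Set.image_eq_range]
    refine IntermediateField.adjoin.mono _ _ _ (Set.insert_subset ?_ fun w hw => ?_)
    · exact ⟨a, hst (Set.mem_insert _ _), rfl⟩
    · exact ⟨l w, hst (Set.mem_insert_of_mem _ ⟨w, hw, rfl⟩), hl w⟩

theorem exists_isAnalyticIso_localization_mvPolynomial [PerfectField k] [Algebra.EssFiniteType k A]
    [Algebra.FormallySmooth k A] (hA : ¬ IsField A) :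
    ∃ (σ : Type u) (_ : Finite σ) (q : Ideal (MvPolynomial σ k)) (_ : q.IsPrime)
      (_ : Algebra (Localization.AtPrime q) A) (h : Localization.AtPrime q),
        FaithfulSMul (Localization.AtPrime q) A ∧
        algebraMap _ A h ∈ maximalIdeal A ∧ IsAnalyticIso A h := by
  obtain ⟨t, hli, hspan, htop⟩ := exists_residueD_basis_adjoin_eq_top (k := k) hA
  let : Algebra (MvPolynomial t k) A := (MvPolynomial.aeval ((↑) : t → A)).toAlgebra
  have : IsScalarTower k (MvPolynomial t k) A :=
    .of_algebraMap_eq fun x => ((MvPolynomial.aeval ((↑) : t → A)).commutes x).symm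
  have hX (i : t) : algebraMap (MvPolynomial t k) A (.X i) = i := MvPolynomial.aeval_X _ i
  have : Finite t := hli.finite
  have : Algebra.FormallyEtale (MvPolynomial t k) A :=
    formallyEtale_mvPolynomial_of_residueD (by simpa only [hX]) (by simpa only [hX])
  have : Algebra.EssFiniteType (MvPolynomial t k) A := .of_comp k _ A
  refine ⟨t, inferInstance, exists_isAnalyticIso_localization fun x => ?_⟩
  obtain ⟨p, s, rfl⟩ := (IntermediateField.mem_adjoin_range_iff k _ x).mp
    (htop ▸ IntermediateField.mem_top)
  exact ⟨p, s, congrArg₂ (· / ·) (MvPolynomial.aeval_algebraMap_apply _ _ p)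
    (MvPolynomial.aeval_algebraMap_apply _ _ s)⟩

end Neighborhood

end StructureTheorem

section SmoothLocal

open MvPolynomial

theorem isProjectiveFree_mvPolynomial_localization_atPrime {k σ τ : Type*} [Field k]
    (q : Ideal (MvPolynomial σ k)) [q.IsPrime] :
    IsProjectiveFree (MvPolynomial τ (Localization.AtPrime q)) :=
  .mvPolynomial_of_isLocalization q.primeCompl q.primeCompl_le_nonZeroDivisors .of_isLocalRing
    ((isProjectiveFree_mvPolynomial (τ ⊕ σ) k).of_equiv (sumAlgEquiv k τ σ).toRingEquiv)

theorem height_maximalIdeal_localization_atPrime_lt {A : Type*} [CommRing A] [IsLocalRing A]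
    [IsNoetherianRing A] {p : Ideal A} [p.IsPrime] (hp : p < maximalIdeal A) :
    (maximalIdeal (Localization.AtPrime p)).height < (maximalIdeal A).height := by
  have hheight : (maximalIdeal (Localization.AtPrime p)).height = p.height := by
    have hdim := IsLocalRing.maximalIdeal_height_eq_ringKrullDim (R := Localization.AtPrime p)
    rw [IsLocalization.AtPrime.ringKrullDim_eq_height p (Localization.AtPrime p)] at hdim
    exact_mod_cast hdim
  exact hheight ▸ Ideal.height_strict_mono_of_isPrime_of_isPrime hp

theorem maximalIdeal_le_radical_quillenIdeal {A τ ι : Type*} [CommRing A] [IsDomain A]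
    [IsLocalRing A] [Fintype ι] {E : Matrix ι ι (MvPolynomial τ A)}
    (hE : IsIdempotentElem E)
    (h : ∀ (p : Ideal A) [p.IsPrime], p < maximalIdeal A →
      IsProjectiveFree (MvPolynomial τ (Localization.AtPrime p))) :
    maximalIdeal A ≤ (quillenIdeal hE).radical := by
  classical
  rw [Ideal.radical_eq_sInf]
  rintro a ha
  rw [Ideal.mem_sInf]
  rintro p ⟨hEp, hp⟩
  by_contra hap
  have hpA : p < maximalIdeal A :=
    (IsLocalRing.le_maximalIdeal hp.ne_top).lt_of_ne fun hpA => hap (hpA ▸ ha)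
  obtain ⟨s, hs, hsE⟩ := ShiftEquiv.exists_mem_of_isLocalization p.primeCompl
    p.primeCompl_le_nonZeroDivisors (L := Localization.AtPrime p)
    ((h p hpA).hasFreeImage (isIdempotentElem_map hE _))
  exact hs (hEp hsE)

theorem hasFreeImage_map_of_mem_radical_quillenIdeal {A S τ ι : Type*} [CommRing A]
    [IsLocalRing A] [CommRing S] [Algebra A S] [Fintype ι]
    {E : Matrix ι ι (MvPolynomial τ A)} (hE : IsIdempotentElem E) {a : A}
    (ha : a ∈ (quillenIdeal hE).radical) [IsLocalization.Away a S] :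
    HasFreeImage (E.map (map (algebraMap A S))) := by
  classical
  obtain ⟨N, hN⟩ := ha
  have hunit : IsUnit (algebraMap A S (a ^ N)) := by
    rw [map_pow]
    exact (IsLocalization.Away.algebraMap_isUnit a).pow N
  have hconst := isIdempotentElem_map hE (constantCoeff (R := A) (σ := τ))
  exact (ShiftEquiv.map_algebraMap hN hunit).hasFreeImage
    ((IsProjectiveFree.of_isLocalRing.hasFreeImage hconst).map _)

theorem IsAnalyticIso.isProjectiveFree_mvPolynomial {A B τ : Type*} [CommRing A] [CommRing B]
    [IsDomain A] [IsLocalRing A] [Algebra B A] [FaithfulSMul B A] {h : B}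
    (H : IsAnalyticIso A h) (hm : algebraMap B A h ∈ maximalIdeal A)
    (hB : IsProjectiveFree (MvPolynomial τ B))
    (hA : ∀ (p : Ideal A) [p.IsPrime], p < maximalIdeal A →
      IsProjectiveFree (MvPolynomial τ (Localization.AtPrime p))) :
    IsProjectiveFree (MvPolynomial τ A) := by
  by_cases hh : h = 0
  · have hbij : Function.Bijective (algebraMap B A) := by
      refine ⟨FaithfulSMul.algebraMap_injective B A, fun a => ?_⟩
      obtain ⟨b, a', rfl⟩ := H.exists_eq_add a
      exact ⟨b, by rw [hh, zero_smul, add_zero]⟩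
    exact hB.of_equiv (mapEquiv τ (RingEquiv.ofBijective _ hbij))
  intro n E hE
  exact H.hasFreeImage_mvPolynomial (S := Localization.Away (algebraMap B A h)) hh hB hE
    (hasFreeImage_map_of_mem_radical_quillenIdeal hE
      (maximalIdeal_le_radical_quillenIdeal hE hA hm))

theorem isProjectiveFree_mvPolynomial_of_formallySmooth (k : Type v) [Field k] [PerfectField k]
    (τ : Type*) (A : Type u) [CommRing A] [IsDomain A] [IsLocalRing A]
    [Algebra k A] [Algebra.EssFiniteType k A] [Algebra.FormallySmooth k A] :
    IsProjectiveFree (MvPolynomial τ A) := by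
  induction hn : (maximalIdeal A).height using WellFoundedLT.induction generalizing A with
  | ind n ih =>
    by_cases hA : IsField A
    · let := hA.toField
      exact isProjectiveFree_mvPolynomial τ A
    obtain ⟨σ, _, q, _, _, h, _, hm, H⟩ :=
      exists_isAnalyticIso_localization_mvPolynomial (k := k) hA
    refine H.isProjectiveFree_mvPolynomial hm
      (isProjectiveFree_mvPolynomial_localization_atPrime q) fun p _ hp => ?_
    have : IsNoetherianRing A := Algebra.EssFiniteType.isNoetherianRing k A
    have : Algebra.EssFiniteType A (Localization.AtPrime p) := .of_isLocalization _ p.primeCompl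
    have : Algebra.EssFiniteType k (Localization.AtPrime p) := .comp k A _
    have : Algebra.FormallySmooth A (Localization.AtPrime p) := .of_isLocalization p.primeCompl
    have : Algebra.FormallySmooth k (Localization.AtPrime p) := .comp k A _
    exact ih _ (hn ▸ height_maximalIdeal_localization_atPrime_lt hp) _ rfl

end SmoothLocal

section Regular

variable {R : Type*} [CommRing R]

theorem exists_mem_maximalIdeal_notMem_sq_notMem_minimalPrimes [IsRegularLocalRing R]
    (hR : ¬ IsField R) :
    ∃ x ∈ maximalIdeal R, x ∉ maximalIdeal R ^ 2 ∧ ∀ p ∈ minimalPrimes R, x ∉ p := by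
  have hmin (p) (hp : p ∈ minimalPrimes R) : ¬ maximalIdeal R ≤ p := fun hle => hR <| by
    have := hp.1.1
    have hpm : p = maximalIdeal R := (IsLocalRing.le_maximalIdeal_of_isPrime p).antisymm hle
    have hdim := IsRegularLocalRing.spanFinrank_maximalIdeal (R := R)
    rw [← IsLocalRing.maximalIdeal_height_eq_ringKrullDim, ← hpm,
      Ideal.height_eq_zero_iff.mpr hp, hpm] at hdim
    rw [IsLocalRing.isField_iff_maximalIdeal_eq,
      ← Submodule.spanFinrank_eq_zero_iff_eq_bot (IsNoetherian.noetherian _)]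
    exact_mod_cast hdim
  by_contra! hcon
  have hsub : (maximalIdeal R : Set R) ⊆
      ⋃ p ∈ insert (maximalIdeal R ^ 2) (minimalPrimes R), (p : Set R) := fun x hx => by
    rw [Set.biUnion_insert]
    by_cases hx2 : x ∈ maximalIdeal R ^ 2
    · exact .inl hx2
    · exact .inr (Set.mem_biUnion (hcon x hx hx2).choose_spec.1 (hcon x hx hx2).choose_spec.2)
  obtain ⟨p, hp, hle⟩ := (Ideal.subset_union_prime_finite
    ((minimalPrimes.finite_of_isNoetherianRing R).insert _) (f := id) (maximalIdeal R ^ 2)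
    (maximalIdeal R ^ 2) fun p hp hpm _ => (hp.resolve_left hpm).1.1).mp hsub
  rcases hp with rfl | hp
  · obtain ⟨x, hx, hx2⟩ := exists_mem_maximalIdeal_notMem_sq hR
    exact hx2 (hle hx)
  · exact hmin p hp hle

-- A minimal generator of the maximal ideal can be exchanged for `x`.
theorem spanFinrank_maximalIdeal_quotient_span_singleton_lt [IsLocalRing R] [IsNoetherianRing R]
    {x : R} (hx : x ∈ maximalIdeal R) (hx2 : x ∉ maximalIdeal R ^ 2)
    [IsLocalRing (R ⧸ Ideal.span {x})] :
    (maximalIdeal (R ⧸ Ideal.span {x})).spanFinrank < (maximalIdeal R).spanFinrank := by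
  classical
  obtain ⟨G, hcard, hspan⟩ :=
    (IsNoetherian.noetherian (maximalIdeal R)).exists_span_finset_card_eq_spanFinrank
  have hG : ∀ g ∈ G, g ∈ maximalIdeal R := fun g hg => hspan ▸ Submodule.subset_span hg
  obtain ⟨c, -, hc⟩ := Submodule.mem_span_finset.mp (hspan.symm ▸ hx)
  obtain ⟨g, hg, hgc⟩ : ∃ g ∈ G, IsUnit (c g) := by
    by_contra! hnon
    refine hx2 (hc ▸ sum_mem fun g hg => ?_)
    rw [sq]
    exact Ideal.mul_mem_mul ((mem_maximalIdeal _).mpr (hnon g hg)) (hG g hg)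
  let π := Ideal.Quotient.mk (Ideal.span {x})
  have hπg : π g ∈ Ideal.span (π '' (G.erase g : Finset R)) := by
    have hsum : π (∑ i ∈ G, c i • i) = 0 := (congrArg π hc).trans
      (Ideal.Quotient.eq_zero_iff_mem.mpr (Ideal.mem_span_singleton_self x))
    rw [← Finset.add_sum_erase _ _ hg, map_add, smul_eq_mul, map_mul, map_sum] at hsum
    rw [← Ideal.unit_mul_mem_iff_mem _ (hgc.map π), eq_neg_of_add_eq_zero_left hsum]
    refine neg_mem (sum_mem fun i hi => ?_)
    rw [smul_eq_mul, map_mul]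
    exact Ideal.mul_mem_left _ _ (Ideal.subset_span ⟨i, hi, rfl⟩)
  have hmax : maximalIdeal (R ⧸ Ideal.span {x}) = Ideal.span (π '' (G.erase g : Finset R)) := by
    rw [← map_maximalIdeal_of_surjective π Ideal.Quotient.mk_surjective, ← hspan]
    refine (Ideal.map_span π _).trans (le_antisymm (Ideal.span_le.mpr ?_) (Ideal.span_mono ?_))
    · rintro _ ⟨i, hi, rfl⟩
      by_cases hig : i = g
      · exact hig ▸ hπg
      · exact Ideal.subset_span ⟨i, Finset.mem_erase.mpr ⟨hig, hi⟩, rfl⟩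
    · exact Set.image_mono (Finset.coe_subset.mpr (Finset.erase_subset g G))
  calc (maximalIdeal (R ⧸ Ideal.span {x})).spanFinrank
      ≤ (π '' (G.erase g : Finset R)).ncard :=
        hmax ▸ Submodule.spanFinrank_span_le_ncard_of_finite ((Finset.finite_toSet _).image _)
    _ ≤ (G.erase g).card := (Set.ncard_image_le (Finset.finite_toSet _)).trans_eq
        (Set.ncard_coe_finset _)
    _ < (maximalIdeal R).spanFinrank := hcard ▸ Finset.card_erase_lt_of_mem hg

theorem isLocalRing_quotient_of_le_maximalIdeal [IsLocalRing R] {I : Ideal R}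
    (hI : I ≤ maximalIdeal R) : IsLocalRing (R ⧸ I) :=
  have : Nontrivial (R ⧸ I) := Ideal.Quotient.nontrivial_iff.mpr
    (ne_top_of_le_ne_top (maximalIdeal.isMaximal R).ne_top hI)
  .of_surjective' (Ideal.Quotient.mk I) Ideal.Quotient.mk_surjective

theorem isRegularLocalRing_quotient_span_singleton [IsRegularLocalRing R] {x : R}
    (hx : x ∈ maximalIdeal R) (hx2 : x ∉ maximalIdeal R ^ 2) :
    IsRegularLocalRing (R ⧸ Ideal.span {x}) := by
  have := isLocalRing_quotient_of_le_maximalIdeal ((Ideal.span_singleton_le_iff_mem _).mpr hx)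
  refine .of_spanFinrank_maximalIdeal_le _ ?_
  have hlt := spanFinrank_maximalIdeal_quotient_span_singleton_lt hx hx2
  have hdim : (maximalIdeal R).spanFinrank ≤ ringKrullDim (R ⧸ Ideal.span {x}) + 1 := by
    rw [IsRegularLocalRing.spanFinrank_maximalIdeal,
      ← IsLocalRing.maximalIdeal_height_eq_ringKrullDim]
    exact Ideal.height_le_ringKrullDim_quotient_add_one hx
  have : (((maximalIdeal (R ⧸ Ideal.span {x})).spanFinrank + 1 : ℕ) : WithBot ℕ∞) ≤ _ :=
    (Nat.cast_le.mpr (Nat.succ_le_of_lt hlt)).trans hdim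
  rw [Nat.cast_succ] at this
  exact ENat.WithBot.add_le_add_one_right_iff.mp this

theorem eq_bot_of_le_span_singleton [IsLocalRing R] [IsNoetherianRing R] {p : Ideal R} [p.IsPrime]
    {x : R} (hx : x ∈ maximalIdeal R) (hxp : x ∉ p) (hp : p ≤ Ideal.span {x}) : p = ⊥ := by
  refine Submodule.eq_bot_of_le_smul_of_le_jacobson_bot (maximalIdeal R) p
    (IsNoetherian.noetherian _) (fun y hy => ?_) (IsLocalRing.maximalIdeal_le_jacobson _)
  obtain ⟨z, rfl⟩ := Ideal.mem_span_singleton.mp (hp hy)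
  have hz : z ∈ p := (Ideal.IsPrime.mem_or_mem ‹_› hy).resolve_left hxp
  exact Submodule.smul_mem_smul hx hz

theorem isDomain_of_isRegularLocalRing (R : Type*) [CommRing R] [IsRegularLocalRing R] :
    IsDomain R := by
  induction hd : (maximalIdeal R).spanFinrank using Nat.strong_induction_on generalizing R with
  | h d ih =>
    by_cases hR : IsField R
    · exact hR.isDomain
    obtain ⟨x, hx, hx2, hxp⟩ := exists_mem_maximalIdeal_notMem_sq_notMem_minimalPrimes hR
    have := isRegularLocalRing_quotient_span_singleton hx hx2
    have : IsDomain (R ⧸ Ideal.span {x}) := ih _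
      (hd ▸ spanFinrank_maximalIdeal_quotient_span_singleton_lt hx hx2) _ rfl
    have : (Ideal.span {x}).IsPrime := (Ideal.Quotient.isDomain_iff_prime _).mp this
    obtain ⟨p, hp, hpx⟩ := Ideal.exists_minimalPrimes_le (I := ⊥) (J := Ideal.span {x}) bot_le
    have : p.IsPrime := hp.1.1
    have hbot := eq_bot_of_le_span_singleton hx (hxp p hp) hpx
    subst hbot
    exact IsDomain.of_bot_isPrime R

theorem spanFinrank_maximalIdeal_le_of_ker_le_sq {A : Type*} [CommRing A] [IsLocalRing R]
    [IsNoetherianRing R] [IsLocalRing A] {f : R →+* A} (hf : Function.Surjective f)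
    (hker : RingHom.ker f ≤ maximalIdeal R ^ 2) :
    (maximalIdeal R).spanFinrank ≤ (maximalIdeal A).spanFinrank := by
  have : IsNoetherianRing A := isNoetherianRing_of_surjective R A f hf
  have hfg := (maximalIdeal A).fg_of_isNoetherianRing
  set L := Function.surjInv hf '' (maximalIdeal A).generators
  have hfin : (maximalIdeal A).generators.Finite := Submodule.FG.finite_generators hfg
  have hmap : (Ideal.span L).map f = maximalIdeal A := by
    rw [Ideal.map_span, ← Set.image_comp, (Function.rightInverse_surjInv hf).comp_eq_id,
      Set.image_id]
    exact (maximalIdeal A).span_generators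
  have := IsLocalHom.of_surjective f hf
  have hle : maximalIdeal R ≤ Ideal.span L ⊔ maximalIdeal R • maximalIdeal R := by
    rw [smul_eq_mul, ← sq]
    refine le_trans ?_ (sup_le_sup_left hker _)
    rw [RingHom.ker_eq_comap_bot, ← Ideal.comap_map_of_surjective f hf, hmap, maximalIdeal_comap]
  have hspan : maximalIdeal R ≤ Ideal.span L := Submodule.le_of_le_smul_of_le_jacobson_bot
    (IsNoetherian.noetherian _) (maximalIdeal_le_jacobson _) hle
  have hL : Ideal.span L ≤ maximalIdeal R := by
    rw [← maximalIdeal_comap f, ← Ideal.map_le_iff_le_comap, hmap]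
  calc (maximalIdeal R).spanFinrank
      ≤ L.ncard :=
        hspan.antisymm hL ▸ Submodule.spanFinrank_span_le_ncard_of_finite (hfin.image _)
    _ ≤ (maximalIdeal A).generators.ncard := Set.ncard_image_le hfin
    _ = (maximalIdeal A).spanFinrank := Submodule.FG.generators_ncard hfg

theorem injective_of_ker_le_sq_maximalIdeal {A : Type*} [CommRing A] [IsLocalRing R]
    [IsNoetherianRing R] [IsRegularLocalRing A] {f : R →+* A} (hf : Function.Surjective f)
    (hker : RingHom.ker f ≤ maximalIdeal R ^ 2) : Function.Injective f := by
  have hle : (maximalIdeal R).spanFinrank ≤ ringKrullDim A := by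
    rw [← IsRegularLocalRing.spanFinrank_maximalIdeal]
    exact Nat.cast_le.mpr (spanFinrank_maximalIdeal_le_of_ker_le_sq hf hker)
  have : IsRegularLocalRing R :=
    .of_spanFinrank_maximalIdeal_le _ (hle.trans (ringKrullDim_le_of_surjective f hf))
  have := isDomain_of_isRegularLocalRing R
  refine (injective_iff_map_eq_zero f).mpr fun x hx => by_contra fun hx0 => ?_
  have hdim := ringKrullDim_succ_le_of_surjective f hf (mem_nonZeroDivisors_of_ne_zero hx0) hx
  rw [← IsRegularLocalRing.spanFinrank_maximalIdeal,
    ← IsRegularLocalRing.spanFinrank_maximalIdeal] at hdim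
  rw [← IsRegularLocalRing.spanFinrank_maximalIdeal] at hle
  exact absurd (hdim.trans hle) (by norm_cast; omega)

end Regular

section RegularImpliesSmooth

open TensorProduct KaehlerDifferential

section Residue

variable {k A : Type*} [CommRing k] [CommRing A] [IsLocalRing A] [Algebra k A]

theorem exists_mem_span_residueD_eq {s : Set A} (hs : s ⊆ maximalIdeal A)
    {w : ResidueField A ⊗[A] Ω[A⁄k]}
    (hw : w ∈ Submodule.span (ResidueField A) (residueD k '' s)) :
    ∃ y ∈ Ideal.span s, residueD k y = w := by
  induction hw using Submodule.span_induction with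
  | mem w hw =>
    obtain ⟨y, hy, rfl⟩ := hw
    exact ⟨y, Ideal.subset_span hy, rfl⟩
  | zero => exact ⟨0, zero_mem _, map_zero _⟩
  | add w₁ w₂ _ _ h₁ h₂ =>
    obtain ⟨y₁, hy₁, rfl⟩ := h₁
    obtain ⟨y₂, hy₂, rfl⟩ := h₂
    exact ⟨y₁ + y₂, add_mem hy₁ hy₂, map_add _ _ _⟩
  | smul c w _ h =>
    obtain ⟨a, rfl⟩ := residue_surjective c
    obtain ⟨y, hy, rfl⟩ := h
    exact ⟨a * y, Ideal.mul_mem_left _ a hy, residueD_mul_of_mem a (Ideal.span_le.mpr hs hy)⟩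

theorem le_span_sup_maximalIdeal_sq [Algebra.FormallySmooth k A]
    [Algebra.FormallySmooth k (ResidueField A)] {I : Ideal A} (hI : I ≤ maximalIdeal A)
    {s : Set A} (hs : s ⊆ I)
    (hspan : ∀ z ∈ I, residueD k z ∈ Submodule.span (ResidueField A) (residueD k '' s)) :
    I ≤ Ideal.span s ⊔ maximalIdeal A ^ 2 := fun z hz => by
  obtain ⟨y, hy, hyz⟩ := exists_mem_span_residueD_eq (hs.trans hI) (hspan z hz)
  refine (sub_add_cancel z y) ▸ add_mem (Ideal.mem_sup_right ?_) (Ideal.mem_sup_left hy)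
  refine mem_maximalIdeal_sq_of_residueD_eq_zero k (sub_mem (hI hz) (hI ?_)) ?_
  · exact Ideal.span_le.mpr hs hy
  · rw [map_sub, hyz, sub_self]

theorem formallySmooth_of_ker_eq_span [Algebra.FormallySmooth k A] [Module.Finite A Ω[A⁄k]]
    {S : Type*} [CommRing S] [IsLocalRing S] [Algebra k S] [Algebra A S] [IsScalarTower k A S]
    [Algebra S (ResidueField A)] [IsScalarTower A S (ResidueField A)]
    (hS : Function.Surjective (algebraMap A S)) {s : Set A} (hfin : s.Finite)
    (hker : RingHom.ker (algebraMap A S) = Ideal.span s)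
    (hli : LinearIndepOn (ResidueField A) (residueD k) s) : Algebra.FormallySmooth k S := by
  have : Module.Free A Ω[A⁄k] := Module.free_of_flat_of_isLocalRing
  refine (Algebra.FormallySmooth.iff_injective_cotangentComplexBaseChange A (ResidueField A)
    hS (by rw [hker]; exact Submodule.fg_span hfin) ?_).mpr ?_
  · have hsurj : Function.Surjective (algebraMap S (ResidueField A)) := by
      refine .of_comp (g := algebraMap A S) ?_
      rw [← RingHom.coe_comp, ← IsScalarTower.algebraMap_eq]
      exact residue_surjective
    exact (eq_maximalIdeal (RingHom.ker_isMaximal_of_surjective _ hsurj)).ge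
  · have hsub : s ⊆ RingHom.ker (algebraMap A S) := by
      rw [hker]
      exact Ideal.subset_span
    have hspan : Submodule.span A (Set.range (Set.inclusion hsub)) = ⊤ := by
      refine Submodule.map_injective_of_injective (Submodule.injective_subtype _) ?_
      rw [Submodule.map_span, ← Set.range_comp, Submodule.map_subtype_top]
      exact (congrArg _ Subtype.range_coe).trans hker.symm
    have hcomp : (cotangentComplexBaseChange k S A (ResidueField A) ∘
        fun a => 1 ⊗ₜ Set.inclusion hsub a) = fun a : s => residueD k (a : A) := funext fun a => by
      rw [Function.comp_apply, cotangentComplexBaseChange_tmul, one_smul, kerToTensor_apply]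
      rfl
    have hdisj := Submodule.range_ker_disjoint
      (hcomp.symm ▸ hli.linearIndependent : LinearIndependent (ResidueField A) (_ ∘ _))
    rw [span_range_one_tmul _ hspan, top_disjoint] at hdisj
    exact LinearMap.ker_eq_bot.mp hdisj

theorem formallySmooth_quotient_span [Algebra.FormallySmooth k A] [Module.Finite A Ω[A⁄k]]
    {s : Set A} (hfin : s.Finite) (hs : s ⊆ maximalIdeal A)
    (hli : LinearIndepOn (ResidueField A) (residueD k) s) :
    Algebra.FormallySmooth k (A ⧸ Ideal.span s) := by
  have hle : Ideal.span s ≤ maximalIdeal A := Ideal.span_le.mpr hs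
  have := isLocalRing_quotient_of_le_maximalIdeal hle
  let : Algebra (A ⧸ Ideal.span s) (ResidueField A) := (Ideal.Quotient.factor hle).toAlgebra
  have : IsScalarTower A (A ⧸ Ideal.span s) (ResidueField A) := .of_algebraMap_eq fun _ => rfl
  exact formallySmooth_of_ker_eq_span Ideal.Quotient.mk_surjective hfin Ideal.mk_ker hli

end Residue

theorem exists_surjective_localization_mvPolynomial (k : Type v) (A : Type u) [CommRing k]
    [CommRing A] [IsLocalRing A] [Algebra k A] [Algebra.EssFiniteType k A] :
    ∃ (σ : Type u) (_ : Finite σ) (q : Ideal (MvPolynomial σ k)) (_ : q.IsPrime)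
      (f : Localization.AtPrime q →ₐ[k] A), Function.Surjective f := by
  obtain ⟨σ, hσ⟩ := (Algebra.essFiniteType_iff k A).mp inferInstance
  let φ : MvPolynomial σ k →ₐ[k] A := MvPolynomial.aeval ((↑) : σ → A)
  have hφ {x : A} (hx : x ∈ Algebra.adjoin k (σ : Set A)) : ∃ p, φ p = x := by
    rwa [← Subtype.range_coe (s := (σ : Set A)), Algebra.adjoin_range_eq_range_aeval] at hx
  let q := (maximalIdeal A).comap φ
  have hunit (y : q.primeCompl) : IsUnit (φ y) := not_not.mp y.2
  refine ⟨σ, inferInstance, q, inferInstance, IsLocalization.liftAlgHom hunit,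
    (IsLocalization.lift_surjective_iff _).mpr fun a => ?_⟩
  obtain ⟨t, ht, htu, hat⟩ := hσ a
  obtain ⟨p, rfl⟩ := hφ ht
  obtain ⟨p', hp'⟩ := hφ hat
  exact ⟨(p', ⟨p, not_not.mpr htu⟩), hp'.symm⟩

theorem formallySmooth_of_surjective {k P A : Type*} [Field k] [PerfectField k] [CommRing P]
    [IsLocalRing P] [Algebra k P] [Algebra.EssFiniteType k P] [Algebra.FormallySmooth k P]
    [CommRing A] [IsRegularLocalRing A] [Algebra k A] (f : P →ₐ[k] A)
    (hf : Function.Surjective f) : Algebra.FormallySmooth k A := by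
  have : IsNoetherianRing P := Algebra.EssFiniteType.isNoetherianRing k P
  have : Algebra.EssFiniteType k (ResidueField P) :=
    inferInstanceAs (Algebra.EssFiniteType k (P ⧸ maximalIdeal P))
  have hI : RingHom.ker f ≤ maximalIdeal P := le_maximalIdeal (RingHom.ker_ne_top f)
  obtain ⟨s, hsI, -, hspan, hli⟩ := exists_linearIndepOn_extension
    (linearIndepOn_empty (ResidueField P) (residueD k)) (Set.empty_subset (RingHom.ker f : Set P))
  have hle : Ideal.span s ≤ RingHom.ker f := Ideal.span_le.mpr hsI
  have := isLocalRing_quotient_of_le_maximalIdeal (hle.trans hI)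
  have hfin : s.Finite := Set.finite_coe_iff.mp hli.finite
  have := formallySmooth_quotient_span hfin (hsI.trans hI) hli
  let g : (P ⧸ Ideal.span s) →ₐ[k] A := Ideal.Quotient.liftₐ _ f hle
  have hg : Function.Surjective g := Ideal.Quotient.lift_surjective_of_surjective _ _ hf
  have hker : RingHom.ker (g : _ →+* A) ≤ maximalIdeal (P ⧸ Ideal.span s) ^ 2 := by
    refine (Ideal.ker_quotient_lift _ hle).trans_le ((Ideal.map_mono
      (le_span_sup_maximalIdeal_sq hI hsI fun z hz => hspan ⟨z, hz, rfl⟩)).trans_eq ?_)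
    rw [Ideal.map_sup, Ideal.map_quotient_self, bot_sup_eq, Ideal.map_pow,
      map_maximalIdeal_of_surjective _ Ideal.Quotient.mk_surjective]
  exact .of_equiv (AlgEquiv.ofBijective g ⟨injective_of_ker_le_sq_maximalIdeal hg hker, hg⟩)

theorem formallySmooth_of_isRegularLocalRing (k A : Type*) [Field k] [PerfectField k] [CommRing A]
    [IsRegularLocalRing A] [Algebra k A] [Algebra.EssFiniteType k A] :
    Algebra.FormallySmooth k A := by
  obtain ⟨σ, _, q, _, f, hf⟩ := exists_surjective_localization_mvPolynomial k A
  have : Algebra.FormallySmooth (MvPolynomial σ k) (Localization.AtPrime q) :=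
    .of_isLocalization q.primeCompl
  have : Algebra.FormallySmooth k (Localization.AtPrime q) := .comp k (MvPolynomial σ k) _
  exact formallySmooth_of_surjective f hf

theorem isProjectiveFree_mvPolynomial_of_isRegularLocalRing (k : Type v) (τ : Type*) (A : Type u)
    [Field k] [PerfectField k] [CommRing A] [IsRegularLocalRing A] [Algebra k A]
    [Algebra.EssFiniteType k A] : IsProjectiveFree (MvPolynomial τ A) := by
  have := isDomain_of_isRegularLocalRing A
  have := formallySmooth_of_isRegularLocalRing k A
  exact isProjectiveFree_mvPolynomial_of_formallySmooth k τ A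

end RegularImpliesSmooth

section FilteredColimit

/-- `L` is a filtered colimit of the rings `G i`: every element of `L` comes from some `G i`, and an
element of `G i` that vanishes in `L` vanishes in some later `G j`. Unlike `Ring.DirectLimit`, this
describes `L` up to isomorphism only, so it passes to polynomial rings. -/
structure IsFilteredColimit {ι : Type*} [Preorder ι] (G : ι → Type*) [∀ i, CommRing (G i)]
    (f : ∀ i j : ι, i ≤ j → G i →+* G j) (L : Type*) [CommRing L] (g : ∀ i, G i →+* L) : Prop where
  transition_transition : ∀ {i j l} (hij : i ≤ j) (hjl : j ≤ l) (a : G i),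
    f j l hjl (f i j hij a) = f i l (hij.trans hjl) a
  map_transition : ∀ {i j} (hij : i ≤ j) (a : G i), g j (f i j hij a) = g i a
  exists_map_eq : ∀ x, ∃ i a, g i a = x
  exists_transition_eq_zero : ∀ {i} {a : G i}, g i a = 0 → ∃ j, ∃ hij : i ≤ j, f i j hij a = 0

namespace IsFilteredColimit

variable {ι : Type*} [Preorder ι] [IsDirectedOrder ι] {G : ι → Type*} [∀ i, CommRing (G i)]
  {f : ∀ i j : ι, i ≤ j → G i →+* G j} {L : Type*} [CommRing L] {g : ∀ i, G i →+* L}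

theorem exists_forall_transition_eq_zero (H : IsFilteredColimit G f L g) {κ : Type*} [Finite κ]
    {i : ι} {a : κ → G i} (ha : ∀ t, g i (a t) = 0) :
    ∃ j, ∃ hij : i ≤ j, ∀ t, f i j hij (a t) = 0 := by
  have : Nonempty ι := ⟨i⟩
  choose j hij hj using fun t => H.exists_transition_eq_zero (ha t)
  obtain ⟨M, hM⟩ := Finite.exists_le j
  obtain ⟨N, hMN, hiN⟩ := exists_ge_ge M i
  refine ⟨N, hiN, fun t => ?_⟩
  rw [← H.transition_transition (hij t) ((hM t).trans hMN), hj, map_zero]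

variable [Nonempty ι]

theorem exists_forall_map_eq (H : IsFilteredColimit G f L g) {κ : Type*} [Finite κ] (x : κ → L) :
    ∃ i, ∃ a : κ → G i, ∀ t, g i (a t) = x t := by
  choose i a ha using fun t => H.exists_map_eq (x t)
  obtain ⟨M, hM⟩ := Finite.exists_le i
  exact ⟨M, fun t => f _ _ (hM t) (a t), fun t => by rw [H.map_transition, ha]⟩

theorem mvPolynomial (H : IsFilteredColimit G f L g) (τ : Type*) :
    IsFilteredColimit (fun i => MvPolynomial τ (G i)) (fun i j h => MvPolynomial.map (f i j h))
      (MvPolynomial τ L) (fun i => MvPolynomial.map (g i)) where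
  transition_transition hij hjl p := by
    ext m
    simp only [MvPolynomial.coeff_map, H.transition_transition]
  map_transition hij p := by
    ext m
    simp only [MvPolynomial.coeff_map, H.map_transition]
  exists_map_eq p := by
    obtain ⟨i, a, ha⟩ := H.exists_forall_map_eq fun m : p.support => p.coeff m
    refine ⟨i, ∑ m : p.support, MvPolynomial.monomial (m : τ →₀ ℕ) (a m), ?_⟩
    simp only [map_sum, MvPolynomial.map_monomial, ha]
    exact (Finset.sum_coe_sort p.support fun m => MvPolynomial.monomial m (p.coeff m)).trans
      p.support_sum_monomial_coeff
  exists_transition_eq_zero {i p} hp := by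
    obtain ⟨j, hij, hj⟩ := H.exists_forall_transition_eq_zero
      (a := fun m : p.support => p.coeff m) fun m => by
        rw [← MvPolynomial.coeff_map, hp, MvPolynomial.coeff_zero]
    refine ⟨j, hij, MvPolynomial.ext _ _ fun m => ?_⟩
    rw [MvPolynomial.coeff_map, MvPolynomial.coeff_zero]
    by_cases hm : m ∈ p.support
    · exact hj ⟨m, hm⟩
    · rw [MvPolynomial.notMem_support_iff.mp hm, map_zero]

theorem exists_isIdempotentElem_map_eq (H : IsFilteredColimit G f L g) {m : Type*} [Fintype m]
    {E : Matrix m m L} (hE : IsIdempotentElem E) :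
    ∃ i, ∃ F : Matrix m m (G i), IsIdempotentElem F ∧ F.map (g i) = E := by
  obtain ⟨i, a, ha⟩ := H.exists_forall_map_eq fun t : m × m => E t.1 t.2
  let F : Matrix m m (G i) := .of fun p q => a (p, q)
  have hF : F.map (g i) = E := Matrix.ext fun p q => ha (p, q)
  have hFE : (F * F - F).map (g i) = 0 := by
    rw [Matrix.map_sub _ (map_sub (g i)), Matrix.map_mul, hF, hE, sub_self]
  obtain ⟨j, hij, hj⟩ := H.exists_forall_transition_eq_zero
    (a := fun t : m × m => (F * F - F) t.1 t.2) fun t => congrFun₂ hFE t.1 t.2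
  refine ⟨j, F.map (f i j hij), ?_, ?_⟩
  · rw [IsIdempotentElem, ← sub_eq_zero, ← Matrix.map_mul,
      ← Matrix.map_sub _ (map_sub (f i j hij))]
    exact Matrix.ext fun p q => hj (p, q)
  · rw [← hF]
    exact Matrix.ext fun p q => H.map_transition hij _

theorem isProjectiveFree (H : IsFilteredColimit G f L g) (hG : ∀ i, IsProjectiveFree (G i)) :
    IsProjectiveFree L := by
  intro m E hE
  obtain ⟨i, F, hF, rfl⟩ := H.exists_isIdempotentElem_map_eq hE
  exact (hG i m F hF).map (g i)

end IsFilteredColimit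

theorem isFilteredColimit_directLimit {ι : Type*} [Preorder ι] [IsDirectedOrder ι] [Nonempty ι]
    (G : ι → Type*) [∀ i, CommRing (G i)] (f : ∀ i j : ι, i ≤ j → G i →+* G j)
    [DirectedSystem G fun i j h => f i j h] :
    IsFilteredColimit G f (Ring.DirectLimit G fun i j h => f i j h)
      (Ring.DirectLimit.of G fun i j h => f i j h) where
  transition_transition hij hjl a := DirectedSystem.map_map (f := fun i j h => f i j h) hij hjl a
  map_transition hij a := Ring.DirectLimit.of_f (f := fun i j h => f i j h) hij a
  exists_map_eq x := Ring.DirectLimit.exists_of x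
  exists_transition_eq_zero h := Ring.DirectLimit.of.zero_exact (f' := f) h

end FilteredColimit

theorem perfectField_of_forall_subfield_eq_top (k : Type*) [Field k]
    (hk : ∀ s : Subfield k, s = ⊤) : PerfectField k := by
  obtain ⟨p, _⟩ := ExpChar.exists k
  have : PerfectRing k p := .ofSurjective k p fun x =>
    (hk (frobenius k p).fieldRange ▸ Subfield.mem_top x : x ∈ (frobenius k p).fieldRange)
  exact PerfectRing.toPerfectField k p

theorem isRegularLocalRing_of_isRegularLocal {A : Type*} [CommRing A] [IsLocalRing A]
    (hA : IsRegularLocal A) : IsRegularLocalRing A := by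
  obtain ⟨_, s, hs, hdim⟩ := hA
  refine .of_spanFinrank_maximalIdeal_le _ ?_
  rw [← hdim, ← hs, Nat.cast_le, ← Set.ncard_coe_finset]
  exact Submodule.spanFinrank_span_le_ncard_of_finite s.finite_toSet

end BassQuillen

open BassQuillen

theorem bass_quillen_of_direct_limit_general (k : Type*) [Field k] [PerfectField k]
    {ι : Type*} [Preorder ι] [IsDirectedOrder ι] [Nonempty ι]
    (G : ι → Type*) [∀ i, CommRing (G i)] [∀ i, IsRegularLocalRing (G i)]
    [∀ i, Algebra k (G i)] [∀ i, Algebra.EssFiniteType k (G i)]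
    (f : ∀ i j : ι, i ≤ j → G i →ₐ[k] G j) [DirectedSystem G fun i j h => f i j h]
    {R : Type*} [CommRing R] (e : R ≃+* Ring.DirectLimit G fun i j h => f i j h)
    (τ : Type*) (P : Type*) [AddCommGroup P] [Module (MvPolynomial τ R) P]
    [Module.Finite (MvPolynomial τ R) P] [Module.Projective (MvPolynomial τ R) P] :
    Module.Free (MvPolynomial τ R) P := by
  have : DirectedSystem G fun i j h => (f i j h : G i →+* G j) :=
    inferInstanceAs (DirectedSystem G fun i j h => f i j h)
  have hG (i : ι) : IsProjectiveFree (MvPolynomial τ (G i)) :=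
    isProjectiveFree_mvPolynomial_of_isRegularLocalRing k τ (G i)
  have hlim : IsProjectiveFree (MvPolynomial τ (Ring.DirectLimit G fun i j h => f i j h)) :=
    ((isFilteredColimit_directLimit G fun i j h => (f i j h : G i →+* G j)).mvPolynomial
      τ).isProjectiveFree hG
  exact (hlim.of_equiv (MvPolynomial.mapEquiv τ e.symm)).free P

/-- If a regular local ring `R` containing a field is a filtered inductive limit of regular
local rings essentially of finite type over the prime field, then every finitely generated
projective module over `R[T₁,…,T_n]` is free (the Bass–Quillen conjecture for `R`). -/
theorem bass_quillen_of_direct_limit (R : Type u) [CommRing R] [IsLocalRing R]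
    (hReg : IsRegularLocal R)
    (k : Type u) [Field k] [Algebra k R] (hk : ∀ s : Subfield k, s = ⊤)
    (ι : Type v) [Preorder ι] [IsDirected ι (· ≤ ·)] [Nonempty ι]
    (G : ι → Type u) [∀ i, CommRing (G i)] [∀ i, IsLocalRing (G i)]
    (hGreg : ∀ i, IsRegularLocal (G i))
    [∀ i, Algebra k (G i)] (hGess : ∀ i, Algebra.EssFiniteType k (G i))
    (f : ∀ i j : ι, i ≤ j → G i →ₐ[k] G j)
    [DirectedSystem G fun i j h => f i j h]
    (e : R ≃+* Ring.DirectLimit G fun i j h => f i j h)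
    (n : ℕ) (P : Type u) [AddCommGroup P] [Module (MvPolynomial (Fin n) R) P]
    (hfin : Module.Finite (MvPolynomial (Fin n) R) P)
    (hproj : Module.Projective (MvPolynomial (Fin n) R) P) :
    Module.Free (MvPolynomial (Fin n) R) P := by
  have := perfectField_of_forall_subfield_eq_top k hk
  have (i : ι) := isRegularLocalRing_of_isRegularLocal (hGreg i)
  exact bass_quillen_of_direct_limit_general k G f e (Fin n) P
end

section
/- Let A be a commutative ring such that for all n, every finitely generated projective module over A[T₁,...,T_n] is extended from A. Let I ⊂ A[x₁,...,x_m] be a monomial ideal and B = A[x]/I. Then every finitely generated projective B-module is extended from a finitely generated projective A-module. -/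
open TensorProduct

universe u

/-!
A nilpotent thickening does not affect extendedness, because a base-change map over the reduced
ring lifts along a nilpotent quotient. So a monomial ideal may be replaced by its radical, which is
an intersection of finitely many ideals `P_T` generated by sets `T` of variables. These are
intersected one at a time through the Milnor squares

    R ⧸ (K ⊓ P_T) ⟶ R ⧸ P_T
          ↓            ↓
        R ⧸ K   ⟶  R ⧸ (K ⊔ P_T)

in `R = A[x]`. Setting the variables in `T` to zero preserves `K` and splits the bottom map over
`A`. Hence a form over `A` of the module on `R ⧸ P_T` can be transported to `R ⧸ K` compatibly with
the gluing along `R ⧸ (K ⊔ P_T)`, and the two glue.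
-/

universe v w

section SurjectiveBaseChange

variable {R R₁ R₂ R₀ S M P : Type*} [CommRing R] [CommRing R₁] [CommRing R₂] [CommRing R₀]
  [CommRing S] [Algebra R R₁] [Algebra R R₂] [Algebra R R₀] [Algebra R S]
  [AddCommGroup M] [Module R M] [AddCommGroup P] [Module R P] {f : P →ₗ[R] M}

theorem ker_tensorProductMk_of_surjective (hS : Function.Surjective (algebraMap R S)) :
    LinearMap.ker (TensorProduct.mk R S M 1) = RingHom.ker (algebraMap R S) • ⊤ := by
  let e : (R ⧸ RingHom.ker (algebraMap R S)) ≃ₐ[R] S :=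
    Ideal.quotientKerAlgEquivOfSurjective (f := Algebra.ofId R S) hS
  have he : TensorProduct.mk R S M 1 =
      e.toLinearEquiv.rTensor M ∘ₗ TensorProduct.mk R (R ⧸ RingHom.ker (algebraMap R S)) M 1 := by
    ext; simp
  rw [he, LinearEquiv.ker_comp, LinearMap.ker_tensorProductMk]

theorem one_tmul_eq_one_tmul_iff (hS : Function.Surjective (algebraMap R S)) {x y : M} :
    (1 : S) ⊗ₜ[R] x = 1 ⊗ₜ y ↔ x - y ∈ RingHom.ker (algebraMap R S) • (⊤ : Submodule R M) := by
  rw [← ker_tensorProductMk_of_surjective hS, LinearMap.sub_mem_ker_iff]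
  rfl

theorem smul_top_inf_smul_top_eq_bot [Module.Projective R P] {I J : Ideal R} (hIJ : I ⊓ J = ⊥) :
    I • (⊤ : Submodule R P) ⊓ J • ⊤ = ⊥ := by
  have apply_mem {K : Ideal R} {x : P} (hx : x ∈ K • (⊤ : Submodule R P)) (g : P →ₗ[R] R) :
      g x ∈ K := by
    have hK : K • ⊤ ≤ Submodule.comap g K :=
      Submodule.smul_le.mpr fun r hr n _ => by simpa using K.mul_mem_right (g n) hr
    exact hK hx
  refine (Submodule.eq_bot_iff _).mpr fun x ⟨hI, hJ⟩ => ?_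
  refine (Module.forall_dual_apply_eq_zero_iff R x).mp fun g => ?_
  rw [← Ideal.mem_bot, ← hIJ]
  exact ⟨apply_mem hI g, apply_mem hJ g⟩

theorem mem_smul_top_of_apply_eq_zero (hS : Function.Surjective (algebraMap R S))
    (hf : Function.Injective (f.baseChange S)) {x : P} (hx : f x = 0) :
    x ∈ RingHom.ker (algebraMap R S) • (⊤ : Submodule R P) := by
  rw [← ker_tensorProductMk_of_surjective hS, LinearMap.mem_ker]
  apply hf
  simp [hx]

theorem range_sup_smul_top_of_surjective_baseChange (hS : Function.Surjective (algebraMap R S))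
    (hf : Function.Surjective (f.baseChange S)) :
    LinearMap.range f ⊔ RingHom.ker (algebraMap R S) • ⊤ = ⊤ := by
  refine eq_top_iff.mpr fun m _ => ?_
  obtain ⟨z, hz⟩ := hf (1 ⊗ₜ m)
  obtain ⟨x, rfl⟩ := TensorProduct.mk_surjective R P S hS z
  rw [TensorProduct.mk_apply, LinearMap.baseChange_tmul, eq_comm, one_tmul_eq_one_tmul_iff hS] at hz
  exact Submodule.mem_sup.mpr ⟨f x, LinearMap.mem_range_self f x, _, hz, add_sub_cancel _ _⟩

theorem bijective_of_bijective_baseChange [Module.Projective R P]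
    (h₁ : Function.Surjective (algebraMap R R₁)) (h₂ : Function.Surjective (algebraMap R R₂))
    (hinf : RingHom.ker (algebraMap R R₁) ⊓ RingHom.ker (algebraMap R R₂) = ⊥)
    (hf₁ : Function.Bijective (f.baseChange R₁)) (hf₂ : Function.Bijective (f.baseChange R₂)) :
    Function.Bijective f := by
  set I₁ := RingHom.ker (algebraMap R R₁)
  set I₂ := RingHom.ker (algebraMap R R₂)
  constructor
  · refine (injective_iff_map_eq_zero f).mpr fun x hx => ?_
    rw [← Submodule.mem_bot R, ← smul_top_inf_smul_top_eq_bot hinf]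
    exact ⟨mem_smul_top_of_apply_eq_zero h₁ hf₁.1 hx, mem_smul_top_of_apply_eq_zero h₂ hf₂.1 hx⟩
  · have hI : I₁ * I₂ = ⊥ := le_bot_iff.mp (Ideal.mul_le_inf.trans hinf.le)
    rw [← LinearMap.range_eq_top, eq_top_iff]
    calc ⊤ = LinearMap.range f ⊔ I₁ • ⊤ :=
          (range_sup_smul_top_of_surjective_baseChange h₁ hf₁.2).symm
      _ = LinearMap.range f ⊔ I₁ • (LinearMap.range f ⊔ I₂ • ⊤) := by
          rw [range_sup_smul_top_of_surjective_baseChange h₂ hf₂.2]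
      _ = LinearMap.range f ⊔ I₁ • LinearMap.range f := by
          rw [Submodule.smul_sup, ← Submodule.mul_smul, hI, Submodule.bot_smul, sup_bot_eq]
      _ ≤ LinearMap.range f := sup_le le_rfl Submodule.smul_le_right

theorem surjective_of_surjective_baseChange [Module.Finite R M]
    (hS : Function.Surjective (algebraMap R S))
    (hker : RingHom.ker (algebraMap R S) ≤ (⊥ : Ideal R).jacobson)
    (hf : Function.Surjective (f.baseChange S)) : Function.Surjective f := by
  rw [← LinearMap.range_eq_top, eq_top_iff]
  exact Submodule.le_of_le_smul_of_le_jacobson_bot Module.Finite.fg_top hker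
    (range_sup_smul_top_of_surjective_baseChange hS hf).ge

theorem bijective_of_bijective_baseChange_of_le_jacobson [Module.Finite R M] [Module.Projective R M]
    [Module.Finite R P] (hS : Function.Surjective (algebraMap R S))
    (hker : RingHom.ker (algebraMap R S) ≤ (⊥ : Ideal R).jacobson)
    (hf : Function.Bijective (f.baseChange S)) : Function.Bijective f := by
  have hf_surj : Function.Surjective f := surjective_of_surjective_baseChange hS hker hf.2
  obtain ⟨g, hfg⟩ := Module.projective_lifting_property f LinearMap.id hf_surj
  have hfg_baseChange : f.baseChange S ∘ₗ g.baseChange S = LinearMap.id := by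
    rw [← LinearMap.baseChange_comp, hfg, LinearMap.baseChange_id]
  have hg_baseChange : Function.Surjective (g.baseChange S) := fun z =>
    ⟨f.baseChange S z, hf.1 (LinearMap.congr_fun hfg_baseChange _)⟩
  have hg : Function.Surjective g := surjective_of_surjective_baseChange hS hker hg_baseChange
  refine ⟨Function.LeftInverse.injective (g := g) fun x => ?_, hf_surj⟩
  obtain ⟨m, rfl⟩ := hg x
  exact congrArg g (LinearMap.congr_fun hfg m)

theorem exists_one_tmul_eq_and_one_tmul_eq
    (h₁ : Function.Surjective (algebraMap R R₁)) (h₂ : Function.Surjective (algebraMap R R₂))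
    (h₀ : Function.Surjective (algebraMap R R₀))
    (hsup : RingHom.ker (algebraMap R R₀) ≤
      RingHom.ker (algebraMap R R₁) ⊔ RingHom.ker (algebraMap R R₂))
    {x₁ x₂ : M} (hx : (1 : R₀) ⊗ₜ[R] x₁ = 1 ⊗ₜ x₂) :
    ∃ m : M, (1 : R₁) ⊗ₜ[R] m = 1 ⊗ₜ x₁ ∧ (1 : R₂) ⊗ₜ[R] m = 1 ⊗ₜ x₂ := by
  have hx_mem := Submodule.smul_mono_left (N := ⊤) hsup ((one_tmul_eq_one_tmul_iff h₀).mp hx)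
  rw [Submodule.sup_smul] at hx_mem
  obtain ⟨a, ha, b, hb, hab⟩ := Submodule.mem_sup.mp hx_mem
  refine ⟨x₁ - a, (one_tmul_eq_one_tmul_iff h₁).mpr ?_, (one_tmul_eq_one_tmul_iff h₂).mpr ?_⟩
  · simpa using ha
  · rwa [sub_right_comm, ← hab, add_sub_cancel_left]

end SurjectiveBaseChange

section IsBaseChange

variable {A B C D N N' M X Y : Type*} [CommRing A] [CommRing B] [CommRing C] [CommRing D]
  [Algebra A B] [Algebra A C] [Algebra B C] [IsScalarTower A B C]
  [AddCommGroup N] [Module A N] [AddCommGroup N'] [Module A N']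
  [AddCommGroup M] [Module A M] [Module B M] [IsScalarTower A B M]
  [AddCommGroup X] [Module A X] [Module C X] [IsScalarTower A C X]
  [AddCommGroup Y] [Module A Y] [Module C Y] [IsScalarTower A C Y]

theorem isBaseChange_iff_bijective_liftBaseChange {i : N →ₗ[A] M} :
    IsBaseChange B i ↔ Function.Bijective (i.liftBaseChange B) :=
  ⟨fun h => by
    have hi : i.liftBaseChange B = h.equiv.toLinearMap := by ext; simp
    exact hi ▸ h.equiv.bijective,
  fun h => IsBaseChange.of_equiv (LinearEquiv.ofBijective _ h) fun x => by simp⟩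

theorem bijective_of_isBaseChange {i : N →ₗ[A] X} (hi : IsBaseChange C i) {j : N →ₗ[A] Y}
    (hj : IsBaseChange C j) {f : X →ₗ[C] Y} (hf : ∀ n, f (i n) = j n) : Function.Bijective f := by
  have hf_equiv : f = (hi.equiv.symm ≪≫ₗ hj.equiv).toLinearMap :=
    hi.algHom_ext _ _ fun n => by simp [hf]
  exact hf_equiv ▸ LinearEquiv.bijective _

theorem bijective_baseChange_liftBaseChange {i : N →ₗ[A] M}
    (hi : IsBaseChange C ((TensorProduct.mk B C M 1).restrictScalars A ∘ₗ i)) :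
    Function.Bijective ((i.liftBaseChange B).baseChange C) :=
  bijective_of_isBaseChange
    ((TensorProduct.isBaseChange A N B).comp (TensorProduct.isBaseChange B (B ⊗[A] N) C)) hi
    fun n => by simp

theorem isBaseChange_of_le_jacobson [Module.Finite B M] [Module.Projective B M] [Module.Finite A N]
    (hC : Function.Surjective (algebraMap B C))
    (hker : RingHom.ker (algebraMap B C) ≤ (⊥ : Ideal B).jacobson) {i : N →ₗ[A] M}
    (hi : IsBaseChange C ((TensorProduct.mk B C M 1).restrictScalars A ∘ₗ i)) :
    IsBaseChange B i :=
  isBaseChange_iff_bijective_liftBaseChange.mpr <|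
    bijective_of_bijective_baseChange_of_le_jacobson hC hker
      (bijective_baseChange_liftBaseChange hi)

theorem isBaseChange_of_ker_inf_ker_eq_bot [Algebra A D] [Algebra B D] [IsScalarTower A B D]
    [Module.Projective A N] (hC : Function.Surjective (algebraMap B C))
    (hD : Function.Surjective (algebraMap B D))
    (hinf : RingHom.ker (algebraMap B C) ⊓ RingHom.ker (algebraMap B D) = ⊥) {i : N →ₗ[A] M}
    (hiC : IsBaseChange C ((TensorProduct.mk B C M 1).restrictScalars A ∘ₗ i))
    (hiD : IsBaseChange D ((TensorProduct.mk B D M 1).restrictScalars A ∘ₗ i)) :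
    IsBaseChange B i :=
  isBaseChange_iff_bijective_liftBaseChange.mpr <|
    bijective_of_bijective_baseChange hC hD hinf (bijective_baseChange_liftBaseChange hiC)
      (bijective_baseChange_liftBaseChange hiD)

theorem exists_isBaseChange_apply_one_tmul (R S T L : Type*) [CommRing R] [CommRing S] [CommRing T]
    [Algebra R S] [Algebra R T] [Algebra S T] [IsScalarTower R S T] [AddCommGroup L] [Module R L] :
    ∃ p : S ⊗[R] L →ₗ[S] T ⊗[R] L, IsBaseChange T p ∧ ∀ x : L, p (1 ⊗ₜ x) = 1 ⊗ₜ x := by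
  have hS := TensorProduct.isBaseChange R L S
  refine ⟨hS.lift (TensorProduct.mk R T L 1), hS.of_comp ?_, hS.lift_eq _⟩
  rw [hS.lift_comp]
  exact TensorProduct.isBaseChange R L T

theorem exists_isBaseChange_lift_of_section [Algebra A D] [Algebra C D] [IsScalarTower A C D]
    [Module D Y] [IsScalarTower A D Y] [IsScalarTower C D Y] (s : D →ₐ[A] C)
    (hs : ∀ d, algebraMap C D (s d) = d) {p : X →ₗ[C] Y} (hp : IsBaseChange D p)
    {i : N →ₗ[A] X} (hi : IsBaseChange C i) {j : N' →ₗ[A] Y} (hj : IsBaseChange D j) :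
    ∃ i' : N' →ₗ[A] X, IsBaseChange C i' ∧ ∀ n, p (i' n) = j n := by
  let _ : Algebra D C := s.toRingHom.toAlgebra
  let _ : Module D X := Module.compHom X s.toRingHom
  have : IsScalarTower A D C := .of_algebraMap_eq fun a => (s.commutes a).symm
  have : IsScalarTower D C X := .of_algebraMap_smul fun _ _ => rfl
  have : IsScalarTower D C Y := .of_algebraMap_smul fun d y => by
    rw [← algebraMap_smul D, RingHom.algebraMap_toAlgebra]
    exact congrArg (· • y) (hs d)
  have : IsScalarTower A D X := .of_algebraMap_smul fun a x => by
    rw [← algebraMap_smul C, ← IsScalarTower.algebraMap_apply, algebraMap_smul]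
  have hpi : IsBaseChange D (p.restrictScalars A ∘ₗ i) := hi.comp hp
  -- Sending `p (i n)` to `i n` splits `p`, linearly over `D` acting on `X` through `s`.
  let σ : Y →ₗ[D] X := hpi.lift i
  have hσ : IsBaseChange C σ := hpi.of_comp (by rw [hpi.lift_comp]; exact hi)
  have hpσ : p.restrictScalars D ∘ₗ σ = LinearMap.id :=
    hpi.algHom_ext _ _ fun n => congrArg p (hpi.lift_eq i n)
  exact ⟨σ.restrictScalars A ∘ₗ j, hj.comp hσ, fun n => LinearMap.congr_fun hpσ (j n)⟩

end IsBaseChange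

theorem exists_comp_eq_of_range_le {R P M Q : Type*} [Ring R] [AddCommGroup P] [Module R P]
    [Module.Projective R P] [AddCommGroup M] [Module R M] [AddCommGroup Q] [Module R Q]
    {f : P →ₗ[R] Q} {g : M →ₗ[R] Q} (hfg : LinearMap.range f ≤ LinearMap.range g) :
    ∃ h : P →ₗ[R] M, g ∘ₗ h = f := by
  obtain ⟨h, hh⟩ := Module.projective_lifting_property g.rangeRestrict
    (f.codRestrict _ fun x => hfg (LinearMap.mem_range_self f x)) g.surjective_rangeRestrict
  exact ⟨h, LinearMap.ext fun x => congrArg Subtype.val (LinearMap.congr_fun hh x)⟩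

/-- Every finitely generated projective `B`-module is extended from a finitely generated projective
`A`-module. An isomorphism `B ⊗[A] N ≃ M` is encoded by the `A`-linear map `N → M` it restricts to,
so that composites of base changes need no tensor-product associators. -/
def ProjectiveModulesExtended (A : Type v) (B : Type u) [CommRing A] [CommRing B] [Algebra A B] :
    Prop :=
  ∀ (M : Type u) [AddCommGroup M] [Module B M] [Module A M] [IsScalarTower A B M],
    Module.Finite B M → Module.Projective B M →
      ∃ (N : Type u) (_ : AddCommGroup N) (_ : Module A N) (i : N →ₗ[A] M),
        Module.Finite A N ∧ Module.Projective A N ∧ IsBaseChange B i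

theorem projectiveModulesExtended_iff {A : Type v} {B : Type u} [CommRing A] [CommRing B]
    [Algebra A B] : ProjectiveModulesExtended A B ↔
      ∀ (M : Type u) [AddCommGroup M] [Module B M], Module.Finite B M → Module.Projective B M →
        ∃ (N : Type u) (_ : AddCommGroup N) (_ : Module A N),
          Module.Finite A N ∧ Module.Projective A N ∧ Nonempty (M ≃ₗ[B] B ⊗[A] N) := by
  refine ⟨fun h M _ _ hM_finite hM_projective => ?_,
    fun h M _ _ _ _ hM_finite hM_projective => ?_⟩
  · let _ : Module A M := Module.compHom M (algebraMap A B)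
    have : IsScalarTower A B M := .of_algebraMap_smul fun _ _ => rfl
    obtain ⟨N, _, _, i, hN_finite, hN_projective, hi⟩ := h M hM_finite hM_projective
    exact ⟨N, _, _, hN_finite, hN_projective, ⟨hi.equiv.symm⟩⟩
  · obtain ⟨N, _, _, hN_finite, hN_projective, ⟨e⟩⟩ := h M hM_finite hM_projective
    exact ⟨N, _, _, e.symm.toLinearMap.restrictScalars A ∘ₗ TensorProduct.mk A B N 1,
      hN_finite, hN_projective, .of_equiv e.symm fun _ => rfl⟩

namespace ProjectiveModulesExtended

variable {A : Type v} {B B₁ B₂ C : Type u} {B₀ : Type w} [CommRing A] [CommRing B] [CommRing B₁]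
  [CommRing B₂] [CommRing B₀] [CommRing C] [Algebra A B] [Algebra A B₁] [Algebra A B₂]
  [Algebra A B₀] [Algebra A C]

theorem of_subsingleton [Subsingleton B] : ProjectiveModulesExtended A B := by
  intro M _ _ _ _ _ _
  have : Subsingleton M := Module.subsingleton B M
  exact ⟨PUnit, inferInstance, inferInstance, 0, inferInstance, inferInstance,
    .of_equiv 0 fun _ => rfl⟩

theorem of_retract (h : ProjectiveModulesExtended A B) (i : C →ₐ[A] B) (r : B →ₐ[A] C)
    (hri : r.comp i = AlgHom.id A C) : ProjectiveModulesExtended A C := by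
  intro M _ _ _ _ _ _
  let _ : Algebra C B := i.toAlgebra
  let _ : Algebra B C := r.toAlgebra
  have : IsScalarTower A C B := .of_algHom i
  have : IsScalarTower A B C := .of_algHom r
  have : IsScalarTower C B C := .of_algebraMap_eq fun c => (AlgHom.congr_fun hri c).symm
  let _ : Module B M := Module.compHom M r.toRingHom
  have : IsScalarTower B C M := .of_algebraMap_smul fun _ _ => rfl
  have : IsScalarTower C B M := .of_algebraMap_smul fun c m =>
    congrArg (· • m) (AlgHom.congr_fun hri c)
  have : IsScalarTower A B M := .of_algebraMap_smul fun a m => by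
    rw [← algebraMap_smul C, ← IsScalarTower.algebraMap_apply, algebraMap_smul]
  have hB : IsBaseChange B (TensorProduct.mk C B M 1) := TensorProduct.isBaseChange C M B
  have hp : IsBaseChange C (hB.lift LinearMap.id) :=
    hB.of_comp (by rw [hB.lift_comp]; exact .ofEquiv (.refl C M))
  obtain ⟨N, _, _, j, hN_finite, hN_projective, hj⟩ := h (B ⊗[C] M) inferInstance inferInstance
  exact ⟨N, _, _, _, hN_finite, hN_projective, hj.comp hp⟩

theorem of_le_jacobson [Algebra B C] [IsScalarTower A B C]
    (hC : ProjectiveModulesExtended A C) (hBC : Function.Surjective (algebraMap B C))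
    (hker : RingHom.ker (algebraMap B C) ≤ (⊥ : Ideal B).jacobson) :
    ProjectiveModulesExtended A B := by
  intro M _ _ _ _ _ _
  obtain ⟨N, _, _, j, hN_finite, hN_projective, hj⟩ := hC (C ⊗[B] M) inferInstance inferInstance
  obtain ⟨i, hi⟩ := Module.projective_lifting_property
    ((TensorProduct.mk B C M 1).restrictScalars A) j (TensorProduct.mk_surjective B M C hBC)
  exact ⟨N, _, _, i, hN_finite, hN_projective,
    isBaseChange_of_le_jacobson hBC hker (hi.symm ▸ hj)⟩

theorem of_milnorSquare [Algebra B B₁] [Algebra B B₂] [Algebra B B₀] [Algebra B₁ B₀]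
    [Algebra B₂ B₀] [IsScalarTower A B B₁] [IsScalarTower A B B₂] [IsScalarTower A B B₀]
    [IsScalarTower A B₁ B₀] [IsScalarTower A B₂ B₀] [IsScalarTower B B₁ B₀] [IsScalarTower B B₂ B₀]
    (hB₁ : ProjectiveModulesExtended A B₁) (hB₂ : ProjectiveModulesExtended A B₂)
    (h₁ : Function.Surjective (algebraMap B B₁)) (h₂ : Function.Surjective (algebraMap B B₂))
    (hinf : RingHom.ker (algebraMap B B₁) ⊓ RingHom.ker (algebraMap B B₂) = ⊥)
    (hsup : RingHom.ker (algebraMap B B₀) ≤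
      RingHom.ker (algebraMap B B₁) ⊔ RingHom.ker (algebraMap B B₂))
    (s : B₀ →ₐ[A] B₁) (hs : ∀ b, algebraMap B₁ B₀ (s b) = b) :
    ProjectiveModulesExtended A B := by
  intro M _ _ _ _ _ _
  have h₀ : Function.Surjective (algebraMap B B₀) := by
    rw [IsScalarTower.algebraMap_eq B B₁ B₀]
    exact (Function.RightInverse.surjective hs).comp h₁
  obtain ⟨_, _, _, i₁, -, -, hi₁⟩ := hB₁ (B₁ ⊗[B] M) inferInstance inferInstance
  obtain ⟨N, _, _, i₂, hN_finite, hN_projective, hi₂⟩ :=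
    hB₂ (B₂ ⊗[B] M) inferInstance inferInstance
  obtain ⟨p₁, hp₁, hp₁_tmul⟩ := exists_isBaseChange_apply_one_tmul B B₁ B₀ M
  obtain ⟨p₂, hp₂, hp₂_tmul⟩ := exists_isBaseChange_apply_one_tmul B B₂ B₀ M
  obtain ⟨j, hj, hpj⟩ := exists_isBaseChange_lift_of_section s hs hp₁ hi₁ (hi₂.comp hp₂)
  let q₁ := (TensorProduct.mk B B₁ M 1).restrictScalars A
  let q₂ := (TensorProduct.mk B B₂ M 1).restrictScalars A
  have hrange : LinearMap.range (j.prod i₂) ≤ LinearMap.range (q₁.prod q₂) := by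
    rintro _ ⟨n, rfl⟩
    obtain ⟨x₁, hx₁⟩ := TensorProduct.mk_surjective B M B₁ h₁ (j n)
    obtain ⟨x₂, hx₂⟩ := TensorProduct.mk_surjective B M B₂ h₂ (i₂ n)
    have hx : (1 : B₀) ⊗ₜ[B] x₁ = 1 ⊗ₜ x₂ := by
      rw [← hp₁_tmul, ← hp₂_tmul]
      exact (congrArg p₁ hx₁).trans ((hpj n).trans (congrArg p₂ hx₂.symm))
    obtain ⟨m, hm₁, hm₂⟩ := exists_one_tmul_eq_and_one_tmul_eq h₁ h₂ h₀ hsup hx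
    exact ⟨m, Prod.ext (hm₁.trans hx₁) (hm₂.trans hx₂)⟩
  obtain ⟨i, hi⟩ := exists_comp_eq_of_range_le hrange
  have hiq₁ : q₁ ∘ₗ i = j := LinearMap.ext fun n => congrArg Prod.fst (LinearMap.congr_fun hi n)
  have hiq₂ : q₂ ∘ₗ i = i₂ := LinearMap.ext fun n => congrArg Prod.snd (LinearMap.congr_fun hi n)
  exact ⟨N, _, _, i, hN_finite, hN_projective,
    isBaseChange_of_ker_inf_ker_eq_bot h₁ h₂ hinf (hiq₁.symm ▸ hj) (hiq₂.symm ▸ hi₂)⟩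

section Quotient

variable {R : Type u} [CommRing R] [Algebra A R] {I K P : Ideal R}

theorem quotient_of_le_radical (hIK : I ≤ K) (hK : K ≤ I.radical)
    (h : ProjectiveModulesExtended A (R ⧸ K)) : ProjectiveModulesExtended A (R ⧸ I) := by
  let _ : Algebra (R ⧸ I) (R ⧸ K) := (Ideal.Quotient.factor hIK).toAlgebra
  have : IsScalarTower A (R ⧸ I) (R ⧸ K) := .of_algebraMap_eq fun _ => rfl
  refine h.of_le_jacobson (Ideal.Quotient.factor_surjective hIK) ?_
  calc RingHom.ker (Ideal.Quotient.factor hIK) = K.map (Ideal.Quotient.mk I) :=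
        Ideal.Quotient.factor_ker hIK
    _ ≤ (⊥ : Ideal (R ⧸ I)).radical := by
        rw [Ideal.map_le_iff_le_comap, Ideal.comap_radical, ← RingHom.ker_eq_comap_bot,
          Ideal.mk_ker]
        exact hK
    _ ≤ (⊥ : Ideal (R ⧸ I)).jacobson := Ideal.radical_le_jacobson

theorem quotient_of_retraction (hR : ProjectiveModulesExtended A R) (σ : R →ₐ[A] R)
    (hσP : P ≤ RingHom.ker σ) (hσ : ∀ x, σ x - x ∈ P) : ProjectiveModulesExtended A (R ⧸ P) :=
  hR.of_retract (Ideal.Quotient.liftₐ P σ hσP) (Ideal.Quotient.mkₐ A P) <|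
    Ideal.Quotient.algHom_ext A <| AlgHom.ext fun x => Ideal.Quotient.eq.mpr (hσ x)

theorem quotient_inf (hK : ProjectiveModulesExtended A (R ⧸ K))
    (hP : ProjectiveModulesExtended A (R ⧸ P)) (σ : R →ₐ[A] R) (hσK : K ≤ K.comap σ)
    (hσP : P ≤ RingHom.ker σ) (hσ : ∀ x, σ x - x ∈ P) :
    ProjectiveModulesExtended A (R ⧸ K ⊓ P) := by
  have hKP : K ⊔ P ≤ RingHom.ker ((Ideal.Quotient.mkₐ A K).comp σ) :=
    sup_le (fun x hx => Ideal.Quotient.eq_zero_iff_mem.mpr (hσK hx))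
      (fun x hx => congrArg (Ideal.Quotient.mk K) (hσP hx))
  let s : R ⧸ K ⊔ P →ₐ[A] R ⧸ K :=
    Ideal.Quotient.liftₐ (K ⊔ P) ((Ideal.Quotient.mkₐ A K).comp σ) hKP
  let _ : Algebra (R ⧸ K ⊓ P) (R ⧸ K) := (Ideal.Quotient.factor inf_le_left).toAlgebra
  let _ : Algebra (R ⧸ K ⊓ P) (R ⧸ P) := (Ideal.Quotient.factor inf_le_right).toAlgebra
  let _ : Algebra (R ⧸ K ⊓ P) (R ⧸ K ⊔ P) := (Ideal.Quotient.factor inf_le_sup).toAlgebra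
  let _ : Algebra (R ⧸ K) (R ⧸ K ⊔ P) := (Ideal.Quotient.factor le_sup_left).toAlgebra
  let _ : Algebra (R ⧸ P) (R ⧸ K ⊔ P) := (Ideal.Quotient.factor le_sup_right).toAlgebra
  have : IsScalarTower A (R ⧸ K ⊓ P) (R ⧸ K) := .of_algebraMap_eq fun _ => rfl
  have : IsScalarTower A (R ⧸ K ⊓ P) (R ⧸ P) := .of_algebraMap_eq fun _ => rfl
  have : IsScalarTower A (R ⧸ K ⊓ P) (R ⧸ K ⊔ P) := .of_algebraMap_eq fun _ => rfl
  have : IsScalarTower A (R ⧸ K) (R ⧸ K ⊔ P) := .of_algebraMap_eq fun _ => rfl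
  have : IsScalarTower A (R ⧸ P) (R ⧸ K ⊔ P) := .of_algebraMap_eq fun _ => rfl
  have : IsScalarTower (R ⧸ K ⊓ P) (R ⧸ K) (R ⧸ K ⊔ P) :=
    .of_algebraMap_eq' (Ideal.Quotient.ringHom_ext rfl)
  have : IsScalarTower (R ⧸ K ⊓ P) (R ⧸ P) (R ⧸ K ⊔ P) :=
    .of_algebraMap_eq' (Ideal.Quotient.ringHom_ext rfl)
  refine of_milnorSquare (B₀ := R ⧸ K ⊔ P) hK hP (Ideal.Quotient.factor_surjective _)
    (Ideal.Quotient.factor_surjective _) ?_ ?_ s ?_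
  · refine (Submodule.eq_bot_iff _).mpr fun x ⟨hxK, hxP⟩ => ?_
    obtain ⟨x, rfl⟩ := Ideal.Quotient.mk_surjective x
    exact Ideal.Quotient.eq_zero_iff_mem.mpr
      ⟨Ideal.Quotient.eq_zero_iff_mem.mp hxK, Ideal.Quotient.eq_zero_iff_mem.mp hxP⟩
  · simp only [RingHom.algebraMap_toAlgebra, Ideal.Quotient.factor_ker, Ideal.map_sup, le_refl]
  · intro x
    obtain ⟨x, rfl⟩ := Ideal.Quotient.mk_surjective x
    exact Ideal.Quotient.eq.mpr (Ideal.mem_sup_right (hσ x))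

end Quotient

end ProjectiveModulesExtended

section VariableIdeal

open MvPolynomial

variable {σ A : Type*} [CommRing A]

/-- The ideal of `A[x]` generated by the variables in `T`. -/
noncomputable def variableIdeal (A : Type*) [CommRing A] (T : Set σ) : Ideal (MvPolynomial σ A) :=
  Ideal.span (X '' T)

open Classical in
/-- The substitution setting the variables in `T` to zero, an `A`-algebra retraction of `A[x]` onto
the polynomials in the other variables. -/
noncomputable def killVars (A : Type*) [CommRing A] (T : Set σ) :
    MvPolynomial σ A →ₐ[A] MvPolynomial σ A :=
  aeval fun i => if i ∈ T then 0 else X i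

theorem killVars_X_of_mem {T : Set σ} {i : σ} (hi : i ∈ T) : killVars A T (X i) = 0 := by
  rw [killVars, aeval_X, if_pos hi]

theorem killVars_X_of_notMem {T : Set σ} {i : σ} (hi : i ∉ T) : killVars A T (X i) = X i := by
  rw [killVars, aeval_X, if_neg hi]

theorem variableIdeal_le_ker_killVars (T : Set σ) :
    variableIdeal A T ≤ RingHom.ker (killVars A T) := by
  rw [variableIdeal, Ideal.span_le]
  rintro _ ⟨i, hi, rfl⟩
  exact killVars_X_of_mem hi

theorem killVars_sub_mem_variableIdeal (T : Set σ) (p : MvPolynomial σ A) :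
    killVars A T p - p ∈ variableIdeal A T := by
  suffices h : (Ideal.Quotient.mkₐ A (variableIdeal A T)).comp (killVars A T) =
      Ideal.Quotient.mkₐ A (variableIdeal A T) from
    Ideal.Quotient.eq.mp (AlgHom.congr_fun h p)
  refine algHom_ext fun i => Ideal.Quotient.eq.mpr ?_
  change killVars A T (X i) - X i ∈ variableIdeal A T
  by_cases hi : i ∈ T
  · rw [killVars_X_of_mem hi, zero_sub, neg_mem_iff]
    exact Ideal.subset_span ⟨i, hi, rfl⟩
  · rw [killVars_X_of_notMem hi, sub_self]
    exact zero_mem _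

theorem variableIdeal_le_comap_killVars (T U : Set σ) :
    variableIdeal A U ≤ (variableIdeal A U).comap (killVars A T) := by
  rw [variableIdeal, Ideal.span_le]
  rintro _ ⟨i, hi, rfl⟩
  rw [SetLike.mem_coe, Ideal.mem_comap]
  by_cases hiT : i ∈ T
  · rw [killVars_X_of_mem hiT]
    exact zero_mem _
  · rw [killVars_X_of_notMem hiT]
    exact Ideal.subset_span ⟨i, hi, rfl⟩

/-- The ideal of `A[x]` generated by the monomials whose exponent vectors lie in `S`. -/
noncomputable def monomialIdeal (A : Type*) [CommRing A] (S : Set (σ →₀ ℕ)) :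
    Ideal (MvPolynomial σ A) :=
  Ideal.span ((fun d => monomial d 1) '' S)

theorem monomialIdeal_le_variableIdeal {S : Set (σ →₀ ℕ)} {T : Set σ}
    (h : ∀ s ∈ S, ∃ i ∈ T, s i ≠ 0) : monomialIdeal A S ≤ variableIdeal A T := by
  rw [monomialIdeal, Ideal.span_le]
  rintro _ ⟨s, hs, rfl⟩
  refine mem_ideal_span_X_image.mpr fun d hd => ?_
  rw [Finset.mem_singleton.mp (support_monomial_subset hd)]
  exact h s hs

theorem monomial_mem_radical_monomialIdeal {S : Set (σ →₀ ℕ)} {s d : σ →₀ ℕ} (hs : s ∈ S)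
    (hsd : s.support ⊆ d.support) (a : A) : monomial d a ∈ (monomialIdeal A S).radical := by
  have hle : s ≤ s.degree • d := fun i => by
    by_cases hi : s i = 0
    · exact hi ▸ Nat.zero_le _
    · have hdi : d i ≠ 0 := Finsupp.mem_support_iff.mp (hsd (Finsupp.mem_support_iff.mpr hi))
      exact (Finsupp.le_degree i s).trans (Nat.le_mul_of_pos_right _ (Nat.pos_of_ne_zero hdi))
  refine ⟨s.degree, ?_⟩
  rw [monomial_pow]
  refine mem_ideal_span_monomial_image.mpr fun e he => ⟨s, hs, ?_⟩
  rwa [Finset.mem_singleton.mp (support_monomial_subset he)]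

theorem iInf_variableIdeal_le_radical (S : Set (σ →₀ ℕ)) :
    ⨅ T ∈ {T : Set σ | monomialIdeal A S ≤ variableIdeal A T}, variableIdeal A T ≤
      (monomialIdeal A S).radical := by
  intro p hp
  rw [← support_sum_monomial_coeff p]
  refine Ideal.sum_mem _ fun d hd => ?_
  have hS : ¬ monomialIdeal A S ≤ variableIdeal A {i | d i = 0} := fun hle => by
    have hp_mem : p ∈ variableIdeal A {i | d i = 0} :=
      iInf₂_le (f := fun T _ => variableIdeal A T) _ hle hp
    obtain ⟨i, hi, hdi⟩ := mem_ideal_span_X_image.mp hp_mem d hd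
    exact hdi hi
  obtain ⟨s, hs, hsd⟩ : ∃ s ∈ S, ∀ i, d i = 0 → s i = 0 := by
    by_contra! hS_ne
    exact hS (monomialIdeal_le_variableIdeal hS_ne)
  refine monomial_mem_radical_monomialIdeal hs (fun i hi => ?_) _
  exact Finsupp.mem_support_iff.mpr (mt (hsd i) (Finsupp.mem_support_iff.mp hi))

end VariableIdeal

namespace ProjectiveModulesExtended

theorem quotient_iInf_variableIdeal {A : Type v} {σ : Type w} [CommRing A]
    (h : ProjectiveModulesExtended A (MvPolynomial σ A)) {𝒯 : Set (Set σ)} (h𝒯 : 𝒯.Finite) :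
    ProjectiveModulesExtended A (MvPolynomial σ A ⧸ ⨅ T ∈ 𝒯, variableIdeal A T) := by
  induction 𝒯, h𝒯 using Set.Finite.induction_on with
  | empty =>
    have : Subsingleton (MvPolynomial σ A ⧸ ⨅ T ∈ (∅ : Set (Set σ)), variableIdeal A T) :=
      Ideal.Quotient.subsingleton_iff.mpr iInf_emptyset
    exact of_subsingleton
  | @insert T 𝒯 _ _ ih =>
    have hP := h.quotient_of_retraction (killVars A T) (variableIdeal_le_ker_killVars T)
      (killVars_sub_mem_variableIdeal T)
    rw [iInf_insert, inf_comm]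
    refine ih.quotient_inf hP (killVars A T) ?_ (variableIdeal_le_ker_killVars T)
      (killVars_sub_mem_variableIdeal T)
    simp only [Ideal.comap_iInf]
    exact iInf₂_mono fun U _ => variableIdeal_le_comap_killVars T U

end ProjectiveModulesExtended

theorem vorst_monomial_extension_general {A : Type v} {σ : Type w} [CommRing A] [Finite σ]
    (h : ProjectiveModulesExtended A (MvPolynomial σ A)) (S : Set (σ →₀ ℕ)) :
    ProjectiveModulesExtended A (MvPolynomial σ A ⧸ monomialIdeal A S) := by
  let 𝒯 : Set (Set σ) := {T | monomialIdeal A S ≤ variableIdeal A T}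
  have hle : monomialIdeal A S ≤ ⨅ T ∈ 𝒯, variableIdeal A T := le_iInf₂ fun _ hT => hT
  have hrad : ⨅ T ∈ 𝒯, variableIdeal A T ≤ (monomialIdeal A S).radical :=
    iInf_variableIdeal_le_radical S
  have h𝒯 : ProjectiveModulesExtended A (MvPolynomial σ A ⧸ ⨅ T ∈ 𝒯, variableIdeal A T) :=
    h.quotient_iInf_variableIdeal 𝒯.toFinite
  exact h𝒯.quotient_of_le_radical hle hrad

/-- Vorst's theorem: let `A` be a ring such that for all `n` every finitely generated
projective module over `A[T₁,…,T_n]` is extended from `A`. If `I ⊆ A[x₁,…,x_m]` is a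
monomial ideal and `B = A[x]/I`, then every finitely generated projective `B`-module is
extended from a finitely generated projective `A`-module. -/
theorem vorst_monomial_extension (A : Type u) [CommRing A]
    (hA : ∀ (n : ℕ) (P : Type u) (_ : AddCommGroup P)
      (_ : Module (MvPolynomial (Fin n) A) P),
      Module.Finite (MvPolynomial (Fin n) A) P →
      Module.Projective (MvPolynomial (Fin n) A) P →
      ∃ (N : Type u) (_ : AddCommGroup N) (_ : Module A N),
        Module.Finite A N ∧ Module.Projective A N ∧
        Nonempty (P ≃ₗ[MvPolynomial (Fin n) A] (MvPolynomial (Fin n) A ⊗[A] N)))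
    (m : ℕ) (S : Set (Fin m →₀ ℕ)) (I : Ideal (MvPolynomial (Fin m) A))
    (hI : I = Ideal.span ((fun d => MvPolynomial.monomial d (1 : A)) '' S))
    (M : Type u) [AddCommGroup M] [Module (MvPolynomial (Fin m) A ⧸ I) M]
    (hMfin : Module.Finite (MvPolynomial (Fin m) A ⧸ I) M)
    (hMproj : Module.Projective (MvPolynomial (Fin m) A ⧸ I) M) :
    ∃ (N : Type u) (_ : AddCommGroup N) (_ : Module A N),
      Module.Finite A N ∧ Module.Projective A N ∧
      Nonempty (M ≃ₗ[MvPolynomial (Fin m) A ⧸ I] ((MvPolynomial (Fin m) A ⧸ I) ⊗[A] N)) := by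
  obtain rfl : I = monomialIdeal A S := hI
  have hm : ProjectiveModulesExtended A (MvPolynomial (Fin m) A) :=
    projectiveModulesExtended_iff.mpr fun P _ _ => hA m P _ _
  exact projectiveModulesExtended_iff.mp (vorst_monomial_extension_general hm S) M
    hMfin hMproj
end
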